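/- arXiv:2505.20960 — 8 statements merged into one kernel-verified Lean document; each statement's English description precedes it below -/
import Mathlib

section
/- Let k and n be positive integers with n < k, let F_k be the free group on generators x_1, …, x_k, and let w = x_1² x_2² ⋯ x_n² ∈ F_k be the non-orientable partial surface word. Suppose w' ∈ F_k induces the same word measure as w on every finite group, i.e. for every finite group G and every g ∈ G the number of tuples (h_1,…,h_k) ∈ G^k with w(h_1,…,h_k) = g equals the number of tuples with w'(h_1,…,h_k) = g. Then there exists an automorphism f of F_k with f(w) = w'. -/
/-!
Let `Q` act on a finite module `V` over `𝔽₂`. Evaluating `w` in `V ⋊ Q` and averaging a character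
`χ` of `V` over the `V`-coordinates counts the tuples `σ` in `Q` for which `χ` is orthogonal to the
Fox derivatives of `w` at `σ`, so these counts, and the analogous ones for several characters at
once, are determined by the word measure of `w`. When `w` is a product of squares of distinct
generators, orthogonality means invariance under those generators. On a permutation module,
whose characters are functions, the orthogonal functions therefore form a ring, and by counting the
same holds for every word `w'` with the same measure as `w`.

Let `l` be a representative of minimal length of the automorphism orbit of `w'`. By Whitehead's
argument no cut of its Whitehead graph separating a letter from its inverse is smaller than the
star of that letter, and duality over `𝔽₂` shows that the cycles of the graph restrict on each star
to all patterns of even weight. In particular there are permutations `σ` of the finite set of cycles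
that carry the pattern at the tail of each generator to the pattern at its head. For this `σ` the
coordinates of a cycle are orthogonal functions, and since products of coordinates are orthogonal
too, any two even patterns on the occurrences of a generator are orthogonal to each other. Hence
each generator occurs either twice or not at all.

The classification of quadratic words now leaves a product of squares of distinct generators or a
word in which every generator occurs once with each sign. The latter is trivial in every abelian
group, unlike `w`, and in the former case the number of squares is found by counting orthogonal
tuples once more.
-/

open FreeGroup (of mk)

/-- Two words have the same word measure if they induce the same counting function on every
finite group. -/
def SameWordMeasure {α : Type*} (w w' : FreeGroup α) : Prop :=
  ∀ (G : Type) [Group G] [Finite G] (g : G),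
    Nat.card {h : α → G // FreeGroup.lift h w = g} =
      Nat.card {h : α → G // FreeGroup.lift h w' = g}

namespace SameWordMeasure

variable {α : Type*} {w w' : FreeGroup α}

theorem map_right (hm : SameWordMeasure w w') (f : FreeGroup α ≃* FreeGroup α) :
    SameWordMeasure w (f w') := by
  intro G _ _ g
  let pullback : (α → G) ≃ (α → G) :=
    FreeGroup.lift.trans ((f.monoidHomCongrLeftEquiv).symm.trans FreeGroup.lift.symm)
  have lift_pullback (h : α → G) : FreeGroup.lift (pullback h) = (FreeGroup.lift h).comp f := by
    ext; simp [pullback]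
  rw [hm G g]
  exact (Nat.card_congr (pullback.subtypeEquiv fun h => by simp [lift_pullback])).symm

theorem sum_eq [Fintype α] [DecidableEq α] (hm : SameWordMeasure w w') {G : Type} [Group G]
    [Fintype G] {M : Type*} [AddCommMonoid M] (Ψ : G → M) :
    ∑ h : α → G, Ψ (FreeGroup.lift h w) = ∑ h : α → G, Ψ (FreeGroup.lift h w') := by
  have sum_eq_sum_card (v : FreeGroup α) : ∑ h : α → G, Ψ (FreeGroup.lift h v) =
      ∑ g : G, Nat.card {h : α → G // FreeGroup.lift h v = g} • Ψ g := by
    classical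
    rw [← Fintype.sum_fiberwise fun h => FreeGroup.lift h v]
    refine Finset.sum_congr rfl fun g _ => ?_
    rw [Finset.sum_congr rfl fun h _ => congrArg Ψ h.2, Finset.sum_const, Finset.card_univ,
      Nat.card_eq_fintype_card]
  rw [sum_eq_sum_card, sum_eq_sum_card]
  exact Finset.sum_congr rfl fun g _ => by rw [hm G g]

theorem exists_lift_eq [Finite α] (hm : SameWordMeasure w w') {G : Type} [Group G] [Finite G]
    (h : α → G) : ∃ h' : α → G, FreeGroup.lift h' w' = FreeGroup.lift h w := by
  have : Nonempty {h' : α → G // FreeGroup.lift h' w' = FreeGroup.lift h w} := by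
    rw [← Finite.card_pos_iff, ← hm G]
    exact Finite.card_pos_iff.mpr ⟨h, rfl⟩
  exact this.elim fun h' => ⟨h'.1, h'.2⟩

end SameWordMeasure

section FoxDerivative

variable {α : Type*} {Q V : Type} [Group Q] [AddCommGroup V] [DistribMulAction Q V]

/-- The action of `Q` on a module `V`, written multiplicatively so as to form `V ⋊ Q`. -/
def multiplicativeAction (Q V : Type) [Group Q] [AddCommGroup V] [DistribMulAction Q V] :
    Q →* MulAut (Multiplicative V) :=
  (MulAutMultiplicative V).symm.toMonoidHom.comp (DistribMulAction.toAddAut Q V)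

/-- The tuple of elements of `V ⋊ Q` with coordinates `v` and `σ`. -/
def semidirectTuple (σ : α → Q) (v : α → V) :
    α → Multiplicative V ⋊[multiplicativeAction Q V] Q :=
  fun i => ⟨.ofAdd (v i), σ i⟩

/-- The total Fox derivative of `w` at `σ` in the direction `v`: the `V`-coordinate of the
value of `w` at the elements `(v i, σ i)` of `V ⋊ Q`. -/
def foxD (σ : α → Q) (w : FreeGroup α) (v : α → V) : V :=
  (FreeGroup.lift (semidirectTuple σ v) w).left.toAdd

theorem right_lift_semidirectTuple (σ : α → Q) (v : α → V) (w : FreeGroup α) :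
    (FreeGroup.lift (semidirectTuple σ v) w).right = FreeGroup.lift σ w := by
  have : SemidirectProduct.rightHom.comp (FreeGroup.lift (semidirectTuple σ v)) =
      FreeGroup.lift σ := by
    ext; simp [semidirectTuple]
  exact DFunLike.congr_fun this w

@[simp] theorem foxD_one (σ : α → Q) (v : α → V) : foxD σ 1 v = 0 := by
  simp [foxD]

@[simp] theorem foxD_of (σ : α → Q) (i : α) (v : α → V) : foxD σ (of i) v = v i := by
  simp [foxD, semidirectTuple]

@[simp] theorem foxD_mul (σ : α → Q) (w₁ w₂ : FreeGroup α) (v : α → V) :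
    foxD σ (w₁ * w₂) v = foxD σ w₁ v + FreeGroup.lift σ w₁ • foxD σ w₂ v := by
  rw [← right_lift_semidirectTuple σ v w₁]
  simp only [foxD, map_mul, SemidirectProduct.mul_left, toAdd_mul]
  rfl

@[simp] theorem foxD_inv (σ : α → Q) (w : FreeGroup α) (v : α → V) :
    foxD σ w⁻¹ v = -((FreeGroup.lift σ w)⁻¹ • foxD σ w v) := by
  have h := foxD_mul σ w⁻¹ w v
  rw [inv_mul_cancel, foxD_one, map_inv] at h
  exact eq_neg_of_add_eq_zero_left h.symm

theorem map_foxD {W : Type} [AddCommGroup W] [DistribMulAction Q W] (f : V →+ W)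
    (hf : ∀ (q : Q) x, f (q • x) = q • f x) (σ : α → Q) (w : FreeGroup α) (v : α → V) :
    f (foxD σ w v) = foxD σ w (f ∘ v) := by
  induction w using FreeGroup.induction_on with
  | C1 => simp
  | of i => simp
  | inv_of i _ => simp [hf]
  | mul w₁ w₂ h₁ h₂ => simp [hf, h₁, h₂]

theorem foxD_add (σ : α → Q) (w : FreeGroup α) (v v' : α → V) :
    foxD σ w (v + v') = foxD σ w v + foxD σ w v' := by
  induction w using FreeGroup.induction_on with
  | C1 => simp
  | of i => simp
  | inv_of i _ => simp [add_comm]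
  | mul w₁ w₂ h₁ h₂ => simp [h₁, h₂, add_add_add_comm]

/-- `χ` is orthogonal to all Fox derivatives of `w` at `σ`. -/
def FoxOrtho (σ : α → Q) (w : FreeGroup α) (χ : V →+ ZMod 2) : Prop :=
  ∀ v : α → V, χ (foxD σ w v) = 0

/-- Pairs a family of vectors with a family of functionals. -/
def sumFunctional {ι : Type} [Fintype ι] (χ : ι → V →+ ZMod 2) : (ι → V) →+ ZMod 2 :=
  ∑ i, (χ i).comp (Pi.evalAddMonoidHom (fun _ : ι => V) i)

theorem foxOrtho_sumFunctional_iff {ι : Type} [Fintype ι] (σ : α → Q) (w : FreeGroup α)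
    (χ : ι → V →+ ZMod 2) : FoxOrtho σ w (sumFunctional χ) ↔ ∀ i, FoxOrtho σ w (χ i) := by
  classical
  have foxD_apply (v : α → ι → V) (i : ι) : foxD σ w v i = foxD σ w fun a => v a i :=
    map_foxD (Pi.evalAddMonoidHom (fun _ : ι => V) i) (fun _ _ => rfl) σ w v
  have foxD_single (v : α → V) (i : ι) :
      foxD σ w (fun a => Pi.single (M := fun _ : ι => V) i (v a)) = Pi.single i (foxD σ w v) :=
    (map_foxD (AddMonoidHom.single (fun _ : ι => V) i)
      (fun q x => by ext j; obtain rfl | h := eq_or_ne j i <;> simp [*]) σ w v).symm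
  constructor
  · intro h i v
    have := h fun a => Pi.single i (v a)
    rw [foxD_single, sumFunctional, AddMonoidHom.finsetSum_apply, Finset.sum_eq_single i] at this
    · simpa using this
    · intro j _ hj
      simp [hj]
    · simp
  · intro h v
    rw [sumFunctional, AddMonoidHom.finsetSum_apply]
    exact Finset.sum_eq_zero fun i _ => by simpa [foxD_apply] using h i _

/-- The nontrivial additive character of `ZMod 2`. -/
def signChar : AddChar (ZMod 2) ℤ := AddChar.zmodChar 2 (ζ := -1) (by norm_num)

theorem signChar_eq_one_iff (a : ZMod 2) : signChar a = 1 ↔ a = 0 := by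
  revert a; decide

open Classical in
theorem sum_signChar_foxD [Fintype α] [Fintype V] (σ : α → Q) (w : FreeGroup α)
    (χ : V →+ ZMod 2) :
    ∑ v : α → V, signChar (χ (foxD σ w v)) =
      if FoxOrtho σ w χ then (Fintype.card (α → V) : ℤ) else 0 := by
  let ψ : AddChar (α → V) ℤ := signChar.compAddMonoidHom
    (χ.comp (AddMonoidHom.mk' (foxD σ w) (foxD_add σ w)))
  have ψ_eq_zero_iff : ψ = 0 ↔ FoxOrtho σ w χ := by
    simp [ψ, AddChar.ext_iff, FoxOrtho, signChar_eq_one_iff]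
  exact (AddChar.sum_eq_ite ψ).trans (by simp only [ψ_eq_zero_iff])

theorem SameWordMeasure.card_foxOrtho_eq [Finite α] [Finite Q] [Finite V] {w w' : FreeGroup α}
    (hm : SameWordMeasure w w') (χ : V →+ ZMod 2) :
    Nat.card {σ : α → Q // FoxOrtho σ w χ} = Nat.card {σ : α → Q // FoxOrtho σ w' χ} := by
  classical
  have := Fintype.ofFinite α
  have := Fintype.ofFinite V
  have := Fintype.ofFinite Q
  let G := Multiplicative V ⋊[multiplicativeAction Q V] Q
  let coordinates : (α → V) × (α → Q) ≃ (α → G) :=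
    { toFun p := semidirectTuple p.2 p.1
      invFun h := (fun i => (h i).left.toAdd, fun i => (h i).right)
      left_inv _ := rfl
      right_inv _ := rfl }
  have : Fintype G := Fintype.ofEquiv _ SemidirectProduct.equivProd.symm
  have sum_eq_card_mul (u : FreeGroup α) :
      ∑ h : α → G, signChar (χ (FreeGroup.lift h u).left.toAdd) =
        Nat.card {σ : α → Q // FoxOrtho σ u χ} * Fintype.card (α → V) := by
    rw [← coordinates.sum_comp, Fintype.sum_prod_type_right]
    refine (Finset.sum_congr rfl fun σ _ => sum_signChar_foxD σ u χ).trans ?_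
    rw [← Finset.sum_filter, Finset.sum_const, Nat.card_eq_fintype_card, Fintype.card_subtype,
      nsmul_eq_mul]
  have h := hm.sum_eq fun g : G => signChar (χ g.left.toAdd)
  rw [sum_eq_card_mul, sum_eq_card_mul] at h
  exact_mod_cast mul_right_cancel₀ (Nat.cast_ne_zero.mpr Fintype.card_ne_zero) h

theorem SameWordMeasure.card_forall_foxOrtho_eq [Finite α] [Finite Q] [Finite V]
    {w w' : FreeGroup α} (hm : SameWordMeasure w w') {ι : Type} [Finite ι]
    (χ : ι → V →+ ZMod 2) :
    Nat.card {σ : α → Q // ∀ i, FoxOrtho σ w (χ i)} =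
      Nat.card {σ : α → Q // ∀ i, FoxOrtho σ w' (χ i)} := by
  have := Fintype.ofFinite ι
  simpa only [foxOrtho_sumFunctional_iff] using hm.card_foxOrtho_eq (Q := Q) (sumFunctional χ)

theorem SameWordMeasure.foxOrtho_of_imp [Finite α] [Finite Q] [Finite V]
    {w w' : FreeGroup α} (hm : SameWordMeasure w w') {ι : Type} [Finite ι]
    (χ : ι → V →+ ZMod 2) (χ' : V →+ ZMod 2)
    (himp : ∀ σ : α → Q, (∀ i, FoxOrtho σ w (χ i)) → FoxOrtho σ w χ')
    {σ : α → Q} (hσ : ∀ i, FoxOrtho σ w' (χ i)) : FoxOrtho σ w' χ' := by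
  let S (u : FreeGroup α) : Set (α → Q) := {σ | ∀ i, FoxOrtho σ u (χ i)}
  let T (u : FreeGroup α) : Set (α → Q) := {σ | ∀ o : Option ι, FoxOrtho σ u (o.elim χ' χ)}
  have card_S : (S w).ncard = (S w').ncard := hm.card_forall_foxOrtho_eq χ
  have card_T : (T w).ncard = (T w').ncard :=
    hm.card_forall_foxOrtho_eq fun o : Option ι => o.elim χ' χ
  have T_w : T w = S w := by
    ext σ
    simpa [S, T, Option.forall] using himp σ
  have T_w' : T w' = S w' :=
    Set.eq_of_subset_of_ncard_le (fun σ h i => h (some i)) (by rw [← card_T, T_w, card_S])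
  exact T_w'.ge hσ none

end FoxDerivative

section SquareProd

variable {α : Type*}

/-- The product of the squares of the generators in a list. -/
def squareProd (ps : List α) : FreeGroup α := (ps.map fun i => of i ^ 2).prod

@[simp] theorem squareProd_nil : squareProd ([] : List α) = 1 := rfl

@[simp] theorem squareProd_cons (i : α) (ps : List α) :
    squareProd (i :: ps) = of i ^ 2 * squareProd ps := by
  simp [squareProd]

variable {Q V : Type} [Group Q] [AddCommGroup V] [DistribMulAction Q V]

theorem foxD_squareProd_single_of_notMem [DecidableEq α] (σ : α → Q) {ps : List α} {i : α}
    (hi : i ∉ ps) (x : V) : foxD σ (squareProd ps) (Pi.single i x) = 0 := by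
  induction ps with
  | nil => simp
  | cons j ps ih =>
    rw [List.mem_cons, not_or] at hi
    simp [pow_two, ih hi.2, Pi.single_eq_of_ne (Ne.symm hi.1)]

theorem foxOrtho_squareProd_iff (σ : α → Q) {ps : List α} (hps : ps.Nodup) (χ : V →+ ZMod 2) :
    FoxOrtho σ (squareProd ps) χ ↔ ∀ i ∈ ps, ∀ x, χ (σ i • x) = χ x := by
  classical
  induction ps with
  | nil => simp [FoxOrtho]
  | cons i ps ih =>
    obtain ⟨hi, hps⟩ := List.nodup_cons.mp hps
    have invariant_head (h : FoxOrtho σ (squareProd (i :: ps)) χ) (x : V) :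
        χ (σ i • x) = χ x := by
      have := h (Pi.single i x)
      simp only [squareProd_cons, pow_two, foxD_mul, foxD_of, Pi.single_eq_same,
        foxD_squareProd_single_of_notMem σ hi, smul_zero, add_zero, map_add,
        FreeGroup.lift_apply_of] at this
      exact (CharTwo.add_eq_zero.mp this).symm
    have map_foxD_cons (h : ∀ x, χ (σ i • x) = χ x) (v : α → V) :
        χ (foxD σ (squareProd (i :: ps)) v) = χ (foxD σ (squareProd ps) v) := by
      simp [pow_two, h, mul_smul, CharTwo.add_self_eq_zero]
    rw [List.forall_mem_cons, ← ih hps]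
    refine ⟨fun h => ⟨invariant_head h, fun v => ?_⟩, fun ⟨h, hps⟩ v => ?_⟩
    · rw [← map_foxD_cons (invariant_head h)]
      exact h v
    · rw [map_foxD_cons h]
      exact hps v

end SquareProd

section PermutationModule

variable {Q X : Type} [Group Q] [MulAction Q X]

/-- The permutation module of a `Q`-set: `Q` acts by `(q • f) x = f (q⁻¹ • x)`. -/
abbrev arrowDistribMulAction (Q X : Type) [Group Q] [MulAction Q X] :
    DistribMulAction Q (X → ZMod 2) where
  toMulAction := arrowAction
  smul_zero _ := rfl
  smul_add _ _ _ := rfl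

attribute [local instance] arrowDistribMulAction

variable [Fintype X]

/-- The functional `u ↦ ∑ x, f x * u x`. -/
def dotFunctional (f : X → ZMod 2) : (X → ZMod 2) →+ ZMod 2 where
  toFun := (f ⬝ᵥ ·)
  map_zero' := dotProduct_zero f
  map_add' := dotProduct_add f

theorem dotFunctional_smul (f u : X → ZMod 2) (q : Q) :
    dotFunctional f (q • u) = dotFunctional (fun x => f (q • x)) u := by
  change ∑ x, f x * u (q⁻¹ • x) = ∑ x, f (q • x) * u x
  simpa using (Equiv.sum_comp (MulAction.toPerm q) fun x => f x * u (q⁻¹ • x)).symm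

theorem dotFunctional_injective : Function.Injective (dotFunctional (X := X)) := by
  classical
  intro f g h
  ext x
  simpa [dotFunctional] using DFunLike.congr_fun h (Pi.single x 1)

theorem forall_dotFunctional_smul_eq_iff (f : X → ZMod 2) (q : Q) :
    (∀ u, dotFunctional f (q • u) = dotFunctional f u) ↔ ∀ x, f (q • x) = f x := by
  simp only [dotFunctional_smul, ← DFunLike.ext_iff, dotFunctional_injective.eq_iff, funext_iff]

variable {α : Type*}

theorem foxOrtho_dotFunctional_squareProd_iff (σ : α → Q) {ps : List α} (hps : ps.Nodup)
    (f : X → ZMod 2) :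
    FoxOrtho σ (squareProd ps) (dotFunctional f) ↔ ∀ i ∈ ps, ∀ x, f (σ i • x) = f x := by
  simp only [foxOrtho_squareProd_iff σ hps, forall_dotFunctional_smul_eq_iff]

/-- For every finite permutation module, the functions orthogonal to the Fox derivatives of `w`
contain the constants and are closed under multiplication. -/
structure FoxMultiplicative (w : FreeGroup α) : Prop where
  one : ∀ {Q X : Type} [Group Q] [Finite Q] [Fintype X] [MulAction Q X] (σ : α → Q),
    FoxOrtho σ w (dotFunctional (1 : X → ZMod 2))
  mul : ∀ {Q X : Type} [Group Q] [Finite Q] [Fintype X] [MulAction Q X] (σ : α → Q)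
    {f₁ f₂ : X → ZMod 2}, FoxOrtho σ w (dotFunctional f₁) → FoxOrtho σ w (dotFunctional f₂) →
    FoxOrtho σ w (dotFunctional (f₁ * f₂))

theorem SameWordMeasure.foxMultiplicative [Finite α] {ps : List α} (hps : ps.Nodup)
    {w : FreeGroup α} (hm : SameWordMeasure (squareProd ps) w) : FoxMultiplicative w where
  one {Q X} _ _ _ _ σ := by
    refine hm.foxOrtho_of_imp (ι := Empty) (nofun) _ (fun σ _ => ?_) (nofun)
    simp [foxOrtho_dotFunctional_squareProd_iff σ hps]
  mul {Q X} _ _ _ _ σ f₁ f₂ h₁ h₂ := by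
    refine hm.foxOrtho_of_imp (fun b : Bool => dotFunctional (cond b f₁ f₂)) _ (fun σ h => ?_)
      (Bool.forall_bool.mpr ⟨h₂, h₁⟩)
    simp only [Bool.forall_bool, foxOrtho_dotFunctional_squareProd_iff σ hps, cond_true,
      cond_false] at h ⊢
    exact fun i hi x => by simp only [Pi.mul_apply, h.1 i hi, h.2 i hi]

theorem card_forall_mem_eq_mul_pow {G : Type*} [Finite α] [Finite G] (c : G) {ps : List α}
    (hps : ps.Nodup) : Nat.card {σ : α → G // ∀ i ∈ ps, σ i = c} * Nat.card G ^ ps.length =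
      Nat.card G ^ Nat.card α := by
  classical
  have := Fintype.ofFinite α
  have := Fintype.ofFinite G
  have card_eq_prod : Nat.card {σ : α → G // ∀ i ∈ ps, σ i = c} =
      ∏ i, if i ∈ ps then 1 else Nat.card G := by
    have : ∀ σ : α → G, (∀ i ∈ ps, σ i = c) ↔
        σ ∈ Fintype.piFinset fun i => if i ∈ ps then {c} else Finset.univ := fun σ => by
      simp only [Fintype.mem_piFinset]
      exact forall_congr' fun i => by split_ifs with h <;> simp [h]
    simp only [this, Nat.card_eq_fintype_card, Fintype.card_coe, Fintype.card_piFinset,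
      apply_ite Finset.card, Finset.card_singleton, Finset.card_univ]
  have pow_eq_prod : Nat.card G ^ ps.length = ∏ i, if i ∈ ps then Nat.card G else 1 := by
    simp [← List.mem_toFinset, Finset.prod_ite_mem, List.toFinset_card_of_nodup hps]
  rw [card_eq_prod, pow_eq_prod, ← Finset.prod_mul_distrib, Nat.card_eq_fintype_card (α := α),
    ← Finset.card_univ, ← Finset.prod_const]
  exact Finset.prod_congr rfl fun i _ => by split_ifs <;> simp

theorem SameWordMeasure.length_eq [Finite α] {ps qs : List α} (hps : ps.Nodup) (hqs : qs.Nodup)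
    (hm : SameWordMeasure (squareProd ps) (squareProd qs)) : ps.length = qs.length := by
  let f : Bool → ZMod 2 := Pi.single true 1
  have invariant_iff : ∀ s : Equiv.Perm Bool, (∀ x, f (s • x) = f x) ↔ s = 1 := by decide
  have h := hm.card_foxOrtho_eq (Q := Equiv.Perm Bool) (dotFunctional f)
  simp only [foxOrtho_dotFunctional_squareProd_iff, hps, hqs, invariant_iff] at h
  have card_pos : 0 < Nat.card {σ : α → Equiv.Perm Bool // ∀ i ∈ qs, σ i = 1} :=
    have : Nonempty {σ : α → Equiv.Perm Bool // ∀ i ∈ qs, σ i = 1} := ⟨1, fun _ _ => rfl⟩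
    Finite.card_pos
  have pow_eq := (card_forall_mem_eq_mul_pow (1 : Equiv.Perm Bool) hps).trans
    (card_forall_mem_eq_mul_pow (1 : Equiv.Perm Bool) hqs).symm
  rw [h] at pow_eq
  exact Nat.pow_right_injective (by simp [Fintype.card_perm])
    (Nat.eq_of_mul_eq_mul_left card_pos pow_eq)

end PermutationModule

section CyclicWord

variable {α : Type*} {m : ℕ}

/-- The product of the first `r` letters of the cyclic word `l`. -/
def prefixProd (l : ZMod m → α × Bool) (r : ℕ) : FreeGroup α :=
  mk ((List.range r).map fun j : ℕ => l j)

@[simp] theorem prefixProd_zero (l : ZMod m → α × Bool) : prefixProd l 0 = 1 := rfl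

theorem prefixProd_succ (l : ZMod m → α × Bool) (r : ℕ) :
    prefixProd l (r + 1) = prefixProd l r * mk [l (r : ZMod m)] := by
  simp [prefixProd, List.range_succ, FreeGroup.mul_mk]

/-- Position `j` of a cyclic word labels the junction before the letter `l j`. Thus
`port l true j` and `port l false j` are the junctions at the tail and at the head of the
oriented generator occurring at position `j`. -/
def port (l : ZMod m → α × Bool) (b : Bool) (j : ZMod m) : ZMod m :=
  if (l j).2 = b then j else j + 1

/-- The positions of a cyclic word at which the generator `i` or its inverse occurs. -/
def occ [NeZero m] [DecidableEq α] (l : ZMod m → α × Bool) (i : α) : Finset (ZMod m) :=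
  {j | (l j).1 = i}

@[simp] theorem mem_occ [NeZero m] [DecidableEq α] {l : ZMod m → α × Bool} {i : α} {j : ZMod m} :
    j ∈ occ l i ↔ (l j).1 = i := by
  simp [occ]

theorem sum_range_natCast_zmod [NeZero m] {M : Type*} [AddCommMonoid M] (F : ZMod m → M) :
    ∑ j ∈ Finset.range m, F (j : ZMod m) = ∑ j, F j := by
  obtain _ | n := m
  · exact absurd rfl (NeZero.ne 0)
  · exact (Finset.sum_range fun j => F (j : ZMod (n + 1))).trans
      (Finset.sum_congr rfl fun j _ => congrArg F (ZMod.natCast_zmod_val (n := n + 1) j))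

variable {Q V : Type} [Group Q] [AddCommGroup V] [DistribMulAction Q V] {σ : α → Q}
  {l : ZMod m → α × Bool} {χ : ZMod m → V →+ ZMod 2}

theorem map_prefixProd_smul (hχ : ∀ j x, χ j (FreeGroup.lift σ (mk [l j]) • x) = χ (j + 1) x)
    (r : ℕ) (x : V) : χ 0 (FreeGroup.lift σ (prefixProd l r) • x) = χ r x := by
  induction r generalizing x with
  | zero => simp
  | succ r ih => rw [prefixProd_succ, map_mul, mul_smul, ih, hχ, Nat.cast_succ]

theorem map_foxD_letter (hχ : ∀ j x, χ j (FreeGroup.lift σ (mk [l j]) • x) = χ (j + 1) x)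
    (v : α → V) (j : ZMod m) : χ j (foxD σ (mk [l j]) v) = χ (port l true j) (v (l j).1) := by
  rcases h : l j with ⟨i, _ | _⟩
  · have mk_eq : mk [(i, false)] = (of i)⁻¹ := rfl
    have hj := hχ j (v i)
    rw [h, mk_eq, map_inv, FreeGroup.lift_apply_of] at hj
    simp [mk_eq, port, h, hj, ZMod.neg_eq_self_mod_two]
  · have mk_eq : mk [(i, true)] = of i := rfl
    simp [mk_eq, port, h]

theorem map_foxD_prefixProd (hχ : ∀ j x, χ j (FreeGroup.lift σ (mk [l j]) • x) = χ (j + 1) x)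
    (v : α → V) (r : ℕ) : χ 0 (foxD σ (prefixProd l r) v) =
      ∑ j ∈ Finset.range r, χ (port l true j) (v (l j).1) := by
  induction r with
  | zero => simp
  | succ r ih =>
    rw [Finset.sum_range_succ, ← ih, prefixProd_succ, foxD_mul, map_add,
      map_prefixProd_smul hχ, map_foxD_letter hχ]

theorem foxOrtho_prefixProd_iff [NeZero m] [DecidableEq α]
    (hχ : ∀ j x, χ j (FreeGroup.lift σ (mk [l j]) • x) = χ (j + 1) x) :
    FoxOrtho σ (prefixProd l m) (χ 0) ↔ ∀ i, ∑ j ∈ occ l i, χ (port l true j) = 0 := by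
  have map_foxD (v : α → V) : χ 0 (foxD σ (prefixProd l m) v) =
      ∑ j, χ (port l true j) (v (l j).1) := by
    rw [map_foxD_prefixProd hχ, sum_range_natCast_zmod fun j => χ (port l true j) (v (l j).1)]
  constructor
  · intro h i
    ext x
    rw [AddMonoidHom.finsetSum_apply, AddMonoidHom.zero_apply, ← h (Pi.single i x), map_foxD, occ,
      Finset.sum_filter]
    exact Finset.sum_congr rfl fun j _ => by
      split_ifs with hj <;> simp [hj]
  · intro h v
    rw [map_foxD, ← Finset.sum_fiberwise_of_maps_to (g := fun j => (l j).1)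
      fun j _ => Finset.mem_image_of_mem (fun j => (l j).1) (Finset.mem_univ j)]
    refine Finset.sum_eq_zero fun i _ => ?_
    have := DFunLike.congr_fun (h i) (v i)
    rw [AddMonoidHom.finsetSum_apply] at this
    refine Eq.trans (Finset.sum_congr rfl fun j hj => ?_) this
    rw [mem_occ.mp hj]

end CyclicWord

section CycleSpace

variable {V E : Type*} [Fintype E] [DecidableEq V]

/-- The boundary map mod 2 of the multigraph with edges `E` and endpoint maps `s`, `t`. -/
def bdry (s t : E → V) : (E → ZMod 2) →ₗ[ZMod 2] (V → ZMod 2) where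
  toFun c v := (∑ e with s e = v, c e) + ∑ e with t e = v, c e
  map_add' c c' := by ext v; simp [Finset.sum_add_distrib]; ring
  map_smul' a c := by ext v; simp [Finset.mul_sum, mul_add]

theorem bdry_apply (s t : E → V) (c : E → ZMod 2) (v : V) :
    bdry s t c v = (∑ e with s e = v, c e) + ∑ e with t e = v, c e := rfl

theorem bdry_single [DecidableEq E] (s t : E → V) (e : E) :
    bdry s t (Pi.single e 1) = Pi.single (s e) 1 + Pi.single (t e) 1 := by
  ext v
  simp [bdry_apply, Pi.single_apply, Finset.sum_ite_eq, eq_comm]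

/-- The edges of a multigraph that are incident to the vertex `u`. -/
def edgeStar (s t : E → V) (u : V) : Finset E := {e | s e = u ∨ t e = u}

@[simp] theorem mem_edgeStar {s t : E → V} {u : V} {e : E} :
    e ∈ edgeStar s t u ↔ s e = u ∨ t e = u := by
  simp [edgeStar]

/-- The edges of a multigraph that join the two classes of a vertex bipartition `g`. -/
def edgeCut {V : Type*} (s t : E → V) (g : V → ZMod 2) : Finset E := {e | g (s e) ≠ g (t e)}

@[simp] theorem mem_edgeCut {V : Type*} {s t : E → V} {g : V → ZMod 2} {e : E} :
    e ∈ edgeCut s t g ↔ g (s e) ≠ g (t e) := by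
  simp [edgeCut]

theorem exists_mem_ker_bdry_eqOn (s t : E → V) (S : Finset E) (r : E → ZMod 2)
    (hr : ∀ g : V → ZMod 2, (∀ e ∉ S, g (s e) = g (t e)) →
      ∑ e ∈ S, r e * (g (s e) + g (t e)) = 0) :
    ∃ c ∈ LinearMap.ker (bdry s t), ∀ e ∈ S, c e = r e := by
  classical
  let vanishing : Submodule (ZMod 2) (E → ZMod 2) :=
    ⨅ e ∈ S, LinearMap.ker (LinearMap.proj e)
  have mem_vanishing {c : E → ZMod 2} : c ∈ vanishing ↔ ∀ e ∈ S, c e = 0 := by simp [vanishing]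
  suffices r ∈ LinearMap.ker (bdry s t) ⊔ vanishing by
    obtain ⟨c, hc, c', hc', rfl⟩ := Submodule.mem_sup.mp this
    exact ⟨c, hc, fun e he => by simp [mem_vanishing.mp hc' e he]⟩
  by_contra hr'
  obtain ⟨Λ, hΛr, hΛ⟩ := Submodule.exists_le_ker_of_notMem hr'
  obtain ⟨hΛker, hΛvanishing⟩ := sup_le_iff.mp hΛ
  have hΛrange : Λ ∈ LinearMap.range (bdry s t).dualMap := by
    rw [LinearMap.range_dualMap_eq_dualAnnihilator_ker, Submodule.mem_dualAnnihilator]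
    exact fun c hc => hΛker hc
  obtain ⟨γ, rfl⟩ := hΛrange
  let g : V → ZMod 2 := fun v => γ (Pi.single v 1)
  have dual_single (e : E) :
      (bdry s t).dualMap γ (Pi.single e 1) = g (s e) + g (t e) := by
    rw [LinearMap.dualMap_apply, bdry_single, map_add]
  have g_eq (e : E) (he : e ∉ S) : g (s e) = g (t e) := by
    rw [← CharTwo.add_eq_zero, ← dual_single]
    refine hΛvanishing (mem_vanishing.mpr fun e' he' => ?_)
    exact Pi.single_eq_of_ne (ne_of_mem_of_not_mem he' he) 1
  refine hΛr ?_
  calc (bdry s t).dualMap γ r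
      = ∑ e, r e * (bdry s t).dualMap γ (Pi.single e 1) := by
        conv_lhs => rw [← Finset.univ_sum_single r]
        refine (map_sum _ _ _).trans (Finset.sum_congr rfl fun e _ => ?_)
        rw [← smul_eq_mul, ← map_smul, ← Pi.single_smul, smul_eq_mul, mul_one]
    _ = ∑ e ∈ S, r e * (bdry s t).dualMap γ (Pi.single e 1) := by
        refine (Finset.sum_subset (Finset.subset_univ S) fun e _ he => ?_).symm
        rw [dual_single, g_eq e he, CharTwo.add_self_eq_zero, mul_zero]
    _ = 0 := by
        simp only [dual_single, hr g g_eq]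

theorem edgeCut_eq_edgeStar {s t : E → V} {u u' : V}
    (hcut : ∀ g : V → ZMod 2, g u ≠ g u' → (edgeStar s t u).card ≤ (edgeCut s t g).card)
    {g : V → ZMod 2} (hg : ∀ e ∉ edgeStar s t u, g (s e) = g (t e)) (hne : g u ≠ g u') :
    edgeCut s t g = edgeStar s t u :=
  Finset.eq_of_subset_of_card_le
    (fun e he => by_contra fun h => mem_edgeCut.mp he (hg e h)) (hcut g hne)

theorem exists_add_eq_of_mem_edgeStar {s t : E → V} {u u' : V} (hu : u ≠ u')
    (hcut : ∀ g : V → ZMod 2, g u ≠ g u' → (edgeStar s t u).card ≤ (edgeCut s t g).card)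
    {g : V → ZMod 2} (hg : ∀ e ∉ edgeStar s t u, g (s e) = g (t e)) :
    ∃ a, ∀ e ∈ edgeStar s t u, g (s e) + g (t e) = a := by
  by_cases hne : g u = g u'
  · -- Changing `g` at `u` only changes `g (s e) + g (t e)` at the edges of the star.
    refine ⟨0, fun e he => ?_⟩
    have hg' : ∀ e ∉ edgeStar s t u,
        Function.update g u (g u + 1) (s e) = Function.update g u (g u + 1) (t e) := by
      intro e he
      have := hg e he
      rw [mem_edgeStar, not_or] at he
      simpa [Function.update_of_ne, he] using this
    have ne_of_mem := he
    rw [← edgeCut_eq_edgeStar hcut hg' (by simp [hu.symm, hne]), mem_edgeCut] at ne_of_mem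
    rw [CharTwo.add_eq_zero]
    have eq_of_add_one_ne : ∀ {a b : ZMod 2}, a + 1 ≠ b → a = b := by decide
    rcases eq_or_ne (s e) (t e) with hst | hst
    · rw [hst]
    rcases mem_edgeStar.mp he with rfl | rfl
    · rw [Function.update_self, Function.update_of_ne hst.symm] at ne_of_mem
      exact eq_of_add_one_ne ne_of_mem
    · rw [Function.update_self, Function.update_of_ne hst] at ne_of_mem
      exact (eq_of_add_one_ne ne_of_mem.symm).symm
  · refine ⟨1, fun e he => ?_⟩
    rw [← edgeCut_eq_edgeStar hcut hg hne, mem_edgeCut] at he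
    generalize g (s e) = a, g (t e) = b at he
    decide +revert

theorem exists_mem_ker_bdry_eqOn_edgeStar (s t : E → V) {u u' : V} (hu : u ≠ u')
    (hcut : ∀ g : V → ZMod 2, g u ≠ g u' → (edgeStar s t u).card ≤ (edgeCut s t g).card)
    (r : E → ZMod 2) (hr : ∑ e ∈ edgeStar s t u, r e = 0) :
    ∃ c ∈ LinearMap.ker (bdry s t), ∀ e ∈ edgeStar s t u, c e = r e := by
  refine exists_mem_ker_bdry_eqOn s t _ r fun g hg => ?_
  obtain ⟨a, ha⟩ := exists_add_eq_of_mem_edgeStar hu hcut hg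
  rw [Finset.sum_congr rfl fun e he => congrArg (r e * ·) (ha e he), ← Finset.sum_mul, hr,
    zero_mul]

end CycleSpace

theorem exists_perm_comp_eq_of_range_eq {Z W : Type*} [AddGroup Z] [AddGroup W] [Finite Z]
    {p q : Z →+ W} (h : p.range = q.range) : ∃ e : Equiv.Perm Z, ∀ z, q (e z) = p z := by
  have card_ker_eq : Nat.card p.ker = Nat.card q.ker := by
    have := p.ker.card_mul_index.trans q.ker.card_mul_index.symm
    rw [AddSubgroup.index_ker, AddSubgroup.index_ker, h] at this
    have : Finite q.range := Set.finite_range q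
    exact Nat.eq_of_mul_eq_mul_right Nat.card_pos ‹_›
  have nonempty_fiber_equiv (y : W) : Nonempty ({z // p z = y} ≃ {z // q z = y}) := by
    by_cases hy : y ∈ p.range
    · obtain ⟨a, rfl⟩ := hy
      obtain ⟨b, hb⟩ := h.le ⟨a, rfl⟩
      obtain ⟨ε⟩ := Finite.card_eq.mp card_ker_eq
      have fiberEquiv := (q.fiberEquivKer b).symm
      rw [hb] at fiberEquiv
      exact ⟨(p.fiberEquivKer a).trans (ε.trans fiberEquiv)⟩
    · have : IsEmpty {z // p z = y} := ⟨fun z => hy ⟨z.1, z.2⟩⟩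
      have : IsEmpty {z // q z = y} := ⟨fun z => hy (h ▸ ⟨z.1, z.2⟩)⟩
      exact ⟨Equiv.equivOfIsEmpty _ _⟩
  let fiberEquiv (y : W) := (nonempty_fiber_equiv y).some
  exact ⟨Equiv.ofFiberEquiv fiberEquiv, Equiv.ofFiberEquiv_map fiberEquiv⟩

/-- The inverse letter. -/
def flipLetter {α : Type*} (v : α × Bool) : α × Bool := (v.1, !v.2)

@[simp] theorem flipLetter_flipLetter {α : Type*} (v : α × Bool) :
    flipLetter (flipLetter v) = v := by
  simp [flipLetter]

theorem flipLetter_ne {α : Type*} (v : α × Bool) : flipLetter v ≠ v := by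
  simp [flipLetter, Prod.ext_iff]

theorem flipLetter_eq_iff {α : Type*} {u v : α × Bool} : flipLetter u = v ↔ u = flipLetter v := by
  rw [← (Function.Involutive.injective flipLetter_flipLetter).eq_iff, flipLetter_flipLetter]

section WhiteheadGraph

variable {α : Type*} {m : ℕ}

/-- The edge at the junction `j` of a cyclic word joins, in the Whitehead graph, the letter `l j`
to the inverse `backLetter l j` of the preceding letter. -/
def backLetter (l : ZMod m → α × Bool) (j : ZMod m) : α × Bool := flipLetter (l (j - 1))

theorem port_eq_iff {l : ZMod m → α × Bool} {b : Bool} {i : α} {e : ZMod m} :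
    (∃ j, (l j).1 = i ∧ port l b j = e) ↔ l e = (i, b) ∨ backLetter l e = (i, b) := by
  rw [backLetter, flipLetter_eq_iff]
  constructor
  · rintro ⟨j, rfl, rfl⟩
    rcases h : l j with ⟨i, _ | _⟩ <;> cases b <;> simp [port, h, flipLetter]
  · rintro (h | h)
    · exact ⟨e, by simp [port, h]⟩
    · exact ⟨e - 1, by simp [port, h, flipLetter]⟩

variable [DecidableEq α] [NeZero m]

/-- No cut of the Whitehead graph separating a letter from its inverse has fewer edges than the
number of occurrences of the letter. -/
def NoSmallCut (l : ZMod m → α × Bool) : Prop :=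
  ∀ (u : α × Bool) (g : α × Bool → ZMod 2), g u ≠ g (flipLetter u) →
    (occ l u.1).card ≤ (edgeCut l (backLetter l) g).card

theorem image_port_occ (l : ZMod m → α × Bool) (i : α) (b : Bool) :
    (occ l i).image (port l b) = edgeStar l (backLetter l) (i, b) := by
  ext e
  simp [port_eq_iff]

theorem NoSmallCut.injOn_port {l : ZMod m → α × Bool} (h : NoSmallCut l) (i : α) (b : Bool) :
    Set.InjOn (port l b) (occ l i) := by
  rw [← Finset.card_image_iff, image_port_occ]
  refine (image_port_occ l i b ▸ Finset.card_image_le).antisymm ?_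
  refine (h (i, b) (Pi.single (i, b) 1) (by simp [flipLetter_ne])).trans
    (Finset.card_le_card fun e he => ?_)
  contrapose! he
  rw [mem_edgeStar, not_or] at he
  simp [he.1, he.2]

theorem bdry_backLetter_apply (l : ZMod m → α × Bool) (c : ZMod m → ZMod 2) (i : α) (b : Bool) :
    bdry l (backLetter l) c (i, b) = ∑ j ∈ occ l i, c (port l b j) := by
  have sum_backLetter : ∑ e with backLetter l e = (i, b), c e =
      ∑ j with l j = flipLetter (i, b), c (j + 1) := by
    rw [Finset.sum_filter, Finset.sum_filter, ← Equiv.sum_comp (Equiv.addRight (1 : ZMod m))]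
    simp [backLetter, flipLetter_eq_iff]
  rw [bdry_apply, sum_backLetter, occ, Finset.sum_filter, Finset.sum_filter, Finset.sum_filter,
    ← Finset.sum_add_distrib]
  refine Finset.sum_congr rfl fun j _ => ?_
  rcases h : l j with ⟨i', _ | _⟩ <;> cases b <;> simp [port, h, flipLetter]

/-- The cycle space mod 2 of the Whitehead graph of a cyclic word. -/
abbrev cycleSpace (l : ZMod m → α × Bool) : Submodule (ZMod 2) (ZMod m → ZMod 2) :=
  LinearMap.ker (bdry l (backLetter l))

/-- The restriction of the cycles of the Whitehead graph to the star of the letter `(i, b)`,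
whose edges are indexed by the occurrences of the generator `i`. -/
def pattern (l : ZMod m → α × Bool) (i : α) (b : Bool) :
    cycleSpace l →+ (occ l i → ZMod 2) where
  toFun c j := c.1 (port l b j)
  map_zero' := rfl
  map_add' _ _ := rfl

theorem NoSmallCut.mem_range_pattern {l : ZMod m → α × Bool} (h : NoSmallCut l) {i : α}
    {b : Bool} {r : occ l i → ZMod 2} : r ∈ (pattern l i b).range ↔ ∑ j, r j = 0 := by
  constructor
  · rintro ⟨c, rfl⟩
    exact (Finset.sum_coe_sort (occ l i) fun j => c.1 (port l b j)).trans <|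
      (bdry_backLetter_apply l c.1 i b).symm.trans (congrFun (LinearMap.mem_ker.mp c.2) (i, b))
  · intro hr
    have port_injective : Function.Injective fun j : occ l i => port l b j :=
      (h.injOn_port i b).injective
    let r' : ZMod m → ZMod 2 := Function.extend (fun j : occ l i => port l b j) r 0
    have r'_port (j : occ l i) : r' (port l b j) = r j := port_injective.extend_apply r 0 j
    obtain ⟨c, hc, hcr⟩ := exists_mem_ker_bdry_eqOn_edgeStar l (backLetter l)
      (flipLetter_ne (i, b)).symm
      (fun g hg => (image_port_occ l i b ▸ Finset.card_image_le).trans (h (i, b) g hg)) r' <| by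
        rw [← image_port_occ, Finset.sum_image (h.injOn_port i b), ← hr,
          ← Finset.sum_coe_sort]
        exact Finset.sum_congr rfl fun j _ => r'_port j
    refine ⟨⟨c, hc⟩, funext fun j => (hcr _ ?_).trans (r'_port j)⟩
    rw [← image_port_occ]
    exact Finset.mem_image_of_mem _ j.2

theorem NoSmallCut.exists_monodromy {l : ZMod m → α × Bool} (h : NoSmallCut l) :
    ∃ e : α → Equiv.Perm (cycleSpace l), ∀ j z,
      (FreeGroup.lift e (mk [l j]) z).1 j = z.1 (j + 1) := by
  have range_eq (i : α) : (pattern l i false).range = (pattern l i true).range := by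
    ext r
    rw [h.mem_range_pattern, h.mem_range_pattern]
  choose e he using fun i => exists_perm_comp_eq_of_range_eq (range_eq i)
  have apply_port (j : ZMod m) (z : cycleSpace l) :
      (e (l j).1 z).1 (port l true j) = z.1 (port l false j) :=
    congrFun (he (l j).1 z) ⟨j, mem_occ.mpr rfl⟩
  refine ⟨e, fun j z => ?_⟩
  rcases hj : l j with ⟨i, _ | _⟩
  · have mk_eq : mk [(i, false)] = (of i)⁻¹ := rfl
    have := apply_port j ((e i)⁻¹ z)
    simpa [mk_eq, port, hj] using this.symm
  · have mk_eq : mk [(i, true)] = of i := rfl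
    simpa [mk_eq, port, hj] using apply_port j z

end WhiteheadGraph

section FoxMultiplicative

variable {α : Type*} [DecidableEq α] {m : ℕ} [NeZero m] {l : ZMod m → α × Bool}

attribute [local instance] arrowDistribMulAction

theorem foxOrtho_dotFunctional_prefixProd_iff {Q X : Type} [Group Q] [MulAction Q X] [Fintype X]
    {σ : α → Q} (f : ZMod m → X → ZMod 2)
    (hf : ∀ j x, f j (FreeGroup.lift σ (mk [l j]) • x) = f (j + 1) x) :
    FoxOrtho σ (prefixProd l m) (dotFunctional (f 0)) ↔
      ∀ i x, ∑ j ∈ occ l i, f (port l true j) x = 0 := by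
  classical
  have hχ (j : ZMod m) (u : X → ZMod 2) :
      dotFunctional (f j) (FreeGroup.lift σ (mk [l j]) • u) = dotFunctional (f (j + 1)) u := by
    rw [dotFunctional_smul]
    simp only [hf]
  rw [foxOrtho_prefixProd_iff (χ := fun j => dotFunctional (f j)) hχ]
  refine forall_congr' fun i => ?_
  have sum_dotFunctional : ∑ j ∈ occ l i, dotFunctional (f (port l true j)) =
      dotFunctional (∑ j ∈ occ l i, f (port l true j)) := by
    refine DFunLike.ext _ _ fun u => ?_
    rw [AddMonoidHom.finsetSum_apply]
    exact (sum_dotProduct ..).symm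
  have dotFunctional_zero : dotFunctional (0 : X → ZMod 2) = 0 :=
    DFunLike.ext _ _ fun u => zero_dotProduct u
  rw [sum_dotFunctional, ← dotFunctional_zero, dotFunctional_injective.eq_iff, funext_iff]
  simp only [Finset.sum_apply, Pi.zero_apply]

theorem FoxMultiplicative.even_card_occ (hw : FoxMultiplicative (prefixProd l m)) (i : α) :
    Even (occ l i).card := by
  have := (foxOrtho_dotFunctional_prefixProd_iff (Q := Unit) (X := Unit) (l := l) (σ := 1)
    (fun _ => 1) fun _ _ => rfl).mp (hw.one 1) i ()
  simpa [ZMod.natCast_eq_zero_iff_even] using this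

theorem NoSmallCut.sum_mul_eq_zero (h : NoSmallCut l) (hw : FoxMultiplicative (prefixProd l m))
    (z₁ z₂ : cycleSpace l) (i : α) :
    ∑ j ∈ occ l i, z₁.1 (port l true j) * z₂.1 (port l true j) = 0 := by
  have := Fintype.ofFinite (cycleSpace l)
  obtain ⟨e, he⟩ := h.exists_monodromy
  have sum_eq_zero (z : cycleSpace l) (i : α) : ∑ j ∈ occ l i, z.1 (port l true j) = 0 := by
    rw [← bdry_backLetter_apply]
    exact congrFun (LinearMap.mem_ker.mp z.2) (i, true)
  let f₁ (j : ZMod m) (z : cycleSpace l × cycleSpace l) : ZMod 2 := z.1.1 j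
  let f₂ (j : ZMod m) (z : cycleSpace l × cycleSpace l) : ZMod 2 := z.2.1 j
  have hf₁ (j z) : f₁ j (FreeGroup.lift e (mk [l j]) • z) = f₁ (j + 1) z := he j z.1
  have hf₂ (j z) : f₂ j (FreeGroup.lift e (mk [l j]) • z) = f₂ (j + 1) z := he j z.2
  refine (foxOrtho_dotFunctional_prefixProd_iff (fun j => f₁ j * f₂ j) fun j z =>
    congrArg₂ (· * ·) (hf₁ j z) (hf₂ j z)).mp (hw.mul e ?_ ?_) i (z₁, z₂)
  · exact (foxOrtho_dotFunctional_prefixProd_iff f₁ hf₁).mpr fun i z => sum_eq_zero z.1 i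
  · exact (foxOrtho_dotFunctional_prefixProd_iff f₂ hf₂).mpr fun i z => sum_eq_zero z.2 i

theorem card_le_two_of_even_orthogonal {ι : Type*} [Fintype ι]
    (h : ∀ r₁ r₂ : ι → ZMod 2, ∑ j, r₁ j = 0 → ∑ j, r₂ j = 0 → r₁ ⬝ᵥ r₂ = 0) :
    Fintype.card ι ≤ 2 := by
  classical
  by_contra! hlt
  obtain ⟨a, b, c, hab, hac, hbc⟩ := Fintype.two_lt_card_iff.mp hlt
  have sum_pair (x : ι) : ∑ j, (Pi.single a 1 + Pi.single x 1 : ι → ZMod 2) j = 0 := by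
    simp [Finset.sum_add_distrib, CharTwo.add_self_eq_zero]
  simpa [add_dotProduct, hab, hac, hbc] using h _ _ (sum_pair b) (sum_pair c)

theorem NoSmallCut.card_occ (h : NoSmallCut l) (hw : FoxMultiplicative (prefixProd l m)) (i : α) :
    (occ l i).card = 0 ∨ (occ l i).card = 2 := by
  have card_le_two : Fintype.card (occ l i) ≤ 2 :=
    card_le_two_of_even_orthogonal fun r₁ r₂ h₁ h₂ => by
      obtain ⟨z₁, rfl⟩ := (h.mem_range_pattern (b := true)).mpr h₁
      obtain ⟨z₂, rfl⟩ := (h.mem_range_pattern (b := true)).mpr h₂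
      exact (Finset.sum_coe_sort (occ l i) fun j =>
        z₁.1 (port l true j) * z₂.1 (port l true j)).trans (h.sum_mul_eq_zero hw z₁ z₂ i)
  rw [Fintype.card_coe] at card_le_two
  have := hw.even_card_occ i
  interval_cases (occ l i).card <;> simp_all

end FoxMultiplicative

section Automorphisms

variable {α : Type*}

/-- The free factor generated by the generators in `S`. -/
def supported (S : Set α) : Subgroup (FreeGroup α) := Subgroup.closure (of '' S)

theorem supported_mono {S T : Set α} (h : S ⊆ T) : supported S ≤ supported T :=
  Subgroup.closure_mono (Set.image_mono h)

theorem of_mem_supported {S : Set α} {x : α} (h : x ∈ S) : of x ∈ supported S :=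
  Subgroup.subset_closure (Set.mem_image_of_mem of h)

theorem mk_flipLetter (v : α × Bool) : mk [flipLetter v] = (mk [v])⁻¹ := rfl

theorem mk_letter_eq (v : α × Bool) : mk [v] = of v.1 ∨ mk [v] = (of v.1)⁻¹ := by
  rcases v with ⟨x, _ | _⟩
  · exact Or.inr rfl
  · exact Or.inl rfl

theorem mk_mem_supported {S : Set α} {L : List (α × Bool)} (h : ∀ v ∈ L, v.1 ∈ S) :
    mk L ∈ supported S := by
  induction L with
  | nil => exact one_mem _
  | cons v L ih =>
    rw [List.forall_mem_cons] at h
    rw [← List.singleton_append, ← FreeGroup.mul_mk]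
    refine mul_mem ?_ (ih h.2)
    rcases mk_letter_eq v with hv | hv <;> simp only [hv, inv_mem_iff, of_mem_supported h.1]

open Classical in
/-- The endomorphism fixing the generators in `S` and sending any other generator `x` to
`p x * x * q x`. -/
noncomputable def biTransvectionHom (S : Set α) (p q : α → FreeGroup α) :
    FreeGroup α →* FreeGroup α :=
  FreeGroup.lift fun x => if x ∈ S then of x else p x * of x * q x

section

variable {S : Set α} {p q p' q' : α → FreeGroup α}

theorem biTransvectionHom_of (p q : α → FreeGroup α) {x : α} (hx : x ∉ S) :
    biTransvectionHom S p q (of x) = p x * of x * q x := by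
  rw [biTransvectionHom, FreeGroup.lift_apply_of, if_neg hx]

theorem biTransvectionHom_of_mem_supported (p q : α → FreeGroup α) {g : FreeGroup α}
    (hg : g ∈ supported S) : biTransvectionHom S p q g = g := by
  refine MonoidHom.eqOn_closure (g := MonoidHom.id _) ?_ hg
  rintro _ ⟨x, hx, rfl⟩
  rw [biTransvectionHom, FreeGroup.lift_apply_of, if_pos hx, MonoidHom.id_apply]

theorem biTransvectionHom_comp (hp : ∀ x, p' x ∈ supported S) (hq : ∀ x, q' x ∈ supported S) :
    (biTransvectionHom S p q).comp (biTransvectionHom S p' q') =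
      biTransvectionHom S (p' * p) (q * q') := by
  refine FreeGroup.ext_hom _ _ fun x => ?_
  rw [MonoidHom.comp_apply]
  by_cases hx : x ∈ S
  · simp only [biTransvectionHom_of_mem_supported _ _ (of_mem_supported hx)]
  · simp only [biTransvectionHom_of _ _ hx, map_mul, Pi.mul_apply, mul_assoc,
      biTransvectionHom_of_mem_supported _ _ (hp x), biTransvectionHom_of_mem_supported _ _ (hq x)]

theorem biTransvectionHom_one : biTransvectionHom S 1 1 = MonoidHom.id _ := by
  refine FreeGroup.ext_hom _ _ fun x => ?_
  simp [biTransvectionHom]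

/-- The automorphism fixing the generators in `S` and sending any other generator `x` to
`p x * x * q x`, where `p x` and `q x` are words in the generators in `S`. -/
noncomputable def biTransvection (hp : ∀ x, p x ∈ supported S) (hq : ∀ x, q x ∈ supported S) :
    FreeGroup α ≃* FreeGroup α :=
  (biTransvectionHom S p q).toMulEquiv (biTransvectionHom S p⁻¹ q⁻¹)
    (by rw [biTransvectionHom_comp hp hq, mul_inv_cancel, inv_mul_cancel, biTransvectionHom_one])
    (by rw [biTransvectionHom_comp (p' := p⁻¹) (q' := q⁻¹) (fun x => inv_mem (hp x))
      (fun x => inv_mem (hq x)), inv_mul_cancel, mul_inv_cancel, biTransvectionHom_one])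

theorem biTransvection_of (hp : ∀ x, p x ∈ supported S) (hq : ∀ x, q x ∈ supported S) {x : α}
    (hx : x ∉ S) : biTransvection hp hq (of x) = p x * of x * q x :=
  biTransvectionHom_of p q hx

theorem biTransvection_of_mem_supported (hp : ∀ x, p x ∈ supported S)
    (hq : ∀ x, q x ∈ supported S) {g : FreeGroup α} (hg : g ∈ supported S) :
    biTransvection hp hq g = g :=
  biTransvectionHom_of_mem_supported p q hg

end

/-- Two elements of a free group are equivalent if they lie in the same orbit under
automorphisms. -/
def AutEquivalent (u v : FreeGroup α) : Prop := ∃ f : FreeGroup α ≃* FreeGroup α, f u = v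

theorem AutEquivalent.refl (u : FreeGroup α) : AutEquivalent u u := ⟨.refl _, rfl⟩

theorem AutEquivalent.symm {u v : FreeGroup α} : AutEquivalent u v → AutEquivalent v u := by
  rintro ⟨f, rfl⟩
  exact ⟨f.symm, f.symm_apply_apply u⟩

theorem AutEquivalent.trans {u v w : FreeGroup α} :
    AutEquivalent u v → AutEquivalent v w → AutEquivalent u w := by
  rintro ⟨f, rfl⟩ ⟨g, rfl⟩
  exact ⟨f.trans g, rfl⟩

theorem AutEquivalent.mul_comm (u v : FreeGroup α) : AutEquivalent (u * v) (v * u) :=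
  ⟨MulAut.conj u⁻¹, by simp⟩

instance : Trans (AutEquivalent (α := α)) AutEquivalent AutEquivalent := ⟨AutEquivalent.trans⟩

end Automorphisms

section WhiteheadAutomorphisms

variable {α : Type*} {m : ℕ} {g : α × Bool → ZMod 2} {u : α × Bool}

/-- The factor `mk [u]` or `1` by which a Whitehead automorphism changes the side `v` of a
generator, according as the cut `g` puts `v` on the side of `u` or not. -/
def whiteheadSide (u : α × Bool) (g : α × Bool → ZMod 2) (v : α × Bool) : FreeGroup α :=
  if g v = g u then mk [u] else 1

theorem whiteheadSide_mem (u : α × Bool) (g : α × Bool → ZMod 2) (v : α × Bool) :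
    whiteheadSide u g v ∈ supported {u.1} := by
  rw [whiteheadSide]
  split_ifs
  · exact mk_mem_supported (by simp)
  · exact one_mem _

/-- The Whitehead automorphism with multiplier `u` associated with the cut `g` of the set of
letters. -/
noncomputable def whiteheadAut (u : α × Bool) (g : α × Bool → ZMod 2) :
    FreeGroup α ≃* FreeGroup α :=
  biTransvection (S := {u.1}) (p := fun x => whiteheadSide u g (x, true))
    (q := fun x => (whiteheadSide u g (x, false))⁻¹) (fun _ => whiteheadSide_mem u g _)
    (fun _ => inv_mem (whiteheadSide_mem u g _))

theorem whiteheadAut_mk_of_fst_eq {v : α × Bool} (h : g u ≠ g (flipLetter u)) (hv : v.1 = u.1) :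
    whiteheadAut u g (mk [v]) = whiteheadSide u g v * (whiteheadSide u g (flipLetter v))⁻¹ := by
  have fixed : whiteheadAut u g (mk [v]) = mk [v] :=
    biTransvection_of_mem_supported _ _ (mk_mem_supported (by simpa using hv))
  obtain rfl | rfl : v = u ∨ v = flipLetter u := by
    rcases u with ⟨x, _ | _⟩ <;> rcases v with ⟨y, _ | _⟩ <;> simp_all [flipLetter]
  · simp only [fixed, whiteheadSide, h.symm, if_true, if_false, inv_one, mul_one]
  · rw [fixed]
    simp only [whiteheadSide, h.symm, if_true, if_false, one_mul, flipLetter_flipLetter,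
      mk_flipLetter]

theorem whiteheadAut_mk_of_fst_ne (g : α × Bool → ZMod 2) {v : α × Bool} (hv : v.1 ≠ u.1) :
    whiteheadAut u g (mk [v]) =
      whiteheadSide u g v * mk [v] * (whiteheadSide u g (flipLetter v))⁻¹ := by
  have key : whiteheadAut u g (of v.1) =
      whiteheadSide u g (v.1, true) * of v.1 * (whiteheadSide u g (v.1, false))⁻¹ :=
    biTransvection_of _ _ hv
  rcases v with ⟨x, _ | _⟩
  · have mk_eq : mk [(x, false)] = (of x)⁻¹ := rfl
    rw [mk_eq, map_inv, key]
    simp only [flipLetter, mul_inv_rev, inv_inv, mul_assoc, Bool.not_false]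
  · exact key

variable [DecidableEq α]

theorem norm_whiteheadSide_inv_mul_le (u : α × Bool) (g : α × Bool → ZMod 2) (v v' : α × Bool) :
    ((whiteheadSide u g v)⁻¹ * whiteheadSide u g v').norm ≤ if g v' ≠ g v then 1 else 0 := by
  have norm_mk : (mk [u]).norm ≤ 1 := FreeGroup.norm_mk_le
  unfold whiteheadSide
  generalize mk [u] = a at norm_mk
  split_ifs <;> simp_all

theorem norm_whiteheadAut_letter_le (h : g u ≠ g (flipLetter u)) (v v' : α × Bool) :
    ((whiteheadSide u g v')⁻¹ * whiteheadAut u g (mk [v]) *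
      whiteheadSide u g (flipLetter v)).norm ≤
    (if g v ≠ g v' then 1 else 0) + if v.1 ≠ u.1 then 1 else 0 := by
  have norm_side := norm_whiteheadSide_inv_mul_le u g v' v
  by_cases hv : v.1 = u.1
  · simpa [whiteheadAut_mk_of_fst_eq h hv, ← mul_assoc, hv] using norm_side
  · have norm_mk : (mk [v]).norm ≤ 1 := FreeGroup.norm_mk_le
    simpa [whiteheadAut_mk_of_fst_ne g hv, ← mul_assoc, hv] using
      (FreeGroup.norm_mul_le _ _).trans (add_le_add norm_side norm_mk)

theorem norm_whiteheadAut_prefixProd_le (h : g u ≠ g (flipLetter u)) (l : ZMod m → α × Bool)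
    (r : ℕ) :
    ((whiteheadSide u g (backLetter l 0))⁻¹ * whiteheadAut u g (prefixProd l r) *
      whiteheadSide u g (backLetter l r)).norm ≤
    ∑ j ∈ Finset.range r, ((if g (l j) ≠ g (backLetter l j) then 1 else 0) +
      if (l j).1 ≠ u.1 then 1 else 0) := by
  induction r with
  | zero => simp
  | succ r ih =>
    have backLetter_succ : backLetter l (r + 1 : ℕ) = flipLetter (l r) := by simp [backLetter]
    rw [Finset.sum_range_succ]
    refine le_trans ?_ <| (FreeGroup.norm_mul_le _ _).trans
      (add_le_add ih (norm_whiteheadAut_letter_le h (l r) (backLetter l r)))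
    rw [prefixProd_succ, map_mul, backLetter_succ]
    exact (congrArg FreeGroup.norm (by group)).le

theorem noSmallCut_of_norm_minimal [NeZero m] (l : ZMod m → α × Bool)
    (hmin : ∀ f : FreeGroup α ≃* FreeGroup α, m ≤ (f (prefixProd l m)).norm) :
    NoSmallCut l := by
  intro u g h
  set a := whiteheadSide u g (backLetter l 0) with ha
  have le_sum : m ≤ ∑ j : ZMod m, ((if g (l j) ≠ g (backLetter l j) then 1 else 0) +
      if (l j).1 ≠ u.1 then 1 else 0) := by
    rw [← sum_range_natCast_zmod]
    refine ((hmin ((whiteheadAut u g).trans (MulAut.conj a⁻¹))).trans_eq ?_).trans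
      (norm_whiteheadAut_prefixProd_le h l m)
    simp [ha]
  rw [Finset.sum_add_distrib, ← Finset.card_filter, ← Finset.card_filter] at le_sum
  have card_occ_add := Finset.card_filter_add_card_filter_not
    (s := (Finset.univ : Finset (ZMod m))) (fun j => (l j).1 = u.1)
  rw [Finset.card_univ, ZMod.card] at card_occ_add
  rw [occ, edgeCut]
  simp only [ne_eq] at le_sum ⊢
  omega

end WhiteheadAutomorphisms

section Collecting

variable {α : Type*} {x : α}

theorem exists_mulEquiv_inverting (x : α) : ∃ f : FreeGroup α ≃* FreeGroup α,
    f (of x) = (of x)⁻¹ ∧ ∀ g ∈ supported {x}ᶜ, f g = g := by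
  classical
  let φ : FreeGroup α →* FreeGroup α := FreeGroup.lift (Function.update of x (of x)⁻¹)
  have φ_self : φ (of x) = (of x)⁻¹ := by simp [φ]
  have φ_of_ne {y : α} (hy : y ≠ x) : φ (of y) = of y := by simp [φ, hy]
  have φ_comp_φ : φ.comp φ = MonoidHom.id _ := FreeGroup.ext_hom _ _ fun y => by
    by_cases hy : y = x
    · simp [hy, φ_self]
    · simp [φ_of_ne hy]
  refine ⟨φ.toMulEquiv φ φ_comp_φ φ_comp_φ, φ_self, fun g hg => ?_⟩
  refine MonoidHom.eqOn_closure (f := φ) (g := MonoidHom.id _) ?_ hg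
  rintro _ ⟨y, hy, rfl⟩
  exact φ_of_ne hy

theorem autEquivalent_collect_of {A B C : FreeGroup α} (hA : A ∈ supported {x}ᶜ)
    (hB : B ∈ supported {x}ᶜ) (hC : C ∈ supported {x}ᶜ) :
    AutEquivalent (A * of x * B * of x * C) (of x ^ 2 * A * B⁻¹ * C) := by
  have hp : ∀ _ : α, A⁻¹ ∈ supported {x}ᶜ := fun _ => inv_mem hA
  have hq : ∀ _ : α, A * B⁻¹ ∈ supported {x}ᶜ := fun _ => mul_mem hA (inv_mem hB)
  refine ⟨biTransvection hp hq, ?_⟩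
  simp only [map_mul, biTransvection_of hp hq (not_not_intro (Set.mem_singleton x)),
    biTransvection_of_mem_supported hp hq hA, biTransvection_of_mem_supported hp hq hB,
    biTransvection_of_mem_supported hp hq hC, pow_two]
  group

theorem autEquivalent_collect {X A B C : FreeGroup α} (hX : X = of x ∨ X = (of x)⁻¹)
    (hA : A ∈ supported {x}ᶜ) (hB : B ∈ supported {x}ᶜ) (hC : C ∈ supported {x}ᶜ) :
    AutEquivalent (A * X * B * X * C) (of x ^ 2 * A * B⁻¹ * C) := by
  refine .trans ?_ (autEquivalent_collect_of hA hB hC)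
  obtain rfl | rfl := hX
  · exact .refl _
  · obtain ⟨f, hx, hf⟩ := exists_mulEquiv_inverting x
    exact ⟨f, by simp only [map_mul, map_inv, hx, inv_inv, hf _ hA, hf _ hB, hf _ hC]⟩

theorem autEquivalent_swap {y : α} (hxy : x ≠ y) {Y A B C : FreeGroup α}
    (hY : Y = of y ∨ Y = (of y)⁻¹) (hA : A ∈ supported {x, y}ᶜ) (hB : B ∈ supported {x, y}ᶜ)
    (hC : C ∈ supported {x, y}ᶜ) :
    AutEquivalent (of x ^ 2 * A * Y * B * Y⁻¹ * C)
      (of y ^ 2 * A * C * (of x)⁻¹ * B⁻¹ * of x) := by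
  have avoids_x {g : FreeGroup α} (hg : g ∈ supported {x, y}ᶜ) : g ∈ supported {x}ᶜ :=
    supported_mono (by simp) hg
  have avoids_y {g : FreeGroup α} (hg : g ∈ supported {x, y}ᶜ) : g ∈ supported {y}ᶜ :=
    supported_mono (by simp) hg
  have hx : of x ∈ supported {y}ᶜ := of_mem_supported hxy
  have hYx : Y ∈ supported {x}ᶜ := by
    rcases hY with rfl | rfl
    · exact of_mem_supported hxy.symm
    · exact inv_mem (of_mem_supported hxy.symm)
  have hp : ∀ _ : α, C⁻¹ * Y ∈ supported {x}ᶜ := fun _ => mul_mem (inv_mem (avoids_x hC)) hYx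
  have hq : ∀ _ : α, 1 ∈ supported {x}ᶜ := fun _ => one_mem _
  calc AutEquivalent (of x ^ 2 * A * Y * B * Y⁻¹ * C) (A * Y * B * Y⁻¹ * C * of x ^ 2) := by
        simpa only [mul_assoc] using AutEquivalent.mul_comm (of x ^ 2) (A * Y * B * Y⁻¹ * C)
    AutEquivalent _ (A * Y * (B * of x * C⁻¹) * Y * of x) := ⟨biTransvection hp hq, by
        simp only [map_mul, map_inv, pow_two,
          biTransvection_of hp hq (not_not_intro (Set.mem_singleton x)),
          biTransvection_of_mem_supported hp hq (avoids_x hA),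
          biTransvection_of_mem_supported hp hq (avoids_x hB),
          biTransvection_of_mem_supported hp hq (avoids_x hC),
          biTransvection_of_mem_supported hp hq hYx]
        group⟩
    AutEquivalent _ (of y ^ 2 * A * (B * of x * C⁻¹)⁻¹ * of x) :=
        autEquivalent_collect hY (avoids_y hA)
          (mul_mem (mul_mem (avoids_y hB) hx) (inv_mem (avoids_y hC))) hx
    _ = of y ^ 2 * A * C * (of x)⁻¹ * B⁻¹ * of x := by group

end Collecting

section QuadraticWords

variable {α : Type*}

theorem squareProd_mem_supported {S : Set α} {ps : List α} (h : ∀ i ∈ ps, i ∈ S) :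
    squareProd ps ∈ supported S := by
  refine list_prod_mem fun g hg => ?_
  obtain ⟨i, hi, rfl⟩ := List.mem_map.mp hg
  exact pow_mem (of_mem_supported (h i hi)) 2

theorem exists_eq_append_of_not_nodup {L : List α} (h : ¬ L.Nodup) :
    ∃ v A B C, L = A ++ v :: (B ++ v :: C) := by
  obtain ⟨v, hv⟩ := List.exists_duplicate_iff_not_nodup.mpr h
  obtain ⟨r, s, rfl, hr, hs⟩ := List.cons_sublist_iff.mp (List.duplicate_iff_sublist.mp hv)
  obtain ⟨A, B, rfl⟩ := List.append_of_mem hr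
  obtain ⟨B', C, rfl⟩ := List.append_of_mem (List.singleton_sublist.mp hs)
  exact ⟨v, A, B ++ B', C, by simp⟩

theorem flipLetter_mem_invRev {v : α × Bool} {L : List (α × Bool)} :
    flipLetter v ∈ FreeGroup.invRev L ↔ v ∈ L := by
  rcases v with ⟨x, b⟩
  simp [FreeGroup.invRev, flipLetter]

theorem map_fst_invRev (L : List (α × Bool)) :
    (FreeGroup.invRev L).map Prod.fst = (L.map Prod.fst).reverse := by
  simp [FreeGroup.invRev, Function.comp_def]

variable [DecidableEq α]

/-- The word `squareProd ps * mk L` is quadratic: each generator occurs in it either not at all or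
exactly twice. -/
def IsQuadratic (ps : List α) (L : List (α × Bool)) : Prop :=
  ∀ i, (L.map Prod.fst).count i + 2 * ps.count i = 0 ∨ (L.map Prod.fst).count i + 2 * ps.count i = 2

theorem IsQuadratic.nodup {ps : List α} {L : List (α × Bool)} (h : IsQuadratic ps L) :
    ps.Nodup :=
  List.nodup_iff_count_le_one.mpr fun i => by have := h i; omega

theorem IsQuadratic.ne_of_mem {ps : List α} {L : List (α × Bool)} {x : α}
    (h : IsQuadratic (x :: ps) L) : (∀ i ∈ ps, i ≠ x) ∧ ∀ v ∈ L, v.1 ≠ x := by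
  have := h x
  rw [List.count_cons_self] at this
  have x_notMem_ps : x ∉ ps := List.count_eq_zero.mp (by omega)
  have x_notMem_L : x ∉ L.map Prod.fst := List.count_eq_zero.mp (by omega)
  exact ⟨fun i hi => ne_of_mem_of_not_mem hi x_notMem_ps,
    fun v hv => ne_of_mem_of_not_mem (List.mem_map_of_mem hv) x_notMem_L⟩

theorem IsQuadratic.collect {ps : List α} {v : α × Bool} {A B C : List (α × Bool)}
    (h : IsQuadratic ps (A ++ v :: (B ++ v :: C))) :
    IsQuadratic (v.1 :: ps) (A ++ FreeGroup.invRev B ++ C) := fun i => by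
  have := h i
  simp only [List.map_append, List.map_cons, List.count_append, List.count_cons,
    map_fst_invRev, List.count_reverse] at this ⊢
  split_ifs at this ⊢ <;> omega

theorem IsQuadratic.exists_collected {ps : List α} {L : List (α × Bool)} (h : IsQuadratic ps L)
    (hL : ¬ L.Nodup) :
    ∃ ps' L', ps' ≠ [] ∧ IsQuadratic ps' L' ∧ L'.length < L.length ∧
      AutEquivalent (squareProd ps * mk L) (squareProd ps' * mk L') := by
  obtain ⟨v, A, B, C, rfl⟩ := exists_eq_append_of_not_nodup hL
  have h' := h.collect
  obtain ⟨ps_ne, L_ne⟩ := h'.ne_of_mem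
  simp only [List.forall_mem_append] at L_ne
  obtain ⟨⟨A_ne, B_ne⟩, C_ne⟩ := L_ne
  refine ⟨_, _, List.cons_ne_nil _ _, h', by simp, ?_⟩
  have equiv := autEquivalent_collect (mk_letter_eq v)
    (mul_mem (squareProd_mem_supported ps_ne) (mk_mem_supported A_ne))
    (FreeGroup.inv_mk ▸ inv_mem (mk_mem_supported B_ne)) (mk_mem_supported C_ne)
  simpa [mul_assoc, FreeGroup.mul_mk] using equiv

theorem IsQuadratic.flipLetter_mem {ps : List α} {L : List (α × Bool)} (h : IsQuadratic ps L)
    (hL : L.Nodup) {v : α × Bool} (hv : v ∈ L) : flipLetter v ∈ L := by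
  have count_v := h v.1
  rw [((List.perm_cons_erase hv).map Prod.fst).count_eq, List.map_cons, List.count_cons_self]
    at count_v
  obtain ⟨u, hu, huv⟩ := List.mem_map.mp
    (List.count_pos_iff.mp (by omega : 0 < ((L.erase v).map Prod.fst).count v.1))
  rw [hL.mem_erase_iff] at hu
  suffices u = flipLetter v from this ▸ hu.2
  rcases u with ⟨x, b⟩
  obtain rfl : x = v.1 := huv
  refine Prod.ext rfl (Bool.eq_not_of_ne fun hb => hu.1 (Prod.ext rfl hb))

theorem IsQuadratic.exists_innermost {ps : List α} {L : List (α × Bool)} (h : IsQuadratic ps L)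
    (hL : L.Nodup) (hne : L ≠ []) :
    ∃ v A B C, L = A ++ v :: (B ++ flipLetter v :: C) ∧
      (B = [] ∨ ∃ z ∈ B, flipLetter z ∈ A ++ C) := by
  classical
  have exists_pair : ∃ n v A B C, L = A ++ v :: (B ++ flipLetter v :: C) ∧ B.length = n := by
    obtain ⟨v, R, rfl⟩ := List.exists_cons_of_ne_nil hne
    have := h.flipLetter_mem hL (List.mem_cons_self (a := v))
    obtain ⟨B, C, rfl⟩ := List.append_of_mem
      (List.mem_of_ne_of_mem (flipLetter_ne v) this)
    exact ⟨_, v, [], B, C, rfl, rfl⟩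
  obtain ⟨v, A, B, C, hABC, hB⟩ := Nat.find_spec exists_pair
  refine ⟨v, A, B, C, hABC, ?_⟩
  rcases B with _ | ⟨z, B⟩
  · exact Or.inl rfl
  refine Or.inr ⟨z, List.mem_cons_self, ?_⟩
  have hz := h.flipLetter_mem hL (v := z) (by simp [hABC])
  have z_ne : z ≠ v ∧ z ≠ flipLetter v := by
    rw [hABC] at hL
    constructor <;> rintro rfl <;> simp [List.nodup_append] at hL
  have flip_notMem : flipLetter z ∉ B := fun hzB => by
    obtain ⟨B₁, B₂, rfl⟩ := List.append_of_mem hzB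
    refine Nat.find_min exists_pair (m := B₁.length) ?_
      ⟨z, A ++ [v], B₁, B₂ ++ flipLetter v :: C, by simp [hABC], rfl⟩
    rw [← hB]
    simp
  rw [hABC] at hz
  simpa [flipLetter_eq_iff, z_ne, flip_notMem, (flipLetter_ne z).symm] using hz

theorem IsQuadratic.map_eq_one {L : List (α × Bool)} (h : IsQuadratic [] L) (hL : L.Nodup)
    {G : Type*} [CommGroup G] (φ : FreeGroup α →* G) : φ (mk L) = 1 := by
  have mk_eq_prod : mk L = (L.map fun v => mk [v]).prod := by
    clear hL h
    induction L with
    | nil => rfl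
    | cons v L ih => rw [List.map_cons, List.prod_cons, ← ih, FreeGroup.mul_mk]; rfl
  rw [mk_eq_prod, map_list_prod, List.map_map, ← List.prod_toFinset _ hL]
  refine Finset.prod_involution (fun v _ => flipLetter v) (fun v _ => ?_)
    (fun v _ _ => flipLetter_ne v) (fun v hv => ?_) (fun v _ => flipLetter_flipLetter v)
  · simp only [Function.comp_apply, mk_flipLetter, map_inv, mul_inv_cancel]
  · exact List.mem_toFinset.mpr (h.flipLetter_mem hL (List.mem_toFinset.mp hv))

theorem IsQuadratic.swap {ps : List α} {x : α} {v : α × Bool} {A B C : List (α × Bool)}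
    (h : IsQuadratic (x :: ps) (A ++ v :: (B ++ flipLetter v :: C))) :
    IsQuadratic (v.1 :: ps)
      (A ++ C ++ flipLetter (x, true) :: (FreeGroup.invRev B ++ [(x, true)])) := fun i => by
  have := h i
  simp only [List.map_append, List.map_cons, List.map_nil, List.count_append, List.count_cons,
    List.count_nil, flipLetter, map_fst_invRev, List.count_reverse] at this ⊢
  grind

theorem IsQuadratic.autEquivalent_swapped {ps : List α} {x : α} {v : α × Bool}
    {A B C : List (α × Bool)}
    (h : IsQuadratic (x :: ps) (A ++ v :: (B ++ flipLetter v :: C))) :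
    AutEquivalent (squareProd (x :: ps) * mk (A ++ v :: (B ++ flipLetter v :: C)))
      (squareProd (v.1 :: ps) *
        mk (A ++ C ++ flipLetter (x, true) :: (FreeGroup.invRev B ++ [(x, true)]))) := by
  obtain ⟨ps_ne_x, ne_x⟩ := h.ne_of_mem
  obtain ⟨ps_ne_v, ne_v⟩ := h.swap.ne_of_mem
  have mem_supported {M : List (α × Bool)} (hM : ∀ u ∈ M, u.1 ≠ x ∧ u.1 ≠ v.1) :
      mk M ∈ supported {x, v.1}ᶜ := mk_mem_supported fun u hu => by simpa using hM u hu
  simp only [List.forall_mem_append, List.forall_mem_cons] at ne_x ne_v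
  have equiv := autEquivalent_swap ne_x.2.1.symm (mk_letter_eq v)
    (mul_mem (squareProd_mem_supported (ps := ps) fun i hi => by simp [ps_ne_x i hi, ps_ne_v i hi])
      (mem_supported (M := A) fun u hu => ⟨ne_x.1 u hu, ne_v.1.1 u hu⟩))
    (mem_supported (M := B) fun u hu => ⟨ne_x.2.2.1 u hu,
      ne_v.2.2.1 (flipLetter u) (flipLetter_mem_invRev.mpr hu)⟩)
    (mem_supported (M := C) fun u hu => ⟨ne_x.2.2.2.2 u hu, ne_v.1.2 u hu⟩)
  have mk_swapped : mk (A ++ C ++ flipLetter (x, true) :: (FreeGroup.invRev B ++ [(x, true)])) =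
      mk A * mk C * (of x)⁻¹ * (mk B)⁻¹ * of x := by
    simp only [of, FreeGroup.inv_mk, FreeGroup.mul_mk, List.append_assoc]
    rfl
  rw [← mk_flipLetter] at equiv
  rw [mk_swapped]
  simpa [mul_assoc, FreeGroup.mul_mk] using equiv

theorem IsQuadratic.exists_reduced {ps : List α} {L : List (α × Bool)} (h : IsQuadratic ps L)
    (hps : ps ≠ []) (hL : L.Nodup) (hne : L ≠ []) :
    ∃ ps' L', ps' ≠ [] ∧ IsQuadratic ps' L' ∧ L'.length < L.length ∧
      AutEquivalent (squareProd ps * mk L) (squareProd ps' * mk L') := by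
  -- Swapping the square of `x` with the innermost pair of `v` makes any letter `z` crossing this
  -- pair occur twice with the same sign, so that it can be collected.
  obtain ⟨x, ps, rfl⟩ := List.exists_cons_of_ne_nil hps
  obtain ⟨v, A, B, C, rfl, rfl | ⟨z, hzB, hz⟩⟩ := h.exists_innermost hL hne
  · refine ⟨x :: ps, A ++ C, hps, fun i => ?_, by simp, ?_⟩
    · have := h i
      simp only [List.map_append, List.map_cons, List.count_append, List.count_cons,
        flipLetter, List.nil_append] at this ⊢
      grind
    · have mk_eq : mk (A ++ v :: ([] ++ flipLetter v :: C)) = mk (A ++ C) :=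
        Quot.sound (FreeGroup.Red.Step.not (x := v.1) (b := v.2))
      rw [mk_eq]
      exact .refl _
  · have not_nodup : ¬ (A ++ C ++ flipLetter (x, true) ::
        (FreeGroup.invRev B ++ [(x, true)])).Nodup := fun hnd => by
      refine List.disjoint_of_nodup_append hnd hz (List.mem_cons_of_mem _ ?_)
      exact List.mem_append_left _ (flipLetter_mem_invRev.mpr hzB)
    obtain ⟨ps', L', hps', h', hlt, hequiv⟩ := h.swap.exists_collected not_nodup
    exact ⟨ps', L', hps', h', hlt.trans_eq (by simp; omega), h.autEquivalent_swapped.trans hequiv⟩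

theorem IsQuadratic.exists_autEquivalent_squareProd {ps : List α} {L : List (α × Bool)}
    (h : IsQuadratic ps L) (hne : ps ≠ [] ∨ ¬ L.Nodup) :
    ∃ qs : List α, qs.Nodup ∧ AutEquivalent (squareProd ps * mk L) (squareProd qs) := by
  induction hn : L.length using Nat.strong_induction_on generalizing ps L with | h n ih => ?_
  subst hn
  obtain rfl | hL := eq_or_ne L []
  · exact ⟨ps, h.nodup, by simpa [← FreeGroup.one_eq_mk] using .refl _⟩
  obtain ⟨ps', L', hps', h', hlt, hequiv⟩ : ∃ ps' L', ps' ≠ [] ∧ IsQuadratic ps' L' ∧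
      L'.length < L.length ∧ AutEquivalent (squareProd ps * mk L) (squareProd ps' * mk L') := by
    by_cases hnd : L.Nodup
    · exact h.exists_reduced (hne.resolve_right (not_not_intro hnd)) hnd hL
    · exact h.exists_collected hnd
  obtain ⟨qs, hqs, hequiv'⟩ := ih L'.length hlt h' (.inl hps') rfl
  exact ⟨qs, hqs, hequiv.trans hequiv'⟩

end QuadraticWords

section Classification

variable {α : Type*}

theorem AutEquivalent.of_length_eq {ps qs : List α} (hps : ps.Nodup) (hqs : qs.Nodup)
    (h : ps.length = qs.length) : AutEquivalent (squareProd ps) (squareProd qs) := by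
  let x : Fin ps.length ↪ α := ⟨ps.get, hps.injective_get⟩
  let y : Fin ps.length ↪ α :=
    ⟨fun i => qs.get (i.cast h), hqs.injective_get.comp (Fin.cast_injective h)⟩
  have := Equiv.Perm.isMultiplyPretransitive α ps.length
  obtain ⟨e, he⟩ := MulAction.exists_smul_eq (Equiv.Perm α) x y
  have map_eq : ps.map e = qs := List.ext_getElem (by simp [h]) fun i hi _ => by
    rw [List.length_map] at hi
    simpa [x, y] using DFunLike.congr_fun he ⟨i, hi⟩
  refine ⟨FreeGroup.freeGroupCongr e, ?_⟩
  rw [← map_eq]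
  simp [squareProd, map_list_prod, Function.comp_def]

theorem SameWordMeasure.not_nodup [Finite α] [DecidableEq α] {ps : List α} (hps : ps.Nodup)
    (hne : ps ≠ []) {L : List (α × Bool)} (hm : SameWordMeasure (squareProd ps) (mk L))
    (hL : IsQuadratic [] L) : ¬ L.Nodup := by
  intro hnd
  obtain ⟨x, ps, rfl⟩ := List.exists_cons_of_ne_nil hne
  have x_ne : ∀ i ∈ ps, i ≠ x := fun i hi => ne_of_mem_of_not_mem hi (List.nodup_cons.mp hps).1
  let h : α → Multiplicative (ZMod 3) := Pi.mulSingle x (.ofAdd 1)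
  have lift_ne_one : FreeGroup.lift h (squareProd (x :: ps)) ≠ 1 := by
    have lift_tail : FreeGroup.lift h (squareProd ps) = 1 := by
      rw [squareProd, map_list_prod]
      refine List.prod_eq_one fun g hg => ?_
      simp only [List.map_map, List.mem_map, Function.comp_apply] at hg
      obtain ⟨i, hi, rfl⟩ := hg
      simp [h, x_ne i hi]
    rw [squareProd_cons, map_mul, lift_tail, mul_one, map_pow, FreeGroup.lift_apply_of,
      show h x = .ofAdd 1 from Pi.mulSingle_eq_same ..]
    decide
  obtain ⟨h', hh'⟩ := hm.exists_lift_eq h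
  exact lift_ne_one (hh' ▸ hL.map_eq_one hnd _)

/-- The letters of a nonempty word, indexed by `ZMod` of its length so as to be read cyclically. -/
def cyclicLetters (L : List (α × Bool)) [NeZero L.length] (j : ZMod L.length) : α × Bool :=
  L[j.val]'(ZMod.val_lt j)

theorem map_range_cyclicLetters (L : List (α × Bool)) [NeZero L.length] :
    ((List.range L.length).map fun j : ℕ => cyclicLetters L j) = L :=
  List.ext_getElem (by simp) fun j _ hj => by
    simp [cyclicLetters, ZMod.val_natCast, Nat.mod_eq_of_lt hj]

theorem prefixProd_cyclicLetters (L : List (α × Bool)) [NeZero L.length] :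
    prefixProd (cyclicLetters L) L.length = mk L :=
  congrArg mk (map_range_cyclicLetters L)

theorem card_occ_cyclicLetters [DecidableEq α] (L : List (α × Bool)) [NeZero L.length] (i : α) :
    (occ (cyclicLetters L) i).card = (L.map Prod.fst).count i := by
  conv_rhs => rw [← map_range_cyclicLetters L]
  rw [occ, Finset.card_filter,
    ← sum_range_natCast_zmod fun j => if (cyclicLetters L j).1 = i then 1 else 0,
    ← Finset.card_filter, List.map_map, List.count, List.countP_map, List.countP_eq_length_filter]
  change ((List.range L.length).filter _).length = _
  congr 2

theorem SameWordMeasure.exists_quadratic [Finite α] [DecidableEq α] {ps : List α}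
    (hps : ps.Nodup) {w : FreeGroup α} (hm : SameWordMeasure (squareProd ps) w) :
    ∃ L, IsQuadratic [] L ∧ AutEquivalent w (mk L) := by
  let f := Function.argmin fun f : FreeGroup α ≃* FreeGroup α => (f w).norm
  have norm_le (g : FreeGroup α ≃* FreeGroup α) : (f w).norm ≤ (g w).norm :=
    Function.argmin_le (fun f : FreeGroup α ≃* FreeGroup α => (f w).norm) g
  obtain ⟨L, hL⟩ : ∃ L, L = (f w).toWord := ⟨_, rfl⟩
  have mk_L : mk L = f w := by rw [hL, FreeGroup.mk_toWord]
  refine ⟨L, ?_, f, mk_L.symm⟩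
  obtain rfl | L_ne := eq_or_ne L []
  · exact fun _ => .inl rfl
  have : NeZero L.length := ⟨List.length_eq_zero_iff.not.mpr L_ne⟩
  have no_small_cut : NoSmallCut (cyclicLetters L) := by
    refine noSmallCut_of_norm_minimal _ fun g => ?_
    rw [prefixProd_cyclicLetters, mk_L, hL]
    exact norm_le (f.trans g)
  have fox : FoxMultiplicative (prefixProd (cyclicLetters L) L.length) := by
    rw [prefixProd_cyclicLetters, mk_L]
    exact (hm.map_right f).foxMultiplicative hps
  intro i
  simpa [card_occ_cyclicLetters] using no_small_cut.card_occ fox i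

theorem nonorientable_partial_surface_word_profinitely_rigid_general [Finite α] {ps : List α}
    (hps : ps.Nodup) (hne : ps ≠ []) {w' : FreeGroup α}
    (hm : SameWordMeasure (squareProd ps) w') :
    ∃ f : FreeGroup α ≃* FreeGroup α, f (squareProd ps) = w' := by
  classical
  obtain ⟨L, hL, f, hf⟩ := hm.exists_quadratic hps
  have hmL := hf ▸ hm.map_right f
  obtain ⟨qs, hqs, g, hg⟩ :=
    hL.exists_autEquivalent_squareProd (.inr (hmL.not_nodup hps hne hL))
  rw [squareProd_nil, one_mul] at hg
  have length_eq := (hg ▸ hmL.map_right g).length_eq hps hqs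
  exact (AutEquivalent.of_length_eq hps hqs length_eq).trans
    (AutEquivalent.symm (.trans ⟨f, hf⟩ ⟨g, hg⟩))

end Classification

/-- **Profinite rigidity of non-orientable partial surface words** (Corollary D).
If `w = x₁² x₂² ⋯ xₙ²` (with `n < k`) and `w' ∈ F_k` induces the same word measure as `w`
on every finite group, then `w'` lies in the `Aut(F_k)`-orbit of `w`. -/
theorem nonorientable_partial_surface_word_profinitely_rigid
    (k n : ℕ) (hn : 0 < n) (hk : n < k)
    (w w' : FreeGroup (Fin k))
    (hw : w = (List.ofFn fun i : Fin n =>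
      FreeGroup.of (⟨i.1, by have := i.2; omega⟩ : Fin k) ^ 2).prod)
    (hmeas : ∀ (G : Type) [Group G] [Finite G] (g : G),
      Nat.card {h : Fin k → G // FreeGroup.lift h w = g} =
        Nat.card {h : Fin k → G // FreeGroup.lift h w' = g}) :
    ∃ f : FreeGroup (Fin k) ≃* FreeGroup (Fin k), f w = w' := by
  let ps : List (Fin k) := List.ofFn fun i : Fin n => ⟨i.1, by have := i.2; omega⟩
  have nodup : ps.Nodup := List.nodup_ofFn.mpr fun i j hij => by simpa [Fin.ext_iff] using hij
  have ne_nil : ps ≠ [] := mt List.ofFn_eq_nil_iff.mp hn.ne'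
  have w_eq : w = squareProd ps := by rw [hw, squareProd, List.map_ofFn]; rfl
  subst w_eq
  exact nonorientable_partial_surface_word_profinitely_rigid_general nodup ne_nil hmeas
end

section
/- For every finite abelian group M there exist natural numbers n, r, m and vectors v_1, …, v_m ∈ ℤ^n, each of whose coordinates lies in {−1, 0, 1}, such that the quotient of ℤ^n by the subgroup generated by v_1, …, v_m is isomorphic to M × ℤ^r. (Every finite system of linear equations over ℤ is equivalent, up to a void extension, to a system of ∂-equations, i.e. equations of the form ±x_{i_1} ± x_{i_2} ± ⋯ ± x_{i_s} = 0 with coefficients ±1.) -/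
/-!
Replace every variable `x i` by sufficiently many copies `x (i, c)`, identified with one another by
the ∂-equations `x (i, c) - x (i, c₀) = 0`. A coefficient `a` of `x i` can then be spelt out as a
sum of `|a|` copies of `x i`, each with the sign of `a`, so every finite system of linear equations
is equivalent to a system of ∂-equations. A finitely generated abelian group is the group of such a
system because `ℤ` is Noetherian.
-/

open QuotientAddGroup

/-- The coefficient vector of a ∂-equation in variables indexed by `ι`: all coefficients lie in
`{-1, 0, 1}`. -/
def IsBoundaryEquation {ι : Type*} (w : ι → ℤ) : Prop :=
  ∀ j, w j = -1 ∨ w j = 0 ∨ w j = 1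

/-- The group of the system of equations `∑ j, u k j • x j = 0`: the quotient by the equations of
`ι → ℤ`, the free abelian group on the variables when `ι` is finite. Equivalence of systems is
isomorphism of their groups. -/
abbrev SystemGroup {μ ι : Type*} (u : μ → ι → ℤ) : Type _ :=
  (ι → ℤ) ⧸ AddSubgroup.closure (Set.range u)

theorem nonempty_quotient_comap_addEquiv {A B : Type*} [AddGroup A] [AddGroup B]
    (f : A →+ B) (hf : Function.Surjective f) (H : AddSubgroup B) [H.Normal] :
    Nonempty (A ⧸ H.comap f ≃+ B ⧸ H) := by
  have hker : ((mk' H).comp f).ker = H.comap f := by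
    rw [← AddMonoidHom.comap_ker, ker_mk']
  exact ⟨(quotientAddEquivOfEq hker.symm).trans
    (quotientKerEquivOfSurjective _ ((mk'_surjective H).comp hf))⟩

theorem nonempty_systemGroup_reindex_addEquiv {μ ι σ τ : Type*} (u : μ → ι → ℤ) (e : σ ≃ μ)
    (f : τ ≃ ι) : Nonempty (SystemGroup (fun i j => u (e i) (f j)) ≃+ SystemGroup u) := by
  let g : (τ → ℤ) ≃+ (ι → ℤ) := AddEquiv.arrowCongr f (AddEquiv.refl ℤ)
  have hg : g ∘ (fun i j => u (e i) (f j)) = u ∘ e := by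
    ext i j
    simp [g]
  refine ⟨QuotientAddGroup.congr _ _ g ?_⟩
  rw [AddMonoidHom.map_closure, AddMonoidHom.coe_coe, ← Set.range_comp, hg, EquivLike.range_comp]

section Copies

variable {ι κ : Type*}

/-- The ∂-equation `x (i, c) - x (i, c₀) = 0`, where `p = (i, c)`: it identifies each copy of the
variable `x i` with a base copy. -/
def copyEquation [DecidableEq ι] [DecidableEq κ] (c₀ : κ) (p : ι × κ) : ι × κ → ℤ :=
  Pi.single p 1 - Pi.single (p.1, c₀) 1

theorem isBoundaryEquation_copyEquation [DecidableEq ι] [DecidableEq κ] (c₀ : κ) (p : ι × κ) :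
    IsBoundaryEquation (copyEquation c₀ p) := by
  intro q
  simp only [copyEquation, Pi.sub_apply, Pi.single_apply]
  split_ifs <;> simp

variable [Fintype κ]

variable (ι κ) in
/-- Identifies the copies `x (i, c)`, `c : κ`, of each variable `x i`: in the resulting equation
the coefficient of `x i` is the sum of the coefficients of its copies. -/
def sumCopies : (ι × κ → ℤ) →+ (ι → ℤ) where
  toFun w i := ∑ c, w (i, c)
  map_zero' := by ext; simp
  map_add' v w := by ext; simp [Finset.sum_add_distrib]

theorem sumCopies_apply (w : ι × κ → ℤ) (i : ι) : sumCopies ι κ w i = ∑ c, w (i, c) := rfl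

theorem exists_isBoundaryEquation_sum_eq {a : ℤ} (ha : a.natAbs ≤ Fintype.card κ) :
    ∃ x : κ → ℤ, IsBoundaryEquation x ∧ ∑ c, x c = a := by
  classical
  obtain ⟨t, -, ht⟩ := Finset.exists_subset_card_eq (s := Finset.univ (α := κ)) ha
  refine ⟨fun c => if c ∈ t then a.sign else 0, fun c => ?_, ?_⟩
  · rcases Int.sign_trichotomy a with h | h | h <;> by_cases hc : c ∈ t <;> simp [h, hc]
  · simp [ht, mul_comm |a|, Int.sign_mul_abs]

theorem exists_isBoundaryEquation_sumCopies_eq {v : ι → ℤ}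
    (hv : ∀ i, (v i).natAbs ≤ Fintype.card κ) :
    ∃ w, IsBoundaryEquation w ∧ sumCopies ι κ w = v := by
  choose x hx hsum using fun i => exists_isBoundaryEquation_sum_eq (hv i)
  exact ⟨fun p => x p.1 p.2, fun p => hx p.1 p.2, funext hsum⟩

theorem sumCopies_surjective [Nonempty κ] : Function.Surjective (sumCopies ι κ) := by
  classical
  intro v
  let c₀ : κ := Classical.arbitrary κ
  refine ⟨fun p => if p.2 = c₀ then v p.1 else 0, ?_⟩
  ext i
  simp [sumCopies_apply]

variable [DecidableEq ι] [DecidableEq κ]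

theorem sumCopies_copyEquation (c₀ : κ) (p : ι × κ) : sumCopies ι κ (copyEquation c₀ p) = 0 := by
  ext i
  by_cases h : i = p.1 <;>
    simp [sumCopies_apply, copyEquation, Pi.single_apply, Prod.ext_iff, h]

theorem sum_smul_copyEquation [Fintype ι] (c₀ : κ) (w : ι × κ → ℤ) :
    ∑ p, w p • copyEquation c₀ p = w - ∑ i, sumCopies ι κ w i • Pi.single (i, c₀) 1 := by
  simp only [copyEquation, smul_sub, Finset.sum_sub_distrib, sumCopies_apply, Finset.sum_smul,
    Fintype.sum_prod_type]
  congr 1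
  rw [← Fintype.sum_prod_type' fun i c => w (i, c) • (Pi.single (i, c) 1 : ι × κ → ℤ)]
  exact (pi_eq_sum_univ' w).symm

theorem ker_sumCopies [Finite ι] (c₀ : κ) :
    (sumCopies ι κ).ker = AddSubgroup.closure (Set.range (copyEquation c₀)) := by
  cases nonempty_fintype ι
  apply le_antisymm
  · intro w hw
    have hsum : ∑ p, w p • copyEquation c₀ p = w := by
      rw [sum_smul_copyEquation, AddMonoidHom.mem_ker.1 hw]
      simp
    rw [← hsum]
    exact sum_mem fun p _ => zsmul_mem (AddSubgroup.subset_closure (Set.mem_range_self p)) _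
  · rw [AddSubgroup.closure_le]
    rintro _ ⟨p, rfl⟩
    exact sumCopies_copyEquation c₀ p

theorem closure_range_elim_copyEquation [Finite ι] {μ : Type*} (c₀ : κ) (w : μ → ι × κ → ℤ) :
    AddSubgroup.closure (Set.range (Sum.elim w (copyEquation c₀))) =
      (AddSubgroup.closure (Set.range (sumCopies ι κ ∘ w))).comap (sumCopies ι κ) := by
  rw [Set.Sum.elim_range, AddSubgroup.closure_union, ← ker_sumCopies, ← AddSubgroup.comap_map_eq,
    AddMonoidHom.map_closure, Set.range_comp]

end Copies

theorem exists_isBoundaryEquation_systemGroup_addEquiv {μ ι : Type*} [Finite μ] [Finite ι]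
    (u : μ → ι → ℤ) :
    ∃ (m n : ℕ) (v : Fin m → Fin n → ℤ),
      (∀ i, IsBoundaryEquation (v i)) ∧ Nonempty (SystemGroup v ≃+ SystemGroup u) := by
  classical
  obtain ⟨N, hN⟩ := Finite.exists_le fun p : μ × ι => (u p.1 p.2).natAbs
  have hcard (k : μ) (i : ι) : (u k i).natAbs ≤ Fintype.card (Fin (N + 1)) := by
    simpa using (hN (k, i)).trans N.le_succ
  choose w hw hwu using fun k => exists_isBoundaryEquation_sumCopies_eq (hcard k)
  obtain rfl : sumCopies ι (Fin (N + 1)) ∘ w = u := funext hwu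
  let v := Sum.elim w (copyEquation 0)
  have hv : ∀ k, IsBoundaryEquation (v k) := Sum.rec hw (isBoundaryEquation_copyEquation 0)
  let e := (Finite.equivFin (μ ⊕ ι × Fin (N + 1))).symm
  let f := (Finite.equivFin (ι × Fin (N + 1))).symm
  obtain ⟨reindex⟩ := nonempty_systemGroup_reindex_addEquiv v e f
  obtain ⟨identifyCopies⟩ := nonempty_quotient_comap_addEquiv (sumCopies ι (Fin (N + 1)))
    sumCopies_surjective (AddSubgroup.closure (Set.range (sumCopies ι (Fin (N + 1)) ∘ w)))
  exact ⟨_, _, fun i j => v (e i) (f j), fun i j => hv (e i) (f j),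
    ⟨(reindex.trans (quotientAddEquivOfEq (closure_range_elim_copyEquation 0 w))).trans
      identifyCopies⟩⟩

theorem exists_systemGroup_addEquiv (M : Type*) [AddCommGroup M] [AddGroup.FG M] :
    ∃ (m n : ℕ) (u : Fin m → Fin n → ℤ), Nonempty (SystemGroup u ≃+ M) := by
  have : Module.Finite ℤ M := Module.Finite.iff_addGroup_fg.2 ‹_›
  obtain ⟨n, f, hf⟩ := Module.Finite.exists_fin' ℤ M
  obtain ⟨m, u, hu⟩ := Submodule.fg_iff_exists_fin_generating_family.1
    (IsNoetherian.noetherian f.ker)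
  have hker : AddSubgroup.closure (Set.range u) = f.toAddMonoidHom.ker := by
    rw [← Submodule.span_int_eq_addSubgroupClosure, hu, LinearMap.ker_toAddSubgroup]
  exact ⟨m, n, u, ⟨(quotientAddEquivOfEq hker).trans (quotientKerEquivOfSurjective _ hf)⟩⟩

theorem finite_abelian_group_via_boundary_equations_general
    (M : Type*) [AddCommGroup M] [AddGroup.FG M] :
    ∃ (n m : ℕ) (v : Fin m → (Fin n → ℤ)),
      (∀ i j, v i j = -1 ∨ v i j = 0 ∨ v i j = 1) ∧
      Nonempty (((Fin n → ℤ) ⧸ AddSubgroup.closure (Set.range v)) ≃+ M) := by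
  obtain ⟨_, _, u, ⟨presentation⟩⟩ := exists_systemGroup_addEquiv M
  obtain ⟨m, n, v, hv, ⟨equivalence⟩⟩ := exists_isBoundaryEquation_systemGroup_addEquiv u
  exact ⟨n, m, v, hv, ⟨equivalence.trans presentation⟩⟩

/-- **Every finite abelian group is cut out by a system of ∂-equations**: for every finite
abelian group `M` there are `n, r, m` and vectors `v₁, …, v_m ∈ ℤⁿ` with coordinates in
`{-1, 0, 1}` such that `ℤⁿ / ⟨v₁, …, v_m⟩ ≅ M × ℤ^r`. -/
theorem finite_abelian_group_via_boundary_equations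
    (M : Type) [AddCommGroup M] [Finite M] :
    ∃ (n r m : ℕ) (v : Fin m → (Fin n → ℤ)),
      (∀ i j, v i j = -1 ∨ v i j = 0 ∨ v i j = 1) ∧
      Nonempty (((Fin n → ℤ) ⧸ AddSubgroup.closure (Set.range v)) ≃+ M × (Fin r → ℤ)) := by
  obtain ⟨n, m, v, hv, ⟨e⟩⟩ := finite_abelian_group_via_boundary_equations_general M
  exact ⟨n, 0, m, v, hv, ⟨e.trans AddEquiv.prodUnique.symm⟩⟩
end

section
/- Fix an integer n ≥ 1 and integers r_1, …, r_n ≥ 2. Let A be the abelian group with generators x_{i,j} for 1 ≤ i ≤ n and 1 ≤ j ≤ 3r_i − 2, subject to the following relations: for each i, the relation x_{i,1} + x_{i,2} + ⋯ + x_{i,r_i} = 0; and for each i and each 1 ≤ j ≤ r_i − 1, the three relations x_{i,r_i+2j−1} + x_{i,r_i+2j} = 0, x_{i,r_i+2j−2} + x_{i,r_i+2j−1} = 0, and x_{i,j} + x_{i,r_i+2j−1} = 0. Then A is isomorphic to the direct sum ℤ/r_1ℤ ⊕ ℤ/r_2ℤ ⊕ ⋯ ⊕ ℤ/r_nℤ.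 -/
/-- Generators `x_{i,j}` with `1 ≤ i ≤ n` (0-indexed: `i : Fin n`) and
`1 ≤ j ≤ 3 rᵢ - 2` (0-indexed: `j : Fin (3 * r i - 2)`). -/
abbrev TorsionGens (n : ℕ) (r : Fin n → ℕ) : Type := (i : Fin n) × Fin (3 * r i - 2)

/-- The basis vector corresponding to the generator `x_{i,j}` (`j` is 0-indexed). -/
noncomputable def xgen {n : ℕ} {r : Fin n → ℕ} (i : Fin n) (j : ℕ) (hj : j < 3 * r i - 2) :
    TorsionGens n r →₀ ℤ :=
  Finsupp.single ⟨i, ⟨j, hj⟩⟩ 1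

/-- The relation vectors of the paper's Table 1 (translated to 0-indexed `j`):
for each `i`, the relation `x_{i,1} + ⋯ + x_{i,rᵢ} = 0`, and for each `i` and each
`1 ≤ j ≤ rᵢ - 1` the relations `x_{i,rᵢ+2j-1} + x_{i,rᵢ+2j} = 0`,
`x_{i,rᵢ+2j-2} + x_{i,rᵢ+2j-1} = 0` and `x_{i,j} + x_{i,rᵢ+2j-1} = 0`. -/
def torsionRels (n : ℕ) (r : Fin n → ℕ) (hr : ∀ i, 2 ≤ r i) :
    Set (TorsionGens n r →₀ ℤ) :=
  (Set.range fun i : Fin n =>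
      ∑ j : Fin (r i), xgen i j.1 (by have := j.2; have := hr i; omega)) ∪
  (Set.range fun p : (i : Fin n) × Fin (r i - 1) =>
      xgen p.1 (r p.1 + 2 * p.2.1) (by have := p.2.2; have := hr p.1; omega) +
        xgen p.1 (r p.1 + 2 * p.2.1 + 1) (by have := p.2.2; have := hr p.1; omega)) ∪
  (Set.range fun p : (i : Fin n) × Fin (r i - 1) =>
      xgen p.1 (r p.1 + 2 * p.2.1 - 1) (by have := p.2.2; have := hr p.1; omega) +
        xgen p.1 (r p.1 + 2 * p.2.1) (by have := p.2.2; have := hr p.1; omega)) ∪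
  (Set.range fun p : (i : Fin n) × Fin (r i - 1) =>
      xgen p.1 p.2.1 (by have := p.2.2; have := hr p.1; omega) +
        xgen p.1 (r p.1 + 2 * p.2.1) (by have := p.2.2; have := hr p.1; omega))

/-!
For every abelian group `G`, the homomorphisms from either group to `G` are the families
`g : Fin n → G` with `r i • g i = 0`. For the quotient, work in one block of size `r`
(0-indexed): the second and third kinds of relations say that consecutive terms of
`x_{r-1}, …, x_{3r-3}` sum to zero, so `x_{r-1+k} = (-1)ᵏ x_{r-1}`; the fourth kind then gives
`x_j = -x_{r+2j} = x_{r-1}` for `j < r - 1`, and the first becomes `r x_{r-1} = 0`.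
-/

section PiZMod

variable {ι G : Type*} [DecidableEq ι] [AddCommGroup G] {r : ι → ℕ}

/-- The homomorphism out of `∏ i, ℤ/rᵢℤ` determined by elements `g i` annihilated by `r i`. -/
noncomputable def piZModLift [Fintype ι] (g : ι → G) (hg : ∀ i, r i • g i = 0) :
    ((i : ι) → ZMod (r i)) →+ G :=
  ∑ i, (ZMod.lift (r i) ⟨zmultiplesHom G (g i), by simpa using hg i⟩).comp
    (Pi.evalAddMonoidHom _ i)

theorem piZModLift_single_one [Fintype ι] (g : ι → G) (hg : ∀ i, r i • g i = 0) (i : ι) :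
    piZModLift g hg (Pi.single i 1) = g i := by
  rw [piZModLift, AddMonoidHom.finsetSum_apply, Finset.sum_eq_single i]
  · simpa using ZMod.lift_coe (r i) ⟨zmultiplesHom G (g i), by simpa using hg i⟩ 1
  · intro j _ hj
    simp [Pi.single_eq_of_ne hj]
  · simp

theorem piZMod_hom_ext [Finite ι] {φ ψ : ((i : ι) → ZMod (r i)) →+ G}
    (h : ∀ i, φ (Pi.single i 1) = ψ (Pi.single i 1)) : φ = ψ := by
  refine AddMonoidHom.functions_ext _ _ _ fun i x => ?_
  obtain ⟨m, rfl⟩ := ZMod.intCast_surjective x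
  have single_intCast :
      (Pi.single i (m : ZMod (r i)) : (i : ι) → ZMod (r i)) = m • Pi.single i 1 := by
    rw [← Pi.single_smul, zsmul_one]
  rw [single_intCast, map_zsmul, map_zsmul, h i]

theorem nsmul_pi_single_one_eq_zero (i : ι) :
    r i • (Pi.single i 1 : (i : ι) → ZMod (r i)) = 0 := by
  rw [← Pi.single_smul, nsmul_one, ZMod.natCast_self, Pi.single_zero]

end PiZMod

section Block

variable {G : Type*} [AddCommGroup G]

theorem neg_one_pow_smul_add_succ (k : ℕ) (g : G) :
    (-1 : ℤ) ^ k • g + (-1 : ℤ) ^ (k + 1) • g = 0 := by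
  rw [pow_succ, mul_neg_one, neg_smul, add_neg_cancel]

theorem eq_neg_one_pow_smul_of_add_succ_eq_zero {y : ℕ → G} {m : ℕ}
    (h : ∀ k < m, y k + y (k + 1) = 0) {k : ℕ} (hk : k ≤ m) : y k = (-1 : ℤ) ^ k • y 0 := by
  induction k with
  | zero => rw [pow_zero, one_smul]
  | succ k ih =>
    have step := h k hk
    rw [ih (by omega)] at step
    exact add_left_cancel (step.trans (neg_one_pow_smul_add_succ k (y 0)).symm)

/-- The relations of one block of size `r`, for a family in an abelian group, of which only the
terms `x 0, …, x (3 * r - 3)` matter. The field `path` merges the relations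
`x_{r+2j-1} + x_{r+2j} = 0` and `x_{r+2j-2} + x_{r+2j-1} = 0` of Table 1. -/
structure BlockRelations (r : ℕ) (x : ℕ → G) : Prop where
  sum : ∑ j ∈ Finset.range r, x j = 0
  path : ∀ k < 2 * (r - 1), x (r - 1 + k) + x (r - 1 + k + 1) = 0
  head : ∀ j < r - 1, x j + x (r + 2 * j) = 0

variable {r : ℕ} {x : ℕ → G}

namespace BlockRelations

theorem eq_neg_one_pow_smul (h : BlockRelations r x) {k : ℕ} (hk : k ≤ 2 * (r - 1)) :
    x (r - 1 + k) = (-1 : ℤ) ^ k • x (r - 1) :=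
  eq_neg_one_pow_smul_of_add_succ_eq_zero (y := fun k => x (r - 1 + k)) h.path hk

theorem eq_of_lt (h : BlockRelations r x) {j : ℕ} (hj : j < r) : x j = x (r - 1) := by
  obtain hlt | rfl : j < r - 1 ∨ j = r - 1 := by omega
  · have odd_term : x (r + 2 * j) = -x (r - 1) := by
      have hpath := h.eq_neg_one_pow_smul (k := 2 * j + 1) (by omega)
      rwa [show r - 1 + (2 * j + 1) = r + 2 * j by omega,
        (odd_two_mul_add_one j).neg_one_pow, neg_one_smul] at hpath
    rw [eq_neg_of_add_eq_zero_left (h.head j hlt), odd_term, neg_neg]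
  · rfl

end BlockRelations

-- The truncated exponent `j + 1 - r` is `0` for `j < r`, where the sign is constantly `1`.
theorem blockRelations_iff :
    BlockRelations r x ↔ r • x (r - 1) = 0 ∧
      ∀ j < 3 * r - 2, x j = (-1 : ℤ) ^ (j + 1 - r) • x (r - 1) := by
  constructor
  · intro h
    refine ⟨?_, fun j hj => ?_⟩
    · rw [← h.sum, Finset.sum_eq_card_nsmul fun j hj => h.eq_of_lt (Finset.mem_range.1 hj),
        Finset.card_range]
    · rcases lt_or_ge j r with hjr | hjr
      · rw [Nat.sub_eq_zero_of_le hjr, pow_zero, one_smul, h.eq_of_lt hjr]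
      · rw [← h.eq_neg_one_pow_smul (by omega), show r - 1 + (j + 1 - r) = j by omega]
  · rintro ⟨torsion, hx⟩
    have head_const : ∀ j < r, x j = x (r - 1) := fun j hj => by
      rw [hx j (by omega), Nat.sub_eq_zero_of_le hj, pow_zero, one_smul]
    refine ⟨?_, fun k hk => ?_, fun j hj => ?_⟩
    · rw [Finset.sum_eq_card_nsmul fun j hj => head_const j (Finset.mem_range.1 hj),
        Finset.card_range, torsion]
    · rw [hx (r - 1 + k) (by omega), hx (r - 1 + k + 1) (by omega),
        show r - 1 + k + 1 - r = k by omega, show r - 1 + k + 1 + 1 - r = k + 1 by omega,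
        neg_one_pow_smul_add_succ]
    · rw [head_const j (by omega), hx (r + 2 * j) (by omega),
        show r + 2 * j + 1 - r = 2 * j + 1 by omega,
        (odd_two_mul_add_one j).neg_one_pow, neg_one_smul, add_neg_cancel]

end Block

section Quotient

variable {n : ℕ} {r : Fin n → ℕ} {hr : ∀ i, 2 ≤ r i} {G : Type*} [AddCommGroup G]

/-- The generator `x_{i,j}` (`j` is 0-indexed), extended by zero to all natural numbers `j` so
that a block of generators is a plain sequence. -/
noncomputable def xgenOrZero (r : Fin n → ℕ) (i : Fin n) (j : ℕ) : TorsionGens n r →₀ ℤ :=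
  if hj : j < 3 * r i - 2 then xgen i j hj else 0

theorem xgenOrZero_of_lt {i : Fin n} {j : ℕ} (hj : j < 3 * r i - 2) :
    xgenOrZero r i j = xgen i j hj :=
  dif_pos hj

theorem forall_mem_torsionRels_map_eq_zero_iff {f : (TorsionGens n r →₀ ℤ) →+ G} :
    (∀ v ∈ torsionRels n r hr, f v = 0) ↔
      ∀ i, BlockRelations (r i) fun j => f (xgenOrZero r i j) := by
  have sum_eq (i : Fin n) : ∑ j : Fin (r i), f (xgenOrZero r i j) =
      ∑ j ∈ Finset.range (r i), f (xgenOrZero r i j) :=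
    Fin.sum_univ_eq_sum_range (fun j => f (xgenOrZero r i j)) (r i)
  simp only [torsionRels, Set.mem_union, or_imp, forall_and, Set.forall_mem_range, Sigma.forall,
    Fin.forall_iff (n := r _ - 1), map_sum, map_add, ← xgenOrZero_of_lt, sum_eq]
  constructor
  · rintro ⟨⟨⟨hsum, hodd⟩, heven⟩, hhead⟩ i
    refine ⟨hsum i, fun k hk => ?_, hhead i⟩
    have := hr i
    rcases k.even_or_odd' with ⟨m, rfl | rfl⟩
    · convert heven i m (by omega) using 4 <;> omega
    · convert hodd i m (by omega) using 4 <;> omega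
  · intro h
    refine ⟨⟨⟨fun i => (h i).sum, fun i k hk => ?_⟩, fun i k hk => ?_⟩, fun i => (h i).head⟩
    · have := hr i
      convert (h i).path (2 * k + 1) (by omega) using 4 <;> omega
    · have := hr i
      convert (h i).path (2 * k) (by omega) using 4 <;> omega

/-- The abelian group presented by the relations of Table 1. -/
abbrev TorsionQuotient (n : ℕ) (r : Fin n → ℕ) (hr : ∀ i, 2 ≤ r i) : Type :=
  (TorsionGens n r →₀ ℤ) ⧸ AddSubgroup.closure (torsionRels n r hr)

namespace TorsionQuotient

/-- The class of `x_{i,rᵢ}` (index `r i - 1` when counting from `0`), which generates the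
`i`-th cyclic summand. -/
noncomputable def gen (hr : ∀ i, 2 ≤ r i) (i : Fin n) : TorsionQuotient n r hr :=
  QuotientAddGroup.mk (xgenOrZero r i (r i - 1))

theorem blockRelations_mk (i : Fin n) :
    BlockRelations (r i) fun j => (QuotientAddGroup.mk (xgenOrZero r i j) :
      TorsionQuotient n r hr) :=
  forall_mem_torsionRels_map_eq_zero_iff (hr := hr) (f := QuotientAddGroup.mk' _).1
    (fun v hv => (QuotientAddGroup.eq_zero_iff v).2 (AddSubgroup.subset_closure hv)) i

theorem nsmul_gen_eq_zero (i : Fin n) : r i • gen hr i = 0 :=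
  (blockRelations_iff.1 (blockRelations_mk i)).1

theorem mk_xgen (i : Fin n) (j : ℕ) (hj : j < 3 * r i - 2) :
    (QuotientAddGroup.mk (xgen i j hj) : TorsionQuotient n r hr) =
      (-1 : ℤ) ^ (j + 1 - r i) • gen hr i := by
  rw [← xgenOrZero_of_lt hj]
  exact (blockRelations_iff.1 (blockRelations_mk i)).2 j hj

theorem hom_ext {φ ψ : TorsionQuotient n r hr →+ G} (h : ∀ i, φ (gen hr i) = ψ (gen hr i)) :
    φ = ψ := by
  refine QuotientAddGroup.addMonoidHom_ext _
    (Finsupp.addHom_ext' fun ⟨i, j⟩ => AddMonoidHom.ext_int ?_)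
  change φ (QuotientAddGroup.mk (xgen i j j.2)) = ψ (QuotientAddGroup.mk (xgen i j j.2))
  rw [mk_xgen, map_zsmul, map_zsmul, h i]

/-- The homomorphism on the free group sending `x_{i,j}` to `± g i`, with the sign that the
relations force. -/
noncomputable def freeLift (r : Fin n → ℕ) (g : Fin n → G) : (TorsionGens n r →₀ ℤ) →+ G :=
  Finsupp.liftAddHom fun p => zmultiplesHom G ((-1 : ℤ) ^ (p.2.1 + 1 - r p.1) • g p.1)

theorem freeLift_xgenOrZero (g : Fin n → G) {i : Fin n} {j : ℕ} (hj : j < 3 * r i - 2) :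
    freeLift r g (xgenOrZero r i j) = (-1 : ℤ) ^ (j + 1 - r i) • g i := by
  simp [freeLift, xgenOrZero_of_lt hj, xgen]

theorem freeLift_xgenOrZero_pred (hr : ∀ i, 2 ≤ r i) (g : Fin n → G) (i : Fin n) :
    freeLift r g (xgenOrZero r i (r i - 1)) = g i := by
  have := hr i
  rw [freeLift_xgenOrZero g (by omega), Nat.sub_eq_zero_of_le (by omega), pow_zero, one_smul]

theorem freeLift_eq_zero_of_mem_torsionRels {g : Fin n → G} (hg : ∀ i, r i • g i = 0) :
    ∀ v ∈ torsionRels n r hr, freeLift r g v = 0 :=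
  forall_mem_torsionRels_map_eq_zero_iff.2 fun i => blockRelations_iff.2 <| by
    rw [freeLift_xgenOrZero_pred hr]
    exact ⟨hg i, fun _ hj => freeLift_xgenOrZero g hj⟩

/-- The homomorphism out of the quotient determined by elements `g i` annihilated by `r i`. -/
noncomputable def lift (hr : ∀ i, 2 ≤ r i) (g : Fin n → G) (hg : ∀ i, r i • g i = 0) :
    TorsionQuotient n r hr →+ G :=
  QuotientAddGroup.lift _ (freeLift r g)
    ((AddSubgroup.closure_le _).2 (freeLift_eq_zero_of_mem_torsionRels hg))

theorem lift_gen (g : Fin n → G) (hg : ∀ i, r i • g i = 0) (i : Fin n) :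
    lift hr g hg (gen hr i) = g i :=
  freeLift_xgenOrZero_pred hr g i

end TorsionQuotient

end Quotient

/-- **The ∂-equation system of Table 1 presents `ℤ/r₁ ⊕ ⋯ ⊕ ℤ/rₙ`**: the quotient of the
free abelian group on the `x_{i,j}` by the listed relations is isomorphic to
`ℤ/r₁ℤ ⊕ ⋯ ⊕ ℤ/rₙℤ`. -/
theorem torsion_relations_quotient (n : ℕ) (hn : 1 ≤ n) (r : Fin n → ℕ)
    (hr : ∀ i, 2 ≤ r i) :
    Nonempty (((TorsionGens n r →₀ ℤ) ⧸ AddSubgroup.closure (torsionRels n r hr)) ≃+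
      ((i : Fin n) → ZMod (r i))) := by
  let toPi := TorsionQuotient.lift hr (fun i => (Pi.single i 1 : (i : Fin n) → ZMod (r i)))
    nsmul_pi_single_one_eq_zero
  let ofPi := piZModLift (TorsionQuotient.gen hr) TorsionQuotient.nsmul_gen_eq_zero
  have toPi_gen (i : Fin n) : toPi (TorsionQuotient.gen hr i) = Pi.single i 1 :=
    TorsionQuotient.lift_gen _ _ i
  have ofPi_single (i : Fin n) : ofPi (Pi.single i 1) = TorsionQuotient.gen hr i :=
    piZModLift_single_one _ _ i
  refine ⟨AddMonoidHom.toAddEquiv toPi ofPi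
    (TorsionQuotient.hom_ext fun i => ?_) (piZMod_hom_ext fun i => ?_)⟩
  · rw [AddMonoidHom.comp_apply, toPi_gen, ofPi_single, AddMonoidHom.id_apply]
  · rw [AddMonoidHom.comp_apply, ofPi_single, toPi_gen, AddMonoidHom.id_apply]
end

section
/- Let G be a residually finite group and let H ≤ G be a virtual retract of G. Then H is separable in G: for every g ∈ G with g ∉ H there exists a finite-index subgroup G' ≤ G with H ≤ G' and g ∉ G'. -/
/-!
A retraction `r : K → H` presents `H` as the locus in `K` where `r` agrees with the inclusion
`K → G`. In a residually finite target two homomorphisms that differ at `g` still differ at `g` in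
some finite quotient, and the locus where they agree in that quotient has finite index.
-/

section Separable

variable {G L Q : Type*} [Group G] [Group L] [Group Q]

/-- Separability of a subgroup, i.e. closedness in the profinite topology of the ambient group,
stated as the separation of each outside element by a finite-index subgroup. -/
def IsSeparableSubgroup (H : Subgroup G) : Prop :=
  ∀ g ∉ H, ∃ K : Subgroup G, K.FiniteIndex ∧ H ≤ K ∧ g ∉ K

theorem IsSeparableSubgroup.map_subtype {K : Subgroup G} [K.FiniteIndex] {H : Subgroup K}
    (hH : IsSeparableSubgroup H) : IsSeparableSubgroup (H.map K.subtype) := by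
  intro g hg
  by_cases hgK : g ∈ K
  · obtain ⟨M, hM, hHM, hgM⟩ := hH ⟨g, hgK⟩ fun hgH ↦ hg ⟨⟨g, hgK⟩, hgH, rfl⟩
    refine ⟨M.map K.subtype, ⟨?_⟩, Subgroup.map_mono hHM, by simpa [hgK] using hgM⟩
    rw [Subgroup.index_map_subtype]
    exact mul_ne_zero hM.index_ne_zero Subgroup.FiniteIndex.index_ne_zero
  · exact ⟨K, ‹_›, Subgroup.map_subtype_le H, hgK⟩

theorem finiteIndex_eqLocus [Finite Q] (f₁ f₂ : G →* Q) : (f₁.eqLocus f₂).FiniteIndex := by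
  refine Subgroup.finiteIndex_of_le (H := (f₁.prod f₂).ker) fun g hg ↦ ?_
  obtain ⟨h₁, h₂⟩ := Prod.mk.inj (MonoidHom.mem_ker.mp hg)
  exact h₁.trans h₂.symm

theorem isSeparableSubgroup_eqLocus [Group.ResiduallyFinite L] (f₁ f₂ : G →* L) :
    IsSeparableSubgroup (f₁.eqLocus f₂) := by
  intro g hg
  obtain ⟨N, hN⟩ := Group.exists_finiteIndexNormalSubgroup_of_residuallyFinite (f₁ g) (f₂ g) hg
  let π := QuotientGroup.mk' N.toSubgroup
  exact ⟨(π.comp f₁).eqLocus (π.comp f₂), finiteIndex_eqLocus _ _,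
    fun _ hk ↦ congrArg π hk, hN⟩

end Separable

section Retract

variable {G : Type*} [Group G] {H : Subgroup G}

/-- `H` is a virtual retract of the ambient group: some finite-index subgroup containing `H` admits
a homomorphism onto `H` that restricts to the identity on `H`. -/
def IsVirtualRetract (H : Subgroup G) : Prop :=
  ∃ K : Subgroup G, K.FiniteIndex ∧ ∃ (hHK : H ≤ K) (r : K →* H),
    ∀ h : H, r (Subgroup.inclusion hHK h) = h

theorem map_subtype_eqLocus_retraction {K : Subgroup G} (hHK : H ≤ K) (r : K →* H)
    (hr : ∀ h : H, r (Subgroup.inclusion hHK h) = h) :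
    ((H.subtype.comp r).eqLocus K.subtype).map K.subtype = H := by
  ext g
  constructor
  · rintro ⟨k, hk, rfl⟩
    exact hk ▸ (r k).2
  · exact fun hg ↦ ⟨⟨g, hHK hg⟩, congrArg H.subtype (hr ⟨g, hg⟩), rfl⟩

theorem virtual_retract_is_separable_general [Group.ResiduallyFinite G]
    (hH : IsVirtualRetract H) : IsSeparableSubgroup H := by
  obtain ⟨K, _, hHK, r, hr⟩ := hH
  rw [← map_subtype_eqLocus_retraction hHK r hr]
  exact (isSeparableSubgroup_eqLocus _ _).map_subtype

end Retract

/-- **Virtual retracts of residually finite groups are separable** (Lemma 2.10):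
if `G` is residually finite and `H ≤ G` is a virtual retract, then `H` is separable in
`G`. -/
theorem virtual_retract_is_separable
    (G : Type) [Group G]
    (hres : ∀ g : G, g ≠ 1 → ∃ (Q : Type) (_ : Group Q) (φ : G →* Q), Finite Q ∧ φ g ≠ 1)
    (H : Subgroup G)
    (hvr : ∃ (G' : Subgroup G), G'.FiniteIndex ∧ ∃ (hle : H ≤ G') (r : ↥G' →* ↥H),
      ∀ h : H, r (Subgroup.inclusion hle h) = h) :
    ∀ g : G, g ∉ H → ∃ G' : Subgroup G, G'.FiniteIndex ∧ H ≤ G' ∧ g ∉ G' :=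
  have : Group.ResiduallyFinite G :=
    Group.residuallyFinite_of_forall_exists_finite_monoidHom fun g hg ↦
      let ⟨Q, hQ, φ, hfin, hφ⟩ := hres g hg
      ⟨Q, hQ, hfin, φ, hφ⟩
  virtual_retract_is_separable_general hvr
end

section
/- Let F be a free group, let w ∈ F be a nontrivial element, and let H ≤ F be a finitely generated subgroup. Then the set of H-conjugacy classes of elevations of w to H is finite; that is, there are only finitely many H-conjugacy classes [u]_H of elements u ∈ H such that u = (g w g⁻¹)^d for some g ∈ F and some d ≥ 1 with (g w g⁻¹)^e ∉ H for all 1 ≤ e < d. -/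
/-!
Let `v` be a conjugate of `w` with reduced word `C V C⁻¹`, where `V` is cyclically reduced, so that
`v ^ d` has reduced word `C V ⋯ V C⁻¹`. If `v ^ d ∈ H`, the element represented by `C` is a vertex
on the geodesic from `1` to `v ^ d` in the Cayley graph. Such geodesics stay within finitely many
cosets `H p`, because reducing a word only removes vertices from the path it spells. So `v` is
`H`-conjugate to `p V p⁻¹` for one of finitely many `p`. Comparing the number of occurrences of each
letter in `V ^ n` and in a conjugate of `w ^ n`, for large `n`, shows that the letters of `V` are
among those of `w`, with multiplicity, which leaves finitely many `V`. Finally, an elevation is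
determined by `v`, being the first positive power of `v` in `H`.
-/

open scoped List Pointwise

section FirstPower

variable {G : Type*} [Group G] {H : Subgroup G}

/-- `u` is the first positive power of `v` that lies in `H`, and `d` is its exponent. The
elevations of `w` to `H` of degree `d` are the `u` with this property for a conjugate `v` of `w`. -/
def IsFirstPower (H : Subgroup G) (v : G) (d : ℕ) (u : H) : Prop :=
  1 ≤ d ∧ (u : G) = v ^ d ∧ ∀ e : ℕ, 1 ≤ e → e < d → v ^ e ∉ H

namespace IsFirstPower

variable {v : G} {d d' : ℕ} {u u' : H}

theorem pow_mem (h : IsFirstPower H v d u) : v ^ d ∈ H :=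
  h.2.1 ▸ u.2

theorem exponent_le (h : IsFirstPower H v d u) (h' : IsFirstPower H v d' u') : d ≤ d' :=
  not_lt.1 fun hlt => h.2.2 d' h'.1 hlt h'.pow_mem

theorem unique (h : IsFirstPower H v d u) (h' : IsFirstPower H v d' u') : u = u' := by
  obtain rfl : d = d' := (h.exponent_le h').antisymm (h'.exponent_le h)
  exact Subtype.ext (h.2.1.trans h'.2.1.symm)

theorem conj (h : IsFirstPower H v d u) (k : H) :
    IsFirstPower H (k * v * (k : G)⁻¹) d (k * u * k⁻¹) := by
  refine ⟨h.1, by simp [h.2.1], fun e he hed hmem => h.2.2 e he hed ?_⟩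
  rwa [conj_pow, H.mul_mem_cancel_right (H.inv_mem k.2), H.mul_mem_cancel_left k.2] at hmem

end IsFirstPower

end FirstPower

section FiniteUpToConj

variable {G K : Type*} [Group G] [Group K]

/-- The set `A` meets only finitely many orbits of the conjugation action of the subgroup `H` on
the ambient group. The elements of `A` need not lie in `H`, so this is not about
`ConjClasses H`. -/
def FiniteUpToConj (H : Subgroup G) (A : Set G) : Prop :=
  ∃ B : Set G, B.Finite ∧ ∀ a ∈ A, ∃ k ∈ H, k * a * k⁻¹ ∈ B

/-- The conjugates of `w` that have a positive power in `H`. These are the elements a power of which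
is an elevation of `w` to `H`. -/
def conjRoots (H : Subgroup G) (w : G) : Set G :=
  {v | IsConj w v ∧ ∃ d ≠ 0, v ^ d ∈ H}

variable {H : Subgroup G} {w : G}

theorem FiniteUpToConj.of_image {φ : G →* K} (hφ : Function.Injective φ) {A : Set G}
    (h : FiniteUpToConj (H.map φ) (φ '' A)) : FiniteUpToConj H A := by
  obtain ⟨B, hB, hAB⟩ := h
  refine ⟨φ ⁻¹' B, hB.preimage hφ.injOn, fun a ha => ?_⟩
  obtain ⟨_, ⟨k, hk, rfl⟩, hkB⟩ := hAB (φ a) (Set.mem_image_of_mem φ ha)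
  exact ⟨k, hk, by simpa using hkB⟩

theorem FiniteUpToConj.mono {A A' : Set G} (h : FiniteUpToConj H A') (hA : A ⊆ A') :
    FiniteUpToConj H A :=
  let ⟨B, hB, hAB⟩ := h
  ⟨B, hB, fun a ha => hAB a (hA ha)⟩

theorem image_conjRoots_subset (φ : G →* K) :
    φ '' conjRoots H w ⊆ conjRoots (H.map φ) (φ w) := by
  rintro _ ⟨v, ⟨hwv, d, hd, hvd⟩, rfl⟩
  exact ⟨φ.map_isConj hwv, d, hd, v ^ d, hvd, map_pow φ v d⟩

theorem finite_conjClasses_isFirstPower (h : FiniteUpToConj H (conjRoots H w)) :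
    {c : ConjClasses H | ∃ (u : H) (d : ℕ) (g : G),
      ConjClasses.mk u = c ∧ IsFirstPower H (g * w * g⁻¹) d u}.Finite := by
  obtain ⟨B, hB, hconj⟩ := h
  let E (b : G) : Set (ConjClasses H) := ConjClasses.mk '' {u | ∃ d, IsFirstPower H b d u}
  have hE (b : G) : (E b).Subsingleton := by
    refine Set.Subsingleton.image ?_ _
    rintro u ⟨_, hu⟩ u' ⟨_, hu'⟩
    exact hu.unique hu'
  refine (hB.biUnion fun b _ => (hE b).finite).subset ?_
  rintro _ ⟨u, d, g, rfl, hu⟩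
  obtain ⟨k, hk, hkB⟩ := hconj (g * w * g⁻¹)
    ⟨isConj_iff.2 ⟨g, rfl⟩, d, Nat.one_le_iff_ne_zero.1 hu.1, hu.pow_mem⟩
  let k' : H := ⟨k, hk⟩
  have hmk : ConjClasses.mk (k' * u * k'⁻¹) = ConjClasses.mk u :=
    ConjClasses.mk_eq_mk_iff_isConj.2 (isConj_iff.2 ⟨k', rfl⟩).symm
  exact Set.mem_biUnion hkB ⟨k' * u * k'⁻¹, ⟨d, hu.conj k'⟩, hmk⟩

end FiniteUpToConj

section PathVertices

open FreeGroup

variable {α : Type*} {L L₁ L₂ : List (α × Bool)}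

/-- The vertices of the path in the Cayley graph of `FreeGroup α` that starts at `1` and is spelled
by the word `L`, which need not be reduced. -/
def pathVertices (L : List (α × Bool)) : Set (FreeGroup α) :=
  mk '' {p | p <+: L}

theorem finite_pathVertices (L : List (α × Bool)) : (pathVertices L).Finite := by
  refine Set.Finite.image mk ?_
  simpa only [List.mem_inits] using L.inits.finite_toSet

theorem pathVertices_append :
    pathVertices (L₁ ++ L₂) = pathVertices L₁ ∪ mk L₁ • pathVertices L₂ := by
  ext g
  constructor
  · rintro ⟨p, hp, rfl⟩
    obtain h | ⟨q, rfl⟩ := List.prefix_or_prefix_of_prefix hp (List.prefix_append L₁ L₂)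
    · exact .inl ⟨p, h, rfl⟩
    · exact .inr ⟨mk q, ⟨q, (List.prefix_append_right_inj L₁).1 hp, rfl⟩, mul_mk⟩
  · rintro (⟨p, hp, rfl⟩ | ⟨_, ⟨q, hq, rfl⟩, rfl⟩)
    · exact ⟨p, List.prefix_append_of_prefix hp, rfl⟩
    · exact ⟨L₁ ++ q, (List.prefix_append_right_inj L₁).2 hq, mul_mk.symm⟩

theorem pathVertices_invRev_subset (L : List (α × Bool)) :
    pathVertices (invRev L) ⊆ (mk L)⁻¹ • pathVertices L := by
  rintro _ ⟨p, ⟨q, hpq⟩, rfl⟩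
  have hL : L = invRev q ++ invRev p := by rw [← invRev_append, hpq, invRev_invRev]
  refine ⟨mk (invRev q), ⟨_, ⟨_, hL.symm⟩, rfl⟩, ?_⟩
  simp [hL, ← mul_mk, ← inv_mk]

theorem pathVertices_subset_of_step (h : Red.Step L₁ L₂) : pathVertices L₂ ⊆ pathVertices L₁ := by
  obtain @⟨A, B, x, b⟩ := h
  have hcancel : mk [(x, b), (x, !b)] = 1 := Quot.sound (Red.Step.not (L₁ := []))
  rw [show A ++ (x, b) :: (x, !b) :: B = A ++ ([(x, b), (x, !b)] ++ B) from rfl]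
  simp only [pathVertices_append, hcancel, one_smul]
  gcongr
  exact Set.subset_union_right

theorem pathVertices_subset_of_red (h : Red L₁ L₂) : pathVertices L₂ ⊆ pathVertices L₁ := by
  induction h with
  | refl => rfl
  | tail _ hstep ih => exact (pathVertices_subset_of_step hstep).trans ih

variable [DecidableEq α]

theorem pathVertices_toWord_mul_subset (x y : FreeGroup α) :
    pathVertices (x * y).toWord ⊆ pathVertices x.toWord ∪ x • pathVertices y.toWord := by
  rw [toWord_mul]
  refine (pathVertices_subset_of_red reduce.red).trans_eq ?_
  rw [pathVertices_append, mk_toWord]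

theorem pathVertices_toWord_inv_subset (x : FreeGroup α) :
    pathVertices x⁻¹.toWord ⊆ x⁻¹ • pathVertices x.toWord := by
  simpa only [toWord_inv, mk_toWord] using pathVertices_invRev_subset x.toWord

theorem pathVertices_toWord_subset_closure_mul {S : Set (FreeGroup α)} {h : FreeGroup α}
    (hh : h ∈ Subgroup.closure S) :
    pathVertices h.toWord ⊆
      (Subgroup.closure S : Set (FreeGroup α)) * insert 1 (⋃ s ∈ S, pathVertices s.toWord) := by
  set P := insert 1 (⋃ s ∈ S, pathVertices s.toWord)
  have smul_eq {x : FreeGroup α} (hx : x ∈ Subgroup.closure S) :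
      x • ((Subgroup.closure S : Set (FreeGroup α)) * P) = Subgroup.closure S * P := by
    rw [← smul_mul_assoc, smul_coe_set hx]
  have subset_mul : P ⊆ Subgroup.closure S * P :=
    Set.subset_mul_right P (Subgroup.closure S).one_mem
  induction hh using Subgroup.closure_induction with
  | mem s hs =>
    exact ((Set.subset_biUnion_of_mem hs).trans (Set.subset_insert _ _)).trans subset_mul
  | one =>
    rintro _ ⟨p, hp, rfl⟩
    obtain rfl : p = [] := by simpa using hp
    exact subset_mul (Set.mem_insert _ _)
  | mul x y hx _ ihx ihy =>
    refine (pathVertices_toWord_mul_subset x y).trans (Set.union_subset ihx ?_)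
    exact (Set.smul_set_mono ihy).trans_eq (smul_eq hx)
  | inv x hx ih =>
    refine (pathVertices_toWord_inv_subset x).trans ?_
    exact (Set.smul_set_mono ih).trans_eq (smul_eq (inv_mem hx))

theorem exists_finite_pathVertices_toWord_subset_mul {H : Subgroup (FreeGroup α)} (hH : H.FG) :
    ∃ P : Set (FreeGroup α), P.Finite ∧ ∀ h ∈ H, pathVertices h.toWord ⊆ H * P := by
  obtain ⟨S, rfl⟩ := hH
  refine ⟨_, .insert 1 (S.finite_toSet.biUnion fun s _ => finite_pathVertices s.toWord), ?_⟩
  exact fun h hh => pathVertices_toWord_subset_closure_mul hh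

end PathVertices

section CyclicReduction

open FreeGroup reduceCyclically

theorem finite_setOf_subperm {β : Type*} (M : List β) : {L : List β | L <+~ M}.Finite := by
  refine ((List.finite_toSet M.sublists).biUnion fun l _ => l.permutations.finite_toSet).subset ?_
  rintro L ⟨l, hlL, hlM⟩
  exact Set.mem_biUnion (List.mem_sublists.2 hlM) (List.mem_permutations.2 hlL.symm)

theorem le_of_forall_mul_le_mul_add {a b c : ℕ} (h : ∀ n, n * a ≤ n * b + c) : a ≤ b := by
  by_contra! hba
  have hmul : (c + 1) * (b + 1) ≤ (c + 1) * a := Nat.mul_le_mul_left _ hba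
  linarith [h (c + 1)]

variable {α : Type*} [DecidableEq α] {v w : FreeGroup α} {n : ℕ}

theorem toWord_pow_of_ne_zero (v : FreeGroup α) (hn : n ≠ 0) :
    (v ^ n).toWord = conjugator v.toWord ++
      (List.replicate n (reduceCyclically v.toWord)).flatten ++ invRev (conjugator v.toWord) := by
  rw [toWord_pow, reduce_flatten_replicate isReduced_toWord, if_neg hn]

theorem mk_conjugator_mul_mk_reduceCyclically (v : FreeGroup α) :
    mk (conjugator v.toWord) * mk (reduceCyclically v.toWord) * (mk (conjugator v.toWord))⁻¹ =
      v := by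
  rw [inv_mk, mul_mk, mul_mk, conj_conjugator_reduceCyclically, mk_toWord]

theorem mk_conjugator_mem_pathVertices_toWord_pow (v : FreeGroup α) (hn : n ≠ 0) :
    mk (conjugator v.toWord) ∈ pathVertices (v ^ n).toWord := by
  refine ⟨_, ?_, rfl⟩
  rw [Set.mem_ofPred_eq, toWord_pow_of_ne_zero v hn, List.append_assoc]
  exact List.prefix_append _ _

theorem flatten_replicate_reduceCyclically_sublist_toWord_pow (v : FreeGroup α) (n : ℕ) :
    (List.replicate n (reduceCyclically v.toWord)).flatten <+ (v ^ n).toWord := by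
  obtain rfl | hn := eq_or_ne n 0
  · simp
  · rw [toWord_pow_of_ne_zero v hn]
    exact (List.sublist_append_right _ _).trans (List.sublist_append_left _ _)

theorem toWord_conj_pow_sublist (x w : FreeGroup α) (n : ℕ) :
    ((x * w * x⁻¹) ^ n).toWord <+
      (x.toWord ++ (List.replicate n w.toWord).flatten ++ x⁻¹.toWord) := by
  rw [conj_pow]
  have hw : (w ^ n).toWord <+ (List.replicate n w.toWord).flatten := by
    rw [toWord_pow]
    exact reduce.red.sublist
  calc
    (x * w ^ n * x⁻¹).toWord <+ (x * w ^ n).toWord ++ x⁻¹.toWord := toWord_mul_sublist _ _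
    _ <+ x.toWord ++ (w ^ n).toWord ++ x⁻¹.toWord := (toWord_mul_sublist _ _).append_right _
    _ <+ _ := (hw.append_left _).append_right _

theorem reduceCyclically_toWord_subperm_of_isConj (h : IsConj w v) :
    reduceCyclically v.toWord <+~ w.toWord := by
  obtain ⟨x, rfl⟩ := isConj_iff.1 h
  refine List.subperm_ext_iff.2 fun a _ => ?_
  have hcount (n : ℕ) : n * (reduceCyclically (x * w * x⁻¹).toWord).count a ≤
      n * w.toWord.count a + (x.toWord.count a + x⁻¹.toWord.count a) := by
    have hsub := ((flatten_replicate_reduceCyclically_sublist_toWord_pow (x * w * x⁻¹) n).trans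
      (toWord_conj_pow_sublist x w n)).count_le a
    simp only [List.count_append, List.count_flatten, List.map_replicate, List.sum_replicate,
      smul_eq_mul] at hsub
    linarith
  exact le_of_forall_mul_le_mul_add hcount

end CyclicReduction

section ConjRoots

open FreeGroup reduceCyclically

theorem finiteUpToConj_conjRoots_freeGroup {α : Type*} {H : Subgroup (FreeGroup α)} (hH : H.FG)
    (w : FreeGroup α) : FiniteUpToConj H (conjRoots H w) := by
  classical
  obtain ⟨P, hP, hHP⟩ := exists_finite_pathVertices_toWord_subset_mul hH
  refine ⟨_, hP.image2 (fun p V => p * mk V * p⁻¹) (finite_setOf_subperm w.toWord), ?_⟩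
  rintro v ⟨hwv, d, hd, hvd⟩
  obtain ⟨k, hk, p, hp, hkp : k * p = mk (conjugator v.toWord)⟩ :=
    hHP _ hvd (mk_conjugator_mem_pathVertices_toWord_pow v hd)
  refine ⟨k⁻¹, H.inv_mem hk, p, hp, _, reduceCyclically_toWord_subperm_of_isConj hwv, ?_⟩
  calc
    p * mk (reduceCyclically v.toWord) * p⁻¹ =
        k⁻¹ * (k * p * mk (reduceCyclically v.toWord) * (k * p)⁻¹) * k⁻¹⁻¹ := by group
    _ = k⁻¹ * v * k⁻¹⁻¹ := by rw [hkp, mk_conjugator_mul_mk_reduceCyclically]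

theorem finiteUpToConj_conjRoots {F : Type*} [Group F] [IsFreeGroup F] {H : Subgroup F}
    (hH : H.FG) (w : F) : FiniteUpToConj H (conjRoots H w) := by
  let φ : F →* FreeGroup (IsFreeGroup.Generators F) := (IsFreeGroup.toFreeGroup F).toMonoidHom
  have hφ : Function.Injective φ := (IsFreeGroup.toFreeGroup F).injective
  have hHφ : (H.map φ).FG := by
    rw [Subgroup.fg_iff_submonoid_fg] at hH ⊢
    exact hH.map φ
  exact ((finiteUpToConj_conjRoots_freeGroup hHφ (φ w)).mono (image_conjRoots_subset φ)).of_image hφ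

end ConjRoots

/-- **Finiteness of elevations** (Lemma 3.9): if `F` is a free group, `w ∈ F` is
nontrivial and `H ≤ F` is finitely generated, then there are only finitely many
`H`-conjugacy classes of elevations of `w` to `H`. Here `u ∈ H` is an elevation of `w` of
degree `d ≥ 1` if `u = (g w g⁻¹)^d` for some `g ∈ F`, with `(g w g⁻¹)^e ∉ H` for all
`1 ≤ e < d`. -/
theorem finitely_many_elevations
    (F : Type) [Group F] [IsFreeGroup F]
    (w : F) (hw : w ≠ 1) (H : Subgroup F) (hH : H.FG) :
    {c : ConjClasses ↥H | ∃ (u : ↥H) (d : ℕ) (g : F), ConjClasses.mk u = c ∧ 1 ≤ d ∧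
      (u : F) = (g * w * g⁻¹) ^ d ∧
      ∀ e : ℕ, 1 ≤ e → e < d → (g * w * g⁻¹) ^ e ∉ H}.Finite :=
  finite_conjClasses_isFirstPower (finiteUpToConj_conjRoots hH w)
end

section
/- Let F be a finitely generated free group with a peripheral structure [w̲] = {[w_1]_F,…,[w_n]_F}, and let (K,[u̲]) ≤ (F,[w̲]) be a subpair with K finitely generated. Then there exists a finite-index subgroup F' ≤ F containing K such that, with [w̲'] the pull-back structure of [w̲] on F', the subpair (K,[u̲]) is embedded in (F',[w̲']): every class in [u̲] is a degree-1 elevation of a class in [w̲'], and distinct classes in [u̲] have distinct F'-conjugacy classes. -/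
/-- `u ∈ H` is a degree-`d` elevation of `w₀ ∈ F` to the subgroup `H`: `u = w₀^d` and no
smaller positive power of `w₀` lies in `H`. -/
def IsElevation {F : Type} [Group F] (H : Subgroup F) (d : ℕ) (u : ↥H) (w₀ : F) : Prop :=
  1 ≤ d ∧ (u : F) = w₀ ^ d ∧ ∀ e : ℕ, 1 ≤ e → e < d → w₀ ^ e ∉ H

/-- The `H`-conjugacy class `cu` is a degree-`d` elevation of the `F`-conjugacy class
`cw`: some representative of `cu` is the `d`-th power of some representative of `cw`,
minimally so. -/
def IsClassElevation {F : Type} [Group F] (H : Subgroup F) (d : ℕ)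
    (cu : ConjClasses ↥H) (cw : ConjClasses F) : Prop :=
  ∃ (u : ↥H) (w₀ : F), ConjClasses.mk u = cu ∧ ConjClasses.mk w₀ = cw ∧
    IsElevation H d u w₀

/-- Relative version: for subgroups `K' ≤ K` of `F`, the `K'`-class `cu` is a degree-`d`
elevation of the `K`-class `cw`. -/
def IsClassElevationIn {F : Type} [Group F] {K' K : Subgroup F} (_h : K' ≤ K) (d : ℕ)
    (cu : ConjClasses ↥K') (cw : ConjClasses ↥K) : Prop :=
  ∃ (u : ↥K') (w₀ : ↥K), ConjClasses.mk u = cu ∧ ConjClasses.mk w₀ = cw ∧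
    IsElevation K' d u (w₀ : F)

/-- `(H, U)` is a subpair of `(F, W)`: every class in `U` is an elevation of a class
in `W`. -/
def IsSubpair {F : Type} [Group F] (H : Subgroup F)
    (U : Set (ConjClasses ↥H)) (W : Set (ConjClasses F)) : Prop :=
  ∀ c ∈ U, ∃ (d : ℕ) (cw : ConjClasses F), cw ∈ W ∧ IsClassElevation H d c cw

/-- The pull-back structure of `W` on the subgroup `H ≤ F`: the set of all elevations of
classes of `W` to `H`. -/
def pullbackStructure {F : Type} [Group F] (H : Subgroup F) (W : Set (ConjClasses F)) :
    Set (ConjClasses ↥H) :=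
  {c | ∃ (d : ℕ) (cw : ConjClasses F), cw ∈ W ∧ IsClassElevation H d c cw}

/-- The pull-back structure on `K' ≤ K` of a peripheral structure `U` on `K`. -/
def pullbackStructureIn {F : Type} [Group F] {K' K : Subgroup F} (h : K' ≤ K)
    (U : Set (ConjClasses ↥K)) : Set (ConjClasses ↥K') :=
  {c | ∃ (d : ℕ) (cu : ConjClasses ↥K), cu ∈ U ∧ IsClassElevationIn h d c cu}

/-- `(K, U)` is an embedded subpair of `(H, W)` (for subgroups `K ≤ H` of `F`): every
class of `U` is a degree-1 elevation of a class of `W` (equivalently, its `H`-class lies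
in `W`), injectively. -/
def IsEmbeddedSubpair {F : Type} [Group F] {K H : Subgroup F} (h : K ≤ H)
    (U : Set (ConjClasses ↥K)) (W : Set (ConjClasses ↥H)) : Prop :=
  (∀ c ∈ U, ConjClasses.map (Subgroup.inclusion h) c ∈ W) ∧
  Set.InjOn (ConjClasses.map (Subgroup.inclusion h)) U

/-- `(K, U)` is an embedded subpair of `(F, W)` for the ambient group `F`. -/
def IsEmbeddedSubpairTop {F : Type} [Group F] (K : Subgroup F)
    (U : Set (ConjClasses ↥K)) (W : Set (ConjClasses F)) : Prop :=
  (∀ c ∈ U, ConjClasses.map K.subtype c ∈ W) ∧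
  Set.InjOn (ConjClasses.map K.subtype) U

/-!
A finitely generated subgroup `K` of a free group `F` is a retract of a finite-index subgroup that
misses any prescribed finite subset of `F \ K`. To see this, label the edges of the coset graph
`F ⧸ K` by elements of `K`, so that the label of a loop at `K` is the element of `K` it spells.
Restrict to a large finite set `S` of cosets and let each generator, which acts on `S` as a partial
injection, act through a permutation of `S` completing it, with arbitrary labels on the new edges.
This is a homomorphism from `F` to the permutational wreath product of `K` by `Perm S`; the
stabilizer `F'` of the trivial coset has finite index, and reading off labels of loops is a
retraction `F' → K`.

Such a retraction separates the conjugacy classes of `K`, and an elevation `w ^ d` of `w` to `K`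
is also an elevation to `F'` as long as `F'` misses the elements `w, …, w ^ (d - 1)`.
-/

/-- The unrestricted permutational wreath product of `H` by `Equiv.Perm A`: permutations of `A`
with labels in `H`, the label `w.left t` being attached to the arrow that ends at `t`. -/
abbrev PermWreath (H A : Type*) [Group H] : Type _ :=
  (A → H) ⋊[mulAutArrow] Equiv.Perm A

namespace PermWreath

variable {H A : Type*} [Group H]

theorem mul_left_apply (v w : PermWreath H A) (t : A) :
    (v * w).left t = v.left t * w.left (v.right⁻¹ t) :=
  rfl

theorem inv_left_apply (w : PermWreath H A) (s : A) : w⁻¹.left s = (w.left (w.right s))⁻¹ :=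
  rfl

/-- The subgroup of elements of the wreath product that fix `a`, on which the label at `a` is
multiplicative. -/
def stabilizer (H : Type*) {A : Type*} [Group H] (a : A) : Subgroup (PermWreath H A) :=
  (MulAction.stabilizer (Equiv.Perm A) a).comap SemidirectProduct.rightHom

theorem mem_stabilizer_iff {a : A} {w : PermWreath H A} : w ∈ stabilizer H a ↔ w.right a = a :=
  Iff.rfl

instance finiteIndex_comap_stabilizer [Finite A] {G : Type*} [Group G] (ψ : G →* PermWreath H A)
    (a : A) : ((stabilizer H a).comap ψ).FiniteIndex :=
  Subgroup.finiteIndex_of_le <| Subgroup.ker_le_comap (SemidirectProduct.rightHom.comp ψ)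
    (MulAction.stabilizer (Equiv.Perm A) a)

/-- The homomorphism sending an element of the wreath product that fixes `a` to the label of its
loop at `a`. -/
def loopLabel (a : A) : stabilizer H a →* H where
  toFun w := w.1.left a
  map_one' := rfl
  map_mul' v w := by
    have hv : v.1.right⁻¹ a = a :=
      Equiv.Perm.inv_eq_iff_eq.mpr (mem_stabilizer_iff.mp v.2).symm
    simp [mul_left_apply, hv]

end PermWreath

section Tracking

open Filter

variable {G A : Type*} [Group G] {K : Subgroup G}

/-- If `τ` chooses coset representatives of `K`, then `w` acts on the pairs `(s, k)`, standing for
the elements `τ s * k` of `G`. `Tracks τ g w s t` says that on the coset of `s` this action is left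
multiplication by `g`, with values in the coset of `t`. -/
structure Tracks (τ : A → G) (g : G) (w : PermWreath K A) (s t : A) : Prop where
  right_apply : w.right s = t
  left_apply : (w.left t : G) = (τ t)⁻¹ * g * τ s

namespace Tracks

variable {τ : A → G} {g h : G} {v w : PermWreath K A} {s t u : A}

theorem one (τ : A → G) (s : A) : Tracks τ 1 (1 : PermWreath K A) s s :=
  ⟨rfl, by simp⟩

theorem mul (hv : Tracks τ g v t u) (hw : Tracks τ h w s t) : Tracks τ (g * h) (v * w) s u where
  right_apply := by simp [hw.right_apply, hv.right_apply]
  left_apply := by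
    have hu : v.right⁻¹ u = t := Equiv.Perm.inv_eq_iff_eq.mpr hv.right_apply.symm
    simp [PermWreath.mul_left_apply, hu, hv.left_apply, hw.left_apply, mul_assoc]

theorem inv (hw : Tracks τ g w s t) : Tracks τ g⁻¹ w⁻¹ t s where
  right_apply := Equiv.Perm.inv_eq_iff_eq.mpr hw.right_apply.symm
  left_apply := by simp [PermWreath.inv_left_apply, hw.right_apply, hw.left_apply, mul_assoc]

theorem of_mem_closure {ψ : G →* PermWreath K A} {B : Set G}
    (hB : ∀ b ∈ B, Tracks τ b (ψ b) s s) (hg : g ∈ Subgroup.closure B) :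
    Tracks τ g (ψ g) s s := by
  induction hg using Subgroup.closure_induction with
  | mem b hb => exact hB b hb
  | one => simpa using one τ s
  | mul g h _ _ ihg ihh => simpa using ihg.mul ihh
  | inv g _ ih => simpa using ih.inv

end Tracks

theorem exists_perm_extending_of_injOn {X : Type*} (S : Finset X) {f : X → X}
    (hf : Set.InjOn f S) : ∃ σ : Equiv.Perm S, ∀ s t : S, f s = t → σ s = t := by
  obtain ⟨σ, hσ⟩ := Set.MapsTo.exists_equiv_extend_of_card_eq (α := S) (t := S)
    (s := {s | f s ∈ S}) (f := fun s => f s) (Fintype.card_coe S) (fun _ hs => hs)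
    hf.injective.injOn
  refine ⟨σ, fun s t hst => Subtype.ext ?_⟩
  rw [hσ s (show f s ∈ S from hst ▸ t.2), hst]

theorem exists_permWreath_tracks {τ : G ⧸ K → G} (hτ : ∀ x, (τ x : G ⧸ K) = x)
    (S : Finset (G ⧸ K)) (g : G) :
    ∃ w : PermWreath K S, ∀ s t : S, g • (s : G ⧸ K) = t →
      Tracks (fun y : S => τ y) g w s t := by
  obtain ⟨σ, hσ⟩ := exists_perm_extending_of_injOn S (MulAction.injective g).injOn
  let label : G → K := Function.extend Subtype.val id fun _ => 1
  refine ⟨⟨fun t => label ((τ t)⁻¹ * g * τ (σ⁻¹ t : S)), σ⟩, fun s t hst => ⟨hσ s t hst, ?_⟩⟩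
  have hs : σ⁻¹ t = s := Equiv.Perm.inv_eq_iff_eq.mpr (hσ s t hst).symm
  have hK : (τ t)⁻¹ * g * τ s ∈ K := by
    rw [mul_assoc, ← QuotientGroup.eq, hτ, ← smul_eq_mul, ← MulAction.Quotient.smul_coe, hτ, hst]
  have hlabel : label ((τ t)⁻¹ * g * τ s) = ⟨_, hK⟩ :=
    Subtype.val_injective.extend_apply id _ ⟨_, hK⟩
  simp only [hs, hlabel]

theorem exists_hom_permWreath_tracks {ι : Type*} (b : FreeGroupBasis ι G) {τ : G ⧸ K → G}
    (hτ : ∀ x, (τ x : G ⧸ K) = x) (S : Finset (G ⧸ K)) :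
    ∃ ψ : G →* PermWreath K S, ∀ g ∈ Set.range b, ∀ s t : S, g • (s : G ⧸ K) = t →
      Tracks (fun y : S => τ y) g (ψ g) s t := by
  choose w hw using fun i => exists_permWreath_tracks hτ S (b i)
  refine ⟨b.lift w, ?_⟩
  rintro _ ⟨i, rfl⟩
  simpa [FreeGroupBasis.lift] using hw i

theorem eventually_tracks_of_mem_closure {X : Type*} [MulAction G X] (τ : X → G) {B : Set G} {g : G}
    (hg : g ∈ Subgroup.closure B) (x : X) :
    ∀ᶠ S : Finset (X) in atTop, ∀ ψ : G →* PermWreath K S,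
      (∀ b ∈ B, ∀ s t : S, b • (s : X) = t → Tracks (fun y : S => τ y) b (ψ b) s t) →
      ∀ s t : S, s = x → t = g • x → Tracks (fun y : S => τ y) g (ψ g) s t := by
  induction hg using Subgroup.closure_induction generalizing x with
  | mem b hb =>
    refine .of_forall fun S ψ hψ s t hs ht => hψ b hb s t ?_
    rw [hs, ht]
  | one =>
    refine .of_forall fun S ψ _ s t hs ht => ?_
    obtain rfl : s = t := Subtype.ext (by rw [hs, ht, one_smul])
    rw [map_one]
    exact .one _ s
  | mul g h _ _ ihg ihh =>
    filter_upwards [ihg (h • x), ihh x, eventually_ge_atTop {h • x}]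
      with S hSg hSh hS ψ hψ s t hs ht
    let y : S := ⟨h • x, Finset.singleton_subset_iff.mp hS⟩
    rw [map_mul]
    exact (hSg ψ hψ y t rfl (by rw [ht, mul_smul])).mul (hSh ψ hψ s y hs rfl)
  | inv g _ ih =>
    filter_upwards [ih (g⁻¹ • x)] with S hS ψ hψ s t hs ht
    rw [map_inv]
    exact (hS ψ hψ t s ht (by rw [hs, smul_inv_smul])).inv

theorem closure_range_freeGroupBasis {ι : Type*} (b : FreeGroupBasis ι G) :
    Subgroup.closure (Set.range b) = ⊤ := by
  refine FreeGroup.lift_surjective_iff_closure_range_eq_top.mp ?_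
  have hlift : FreeGroup.lift b = b.repr.symm.toMonoidHom :=
    FreeGroup.ext_hom _ _ fun _ => FreeGroup.lift_apply_of
  rw [hlift]
  exact b.repr.symm.surjective

theorem exists_finset_hom_permWreath_tracks [IsFreeGroup G] {τ : G ⧸ K → G}
    (hτ : ∀ x, (τ x : G ⧸ K) = x) (x : G ⧸ K) {T : Set G} (hT : T.Finite) :
    ∃ (S : Finset (G ⧸ K)) (ψ : G →* PermWreath K S) (s : S), (s : G ⧸ K) = x ∧
      ∀ g ∈ T, ∃ t : S, (t : G ⧸ K) = g • x ∧ Tracks (fun y : S => τ y) g (ψ g) s t := by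
  let b := IsFreeGroup.basis G
  have htracks := fun g : G => eventually_tracks_of_mem_closure (K := K) τ
    (closure_range_freeGroupBasis b ▸ Subgroup.mem_top g) x
  have hmem : ∀ y : G ⧸ K, ∀ᶠ S : Finset (G ⧸ K) in atTop, y ∈ S := fun y =>
    (eventually_ge_atTop {y}).mono fun S => Finset.singleton_subset_iff.mp
  obtain ⟨S, hx, hS⟩ := ((hmem x).and ((eventually_all_finite hT).mpr fun g _ =>
    (hmem (g • x)).and (htracks g))).exists
  obtain ⟨ψ, hψ⟩ := exists_hom_permWreath_tracks b hτ S
  exact ⟨S, ψ, ⟨x, hx⟩, rfl, fun g hg =>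
    ⟨⟨g • x, (hS g hg).1⟩, rfl, (hS g hg).2 ψ hψ _ _ rfl rfl⟩⟩

theorem exists_cosetSection (K : Subgroup G) :
    ∃ τ : G ⧸ K → G, (∀ x, (τ x : G ⧸ K) = x) ∧ τ (1 : G) = 1 := by
  classical
  refine ⟨Function.update Quotient.out (1 : G) 1, fun x => ?_, Function.update_self _ _ _⟩
  obtain rfl | hx := eq_or_ne x (1 : G)
  · rw [Function.update_self]
  · rw [Function.update_of_ne hx, QuotientGroup.out_eq']

end Tracking

/-- **Marshall Hall's theorem**, with `K` a retract rather than a free factor of the finite-index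
subgroup. -/
theorem exists_finiteIndex_retract_disjoint {G : Type*} [Group G] [IsFreeGroup G] {K : Subgroup G}
    (hK : K.FG) {T : Set G} (hT : T.Finite) (hKT : Disjoint T K) :
    ∃ (F : Subgroup G) (h : K ≤ F), F.FiniteIndex ∧ Disjoint T F ∧
      ∃ r : F →* K, Function.LeftInverse r (Subgroup.inclusion h) := by
  obtain ⟨A, hA⟩ := hK
  obtain ⟨τ, hτ, hτ_one⟩ := exists_cosetSection K
  obtain ⟨S, ψ, o, ho, hψ⟩ :=
    exists_finset_hom_permWreath_tracks hτ (1 : G) (A.finite_toSet.union hT)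
  have hsmul (g : G) : g • (o : G ⧸ K) = o ↔ g ∈ K := by
    rw [ho, MulAction.Quotient.smul_coe, smul_eq_mul, mul_one, eq_comm, QuotientGroup.eq, inv_one,
      one_mul]
  have hloop : ∀ k ∈ K, Tracks (fun y : S => τ y) k (ψ k) o o := fun k hk => by
    refine Tracks.of_mem_closure (B := A) (fun a ha => ?_) (hA ▸ hk)
    obtain ⟨t, ht, htracks⟩ := hψ a (.inl ha)
    have haK : a ∈ K := hA ▸ Subgroup.subset_closure ha
    obtain rfl : t = o := Subtype.ext (by rw [ht, ← ho, (hsmul a).mpr haK])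
    exact htracks
  have hK_le : K ≤ (PermWreath.stabilizer K o).comap ψ := fun k hk => (hloop k hk).right_apply
  refine ⟨(PermWreath.stabilizer K o).comap ψ, hK_le, inferInstance, ?_,
    (PermWreath.loopLabel o).comp (ψ.subgroupComap _), ?_⟩
  · refine Set.disjoint_left.mpr fun g hgT hgF => Set.disjoint_left.mp hKT hgT ?_
    obtain ⟨t, ht, htracks⟩ := hψ g (.inr hgT)
    have hto : t = o := htracks.right_apply.symm.trans hgF
    exact (hsmul g).mp (by rw [ho, ← ht, hto, ho])
  · refine fun k => Subtype.ext ?_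
    have hlabel : ((ψ k).left o : G) = (τ o)⁻¹ * k * τ o := (hloop k k.2).left_apply
    exact hlabel.trans (by simp [ho, hτ_one])

theorem conjClassesMap_injective_of_leftInverse {M N : Type*} [Monoid M] [Monoid N] {i : M →* N}
    {r : N →* M} (h : Function.LeftInverse r i) : Function.Injective (ConjClasses.map i) := by
  refine Function.LeftInverse.injective (g := ConjClasses.map r) fun c => ?_
  induction c using Quotient.inductionOn with | _ u
  exact congrArg ConjClasses.mk (h u)

theorem IsElevation.inclusion {F : Type} [Group F] {K H : Subgroup F} (h : K ≤ H) {d : ℕ} {u : K}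
    {w : F} (hu : IsElevation K d u w) (hH : ∀ e, 1 ≤ e → e < d → w ^ e ∉ H) :
    IsElevation H d (Subgroup.inclusion h u) w :=
  ⟨hu.1, hu.2.1, hH⟩

theorem IsSubpair.exists_finite_forall_map_mem_pullbackStructure {F : Type} [Group F]
    {K : Subgroup F} {U : Set (ConjClasses K)} {W : Set (ConjClasses F)} (hUW : IsSubpair K U W)
    (hU : U.Finite) :
    ∃ T : Set F, T.Finite ∧ Disjoint T K ∧ ∀ (H : Subgroup F) (h : K ≤ H), Disjoint T H →
      ∀ c ∈ U, ConjClasses.map (Subgroup.inclusion h) c ∈ pullbackStructure H W := by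
  choose! d cw hcw u w hu hw helev using hUW
  refine ⟨⋃ c ∈ U, (w c ^ ·) '' Set.Ico 1 (d c),
    hU.biUnion fun c _ => (Set.finite_Ico _ _).image _, ?_, fun H h hH c hc => ?_⟩
  · simp only [Set.disjoint_iUnion_left]
    intro c hc
    refine Set.disjoint_left.mpr ?_
    rintro _ ⟨e, ⟨he, hed⟩, rfl⟩
    exact (helev c hc).2.2 e he hed
  · refine ⟨d c, cw c, hcw c hc, Subgroup.inclusion h (u c), w c, ?_, hw c hc,
      (helev c hc).inclusion h fun e he hed => ?_⟩
    · rw [← congrArg (ConjClasses.map (Subgroup.inclusion h)) (hu c hc)]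
      rfl
    · exact Set.disjoint_left.mp hH (Set.mem_biUnion hc ⟨e, ⟨he, hed⟩, rfl⟩)

theorem subpair_embeds_into_finite_index_pullback_general
    (F : Type) [Group F] [IsFreeGroup F] (W : Set (ConjClasses F))
    (K : Subgroup F) (hK : K.FG)
    (U : Set (ConjClasses ↥K)) (hUfin : U.Finite)
    (hUsub : IsSubpair K U W) :
    ∃ (F' : Subgroup F) (h : K ≤ F'), F'.FiniteIndex ∧
      IsEmbeddedSubpair h U (pullbackStructure F' W) := by
  obtain ⟨T, hT, hKT, hpull⟩ := hUsub.exists_finite_forall_map_mem_pullbackStructure hUfin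
  obtain ⟨F', h, hindex, hF'T, r, hr⟩ := exists_finiteIndex_retract_disjoint hK hT hKT
  exact ⟨F', h, hindex, hpull F' h hF'T, (conjClassesMap_injective_of_leftInverse hr).injOn⟩

/-- **Subpairs embed into finite-index pull-back pairs** (Lemma 3.14, via Marshall Hall's
theorem): every subpair `(K, U)` of a pair `(F, W)` with `K` finitely generated embeds in
the pull-back pair on some finite-index subgroup `F' ≤ F` containing `K`. -/
theorem subpair_embeds_into_finite_index_pullback
    (F : Type) [Group F] [IsFreeGroup F] (hF : Group.FG F)
    (W : Set (ConjClasses F)) (hWfin : W.Finite) (hWone : ∀ c ∈ W, c ≠ 1)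
    (K : Subgroup F) (hK : K.FG)
    (U : Set (ConjClasses ↥K)) (hUfin : U.Finite)
    (hUsub : IsSubpair K U W) :
    ∃ (F' : Subgroup F) (h : K ≤ F'), F'.FiniteIndex ∧
      IsEmbeddedSubpair h U (pullbackStructure F' W) :=
  subpair_embeds_into_finite_index_pullback_general F W K hK U hUfin hUsub
end

section
/- Let F be a free group with peripheral structure [w̲] = {[w_1]_F,…,[w_n]_F} such that no representative of any class in [w̲] is a proper power in F, and suppose (K,[u̲]) ↪ (F,[w̲]) is an embedded subpair. Let F' ≤ F be a finite-index subgroup, set K' = K ∩ F', and let [w̲'] and [u̲'] be the pull-back structures of [w̲] on F' and of [u̲] on K', respectively. Then (K',[u̲']) ↪ (F',[w̲']) is an embedded subpair. -/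
/-!
An element which is not a proper power has infinite order, and if its centralizer is cyclic then it
generates that centralizer. Two consequences drive the proof. Elements which are not proper powers
are determined by any common positive power, so an `F'`-conjugacy between two elevations
`w₁ ^ d₁` and `w₂ ^ d₂` is already a conjugacy `f w₁ f⁻¹ = w₂`. Injectivity of `[u] ↦ [u]_F` then
gives `k ∈ K` with `k w₁ k⁻¹ = w₂`, and `k⁻¹ f` centralizes `w₁`, hence is a power of it; so
`f ∈ K ∩ F'`. In a free group centralizers of nontrivial elements are cyclic because they are free
with nontrivial center, and a free group of rank at least two is centerless.
-/

section ProperPower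

variable {G : Type*} [Group G]

/-- `x` is a proper power: a `d`-th power with `d ≥ 2`. In particular `1` and all elements of finite
order are proper powers. -/
def IsProperPower (x : G) : Prop :=
  ∃ (y : G) (d : ℕ), 2 ≤ d ∧ x = y ^ d

theorem IsProperPower.map {H : Type*} [Group H] (f : G →* H) {x : G} (hx : IsProperPower x) :
    IsProperPower (f x) := by
  obtain ⟨y, d, hd, rfl⟩ := hx
  exact ⟨f y, d, hd, map_pow f y d⟩

theorem isProperPower_conj_iff {g x : G} : IsProperPower (g * x * g⁻¹) ↔ IsProperPower x := by
  refine ⟨fun h => ?_, fun h => h.map (MulAut.conj g).toMonoidHom⟩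
  simpa [mul_assoc] using h.map (MulAut.conj g⁻¹).toMonoidHom

theorem isProperPower_zpow (x : G) {a : ℤ} (ha : a.natAbs ≠ 1) : IsProperPower (x ^ a) := by
  rcases eq_or_ne a 0 with rfl | h0
  · exact ⟨1, 2, le_rfl, by simp⟩
  · obtain h | h := Int.natAbs_eq a
    · exact ⟨x, a.natAbs, by lia, by rw [← zpow_natCast, ← h]⟩
    · exact ⟨x⁻¹, a.natAbs, by lia, by rw [← zpow_natCast, inv_zpow', ← h]⟩

theorem isProperPower_of_isOfFinOrder {x : G} (hx : IsOfFinOrder x) : IsProperPower x := by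
  have hpos := hx.orderOf_pos
  exact ⟨x, orderOf x + 1, by lia, by rw [pow_succ, pow_orderOf_eq_one, one_mul]⟩

theorem zpowers_eq_top_of_not_isProperPower [IsCyclic G] {w : G} (hw : ¬IsProperPower w) :
    Subgroup.zpowers w = ⊤ := by
  obtain ⟨g, hg⟩ := IsCyclic.exists_generator (α := G)
  obtain ⟨a, rfl⟩ := hg w
  have ha : a.natAbs = 1 := not_not.1 fun ha => hw (isProperPower_zpow g ha)
  have hgtop : Subgroup.zpowers g = ⊤ := (Subgroup.eq_top_iff' _).2 hg
  obtain rfl | rfl := Int.natAbs_eq_iff.1 ha <;> simpa using hgtop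

theorem centralizer_le_zpowers_of_commute {w z : G} [IsCyclic (Subgroup.centralizer {z})]
    (hw : ¬IsProperPower w) (hwz : Commute w z) :
    Subgroup.centralizer {z} ≤ Subgroup.zpowers w := by
  let w' : Subgroup.centralizer {z} := ⟨w, Subgroup.mem_centralizer_singleton_iff.2 hwz.eq⟩
  have hw' : ¬IsProperPower w' := fun h => hw (h.map (Subgroup.subtype _))
  intro h hh
  obtain ⟨n, hn⟩ : (⟨h, hh⟩ : Subgroup.centralizer {z}) ∈ Subgroup.zpowers w' :=
    zpowers_eq_top_of_not_isProperPower hw' ▸ Subgroup.mem_top _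
  exact ⟨n, congrArg Subtype.val hn⟩

theorem eq_of_pow_eq_pow_of_not_isProperPower {x y : G} {m n : ℕ}
    [IsCyclic (Subgroup.centralizer {x ^ m})] (hx : ¬IsProperPower x) (hy : ¬IsProperPower y)
    (hm : m ≠ 0) (h : x ^ m = y ^ n) : x = y := by
  have hxfin : ¬IsOfFinOrder x := mt isProperPower_of_isOfFinOrder hx
  have hxz : Commute x (x ^ m) := Commute.self_pow x m
  have hyz : Commute y (x ^ m) := h ▸ Commute.self_pow y n
  have hxy : x ∈ Subgroup.zpowers y := centralizer_le_zpowers_of_commute hy hyz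
    (Subgroup.mem_centralizer_singleton_iff.2 hxz.eq)
  have hyx : y ∈ Subgroup.zpowers x := centralizer_le_zpowers_of_commute hx hxz
    (Subgroup.mem_centralizer_singleton_iff.2 hyz.eq)
  have hzpowers : Subgroup.zpowers x = Subgroup.zpowers y :=
    le_antisymm (Subgroup.zpowers_le.2 hxy) (Subgroup.zpowers_le.2 hyx)
  refine ((Subgroup.zpowers_eq_zpowers_iff hxfin).1 hzpowers).resolve_right fun hinv => hxfin ?_
  refine isOfFinOrder_iff_pow_eq_one.2 ⟨m + n, by lia, ?_⟩
  rw [pow_add, h, ← hinv, inv_pow, inv_mul_cancel]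

end ProperPower

section FreeGroup

theorem center_freeGroup_eq_bot (α : Type*) [Nontrivial α] :
    Subgroup.center (FreeGroup α) = ⊥ := by
  classical
  refine (Subgroup.eq_bot_iff_forall _).2 fun z hz => by_contra fun hne => ?_
  have hnil : z.toWord ≠ [] := by rwa [Ne, FreeGroup.toWord_eq_nil_iff]
  have hred : FreeGroup.IsReduced z.toWord := FreeGroup.isReduced_toWord
  obtain ⟨x, L, hx⟩ := List.exists_cons_of_ne_nil hnil
  obtain ⟨M, y, hy⟩ := (List.eq_nil_or_concat z.toWord).resolve_left hnil
  obtain ⟨c, hc⟩ := exists_ne x.1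
  -- `s` cancels neither against the first letter `x` of `z`, having a different generator,
  -- nor against the last letter `y`, having the same sign.
  let s : α × Bool := (c, y.2)
  have hleft : FreeGroup.IsReduced (s :: z.toWord) := by
    rw [hx] at hred ⊢
    exact List.isChain_cons_cons.2 ⟨fun h => (hc h).elim, hred⟩
  have hright : FreeGroup.IsReduced (z.toWord ++ [s]) := by
    rw [hy] at hred ⊢
    exact List.isChain_append.2 ⟨hred, by simp, by simp [s]⟩
  have hwords : s :: z.toWord = z.toWord ++ [s] := calc
    s :: z.toWord = (FreeGroup.mk [s] * z).toWord := by
      rw [FreeGroup.toWord_mul, FreeGroup.toWord_mk, FreeGroup.reduce_singleton,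
        List.singleton_append, hleft.reduce_eq]
    _ = (z * FreeGroup.mk [s]).toWord := by rw [Subgroup.mem_center_iff.1 hz]
    _ = z.toWord ++ [s] := by
      rw [FreeGroup.toWord_mul, FreeGroup.toWord_mk, FreeGroup.reduce_singleton,
        hright.reduce_eq]
  rw [hx, List.cons_append, List.cons.injEq] at hwords
  exact hc (congrArg Prod.fst hwords.1)

variable {G : Type*} [Group G] [IsFreeGroup G]

theorem isCyclic_of_isFreeGroup_of_center_ne_bot (hG : Subgroup.center G ≠ ⊥) : IsCyclic G := by
  have : Subsingleton (IsFreeGroup.Generators G) := by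
    refine not_nontrivial_iff_subsingleton.1 fun _ => hG ?_
    have : Subsingleton (Subgroup.center (FreeGroup (IsFreeGroup.Generators G))) := by
      rw [center_freeGroup_eq_bot]
      infer_instance
    have := (Subgroup.centerCongr (IsFreeGroup.toFreeGroup G)).subsingleton
    exact Subgroup.eq_bot_of_subsingleton _
  rcases isEmpty_or_nonempty (IsFreeGroup.Generators G) with _ | ⟨⟨a⟩⟩
  · have : Subsingleton G := (IsFreeGroup.toFreeGroup G).toEquiv.subsingleton
    infer_instance
  · have : Unique (IsFreeGroup.Generators G) := uniqueOfSubsingleton a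
    exact isCyclic_of_surjective (IsFreeGroup.mulEquiv G) (IsFreeGroup.mulEquiv G).surjective

theorem isCyclic_centralizer_singleton_of_isFreeGroup {z : G} (hz : z ≠ 1) :
    IsCyclic (Subgroup.centralizer {z}) := by
  refine isCyclic_of_isFreeGroup_of_center_ne_bot fun hbot => hz ?_
  let z' : Subgroup.centralizer {z} := ⟨z, Subgroup.mem_centralizer_singleton_iff.2 rfl⟩
  have hz' : z' ∈ Subgroup.center (Subgroup.centralizer {z}) := Subgroup.mem_center_iff.2
    fun g => Subtype.ext (Subgroup.mem_centralizer_singleton_iff.1 g.2)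
  rw [hbot, Subgroup.mem_bot] at hz'
  exact congrArg Subtype.val hz'

end FreeGroup

section EmbeddedSubpair

variable {F : Type} [Group F] {K : Subgroup F} {U : Set (ConjClasses K)}

theorem mapsTo_inclusion_pullbackStructureIn {W : Set (ConjClasses F)} (F' : Subgroup F)
    (hUW : Set.MapsTo (ConjClasses.map K.subtype) U W) :
    Set.MapsTo (ConjClasses.map (Subgroup.inclusion (inf_le_right : K ⊓ F' ≤ F')))
      (pullbackStructureIn inf_le_left U) (pullbackStructure F' W) := by
  rintro _ ⟨d, _, hw, u, w, rfl, rfl, hd, hu, hmin⟩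
  exact ⟨d, _, hUW hw, Subgroup.inclusion inf_le_right u, w, rfl, rfl, hd, hu,
    fun e he hed hmem => hmin e he hed ⟨K.pow_mem w.2 e, hmem⟩⟩

theorem mem_of_conj_eq_of_injOn_map_subtype (hU : U.InjOn (ConjClasses.map K.subtype)) {w₁ w₂ : K}
    (h₁ : ConjClasses.mk w₁ ∈ U) (h₂ : ConjClasses.mk w₂ ∈ U)
    (hw₁ : Subgroup.centralizer {(w₁ : F)} ≤ K) {f : F} (hf : f * w₁ * f⁻¹ = w₂) : f ∈ K := by
  have hF : ConjClasses.map K.subtype (.mk w₁) = ConjClasses.map K.subtype (.mk w₂) :=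
    ConjClasses.mk_eq_mk_iff_isConj.2 (isConj_iff.2 ⟨f, hf⟩)
  obtain ⟨k, rfl⟩ := isConj_iff.1 (ConjClasses.mk_eq_mk_iff_isConj.1 (hU h₁ h₂ hF))
  have hcomm : (k : F)⁻¹ * f * w₁ = w₁ * ((k : F)⁻¹ * f) := calc
    (k : F)⁻¹ * f * w₁ = (k : F)⁻¹ * (f * w₁ * f⁻¹) * f := by group
    _ = (k : F)⁻¹ * (k * w₁ * (k : F)⁻¹) * f := by rw [hf]; rfl
    _ = w₁ * ((k : F)⁻¹ * f) := by group
  exact (K.mul_mem_cancel_left (K.inv_mem k.2)).1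
    (hw₁ (Subgroup.mem_centralizer_singleton_iff.2 hcomm))

theorem injOn_inclusion_pullbackStructureIn
    (hF : ∀ z : F, ¬IsOfFinOrder z → IsCyclic (Subgroup.centralizer {z}))
    (hUnp : ∀ w : K, ConjClasses.mk w ∈ U → ¬IsProperPower (w : F))
    (hU : U.InjOn (ConjClasses.map K.subtype)) (F' : Subgroup F) :
    (pullbackStructureIn inf_le_left U).InjOn
      (ConjClasses.map (Subgroup.inclusion (inf_le_right : K ⊓ F' ≤ F'))) := by
  rintro _ ⟨d₁, _, hU₁, u₁, w₁, rfl, rfl, hd₁, hu₁, -⟩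
    _ ⟨d₂, _, hU₂, u₂, w₂, rfl, rfl, -, hu₂, -⟩ heq
  obtain ⟨f, hf⟩ := isConj_iff.1 (ConjClasses.mk_eq_mk_iff_isConj.1 heq)
  have hfu : (f : F) * u₁ * (f : F)⁻¹ = u₂ := congrArg Subtype.val hf
  have hcent : Subgroup.centralizer {(w₁ : F)} ≤ K := by
    have := hF w₁ (mt isProperPower_of_isOfFinOrder (hUnp w₁ hU₁))
    exact (centralizer_le_zpowers_of_commute (hUnp w₁ hU₁) (Commute.refl _)).trans
      (Subgroup.zpowers_le.2 w₁.2)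
  have hfw : (f : F) * w₁ * (f : F)⁻¹ = w₂ := by
    have hnp : ¬IsProperPower ((f : F) * w₁ * (f : F)⁻¹) :=
      mt isProperPower_conj_iff.1 (hUnp w₁ hU₁)
    have hinf : ¬IsOfFinOrder (((f : F) * w₁ * (f : F)⁻¹) ^ d₁) := fun h =>
      hnp (isProperPower_of_isOfFinOrder (h.of_pow (Nat.ne_of_gt hd₁)))
    have := hF _ hinf
    exact eq_of_pow_eq_pow_of_not_isProperPower hnp (hUnp w₂ hU₂) (Nat.ne_of_gt hd₁)
      (by rw [conj_pow, ← hu₁, hfu, hu₂])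
  have hfK : (f : F) ∈ K := mem_of_conj_eq_of_injOn_map_subtype hU hU₁ hU₂ hcent hfw
  exact ConjClasses.mk_eq_mk_iff_isConj.2 (isConj_iff.2 ⟨⟨f, hfK, f.2⟩, Subtype.ext hfu⟩)

theorem embedded_subpair_finite_index_pullback_general
    (hF : ∀ z : F, ¬IsOfFinOrder z → IsCyclic (Subgroup.centralizer {z}))
    {W : Set (ConjClasses F)} (hUnp : ∀ w : K, ConjClasses.mk w ∈ U → ¬IsProperPower (w : F))
    (hemb : IsEmbeddedSubpairTop K U W) (F' : Subgroup F) :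
    IsEmbeddedSubpair (inf_le_right : K ⊓ F' ≤ F')
      (pullbackStructureIn (inf_le_left : K ⊓ F' ≤ K) U) (pullbackStructure F' W) :=
  ⟨mapsTo_inclusion_pullbackStructureIn F' hemb.1,
    injOn_inclusion_pullbackStructureIn hF hUnp hemb.2 F'⟩

end EmbeddedSubpair

/-- **Embedded subpairs persist in finite-index pull-backs** (Lemma 3.15): if no class of
`W` is represented by a proper power and `(K, U)` is an embedded subpair of `(F, W)`,
then for any finite-index subgroup `F' ≤ F`, setting `K' = K ⊓ F'`, the pull-back of `U`
on `K'` is an embedded subpair of the pull-back of `W` on `F'`. -/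
theorem embedded_subpair_finite_index_pullback
    (F : Type) [Group F] [IsFreeGroup F]
    (W : Set (ConjClasses F)) (hWfin : W.Finite) (hWone : ∀ c ∈ W, c ≠ 1)
    (hWnp : ∀ c ∈ W, ∀ w₀ : F, ConjClasses.mk w₀ = c →
      ¬∃ (y : F) (d : ℕ), 2 ≤ d ∧ w₀ = y ^ d)
    (K : Subgroup F) (U : Set (ConjClasses ↥K)) (hUfin : U.Finite)
    (hemb : IsEmbeddedSubpairTop K U W)
    (F' : Subgroup F) (hF' : F'.FiniteIndex) :
    IsEmbeddedSubpair (inf_le_right : K ⊓ F' ≤ F')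
      (pullbackStructureIn (inf_le_left : K ⊓ F' ≤ K) U)
      (pullbackStructure F' W) :=
  embedded_subpair_finite_index_pullback_general
    (fun _ hz => isCyclic_centralizer_singleton_of_isFreeGroup fun h =>
      hz (h ▸ IsOfFinOrder.one))
    (fun _ hw => hWnp _ (hemb.1 _ hw) _ rfl) hemb F'
end

section
/- Let F be a finitely generated free group, let w ∈ F be a primitive element (a member of some free basis of F), and let F' ≤ F be a finite-index subgroup. Let [u_1]_{F'}, …, [u_k]_{F'} be the (finitely many, pairwise distinct) F'-conjugacy classes of elevations of w to F'. Then representatives u_1, …, u_k of these classes can be chosen so that {u_1, …, u_k} extends to a free basis of F'; that is, there is a free basis of the (free) group F' containing u_1, …, u_k. -/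
/-!
Let `w` be an element of a basis `b` of `F`. The classes of elevations of `w` to `H` correspond to
the finite orbits of `w` on the right cosets of `H`: an orbit `H * g, …, H * g * w ^ (d - 1)` of
length `d` yields the elevation `g * w ^ d * g⁻¹`. If `T ∋ 1` is a right transversal of `H` that is
connected in the Cayley tree of `b`, then the Schreier generators of the edges leaving `T` form a
basis of `H`. Zorn's lemma provides such a `T` which is moreover a union of progressions
`g, g * w, g * w ^ 2, …`, one for each orbit. The last edge of the progression of a finite orbit,
from `g * w ^ (d - 1)` to `g * w ^ d`, leaves `T`, and its Schreier generator is the elevation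
`g * w ^ d * g⁻¹`.
-/

universe u

section Potential

variable {F ι X : Type*} [Group F] [Group X] (b : FreeGroupBasis ι F)

theorem closure_range_basis : Subgroup.closure (Set.range b) = ⊤ := by
  have hrange : Set.range b = b.repr.symm '' Set.range FreeGroup.of := by
    rw [← Set.range_comp]
    rfl
  rw [hrange, ← MonoidHom.coe_coe, ← MonoidHom.map_closure, FreeGroup.closure_range_of,
    ← MonoidHom.range_eq_map]
  exact MonoidHom.range_eq_top.2 b.repr.symm.surjective

@[elab_as_elim]
theorem basis_induction_right {P : F → Prop} (one : P 1) (mul_iff : ∀ x i, P (x * b i) ↔ P x)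
    (x : F) : P x := by
  have hx : x ∈ Subgroup.closure (Set.range b) := closure_range_basis b ▸ Subgroup.mem_top x
  induction hx using Subgroup.closure_induction_right with
  | one => exact one
  | mul_right y _ z hz hy =>
    obtain ⟨i, rfl⟩ := hz
    exact (mul_iff y i).2 hy
  | mul_inv_cancel y _ z hz hy =>
    obtain ⟨i, rfl⟩ := hz
    rwa [← mul_iff, inv_mul_cancel_right]

/-- The function `θ` integrates the labelling `f` of the edges `x → x * b i` of the Cayley tree of
the basis `b`, starting from the value `1` at the identity. -/
structure IsPotential (f : F → ι → X) (θ : F → X) : Prop where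
  map_one : θ 1 = 1
  map_mul : ∀ x i, θ (x * b i) = θ x * f x i

theorem exists_isPotential (f : F → ι → X) : ∃ θ, IsPotential b f θ := by
  -- `b i` acts on `F × X` by walking backwards along its edges, so that `x⁻¹`, applied to `(1, 1)`,
  -- walks along the word `x`, read from left to right.
  let walk (i : ι) : Equiv.Perm (F × X) :=
    { toFun p := (p.1 * b i, p.2 * f p.1 i)
      invFun p := (p.1 * (b i)⁻¹, p.2 * (f (p.1 * (b i)⁻¹) i)⁻¹)
      left_inv p := by simp
      right_inv p := by simp }
  let π : F →* Equiv.Perm (F × X) := b.lift fun i => (walk i)⁻¹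
  have hπ (x : F) (i : ι) : π (x * b i)⁻¹ (1, 1) = walk i (π x⁻¹ (1, 1)) := by
    have hi : π (b i) = (walk i)⁻¹ := congr_fun (b.lift.symm_apply_apply _) i
    rw [mul_inv_rev, map_mul, map_inv π (b i), hi, inv_inv, Equiv.Perm.mul_apply]
  have hfst (x : F) : (π x⁻¹ (1, 1)).1 = x := by
    induction x using basis_induction_right b with
    | one => simp
    | mul_iff x i =>
      rw [hπ]
      exact mul_left_inj (b i)
  refine ⟨fun x => (π x⁻¹ (1, 1)).2, by simp, fun x i => ?_⟩
  rw [hπ]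
  change _ * f (π x⁻¹ (1, 1)).1 i = _
  rw [hfst]

namespace IsPotential

variable {b} {f : F → ι → X} {θ θ' : F → X}

theorem unique (h : IsPotential b f θ) (h' : IsPotential b f θ') : θ = θ' := by
  funext x
  induction x using basis_induction_right b with
  | one => rw [h.map_one, h'.map_one]
  | mul_iff x i => rw [h.map_mul, h'.map_mul, mul_left_inj]

theorem map_mul_of_invariant (h : IsPotential b f θ) {g : F}
    (hg : ∀ x i, f (g * x) i = f x i) (x : F) : θ (g * x) = θ g * θ x := by
  induction x using basis_induction_right b with
  | one => rw [mul_one, h.map_one, mul_one]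
  | mul_iff x i => rw [← mul_assoc, h.map_mul, h.map_mul, hg, ← mul_assoc, mul_left_inj]

theorem eq_one_of_connected (h : IsPotential b f θ) {T : Set F}
    (hT : ((SimpleGraph.mulCayley (Set.range b)).induce T).Preconnected) (h1 : 1 ∈ T)
    (hf : ∀ x i, x ∈ T → x * b i ∈ T → f x i = 1) {x : F} (hx : x ∈ T) : θ x = 1 := by
  have hadj (y z : T) (hyz : (SimpleGraph.mulCayley (Set.range b)).Adj y z) : θ y = θ z := by
    obtain ⟨-, _, ⟨i, rfl⟩, hz | hy⟩ := (SimpleGraph.mulCayley_adj' _ _ _).1 hyz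
    · rw [← hz, h.map_mul, hf _ _ y.2 (hz ▸ z.2), mul_one]
    · rw [hy, h.map_mul, hf _ _ z.2 (hy ▸ y.2), mul_one]
  obtain ⟨walk⟩ := hT ⟨x, hx⟩ ⟨1, h1⟩
  suffices ∀ {y z : T}, ((SimpleGraph.mulCayley (Set.range b)).induce T).Walk y z → θ y = θ z from
    (this walk).trans h.map_one
  intro y z walk
  induction walk with
  | nil => rfl
  | cons hyz _ ih => exact (hadj _ _ hyz).trans ih

end IsPotential

end Potential

section Schreier

variable {F ι : Type u} [Group F] (b : FreeGroupBasis ι F)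

/-- The edges `x → x * b i` of the Cayley tree of the basis `b` that leave the set `T`. -/
abbrev LeavingEdge (T : Set F) : Type u :=
  {p : T × ι // (p.1 : F) * b p.2 ∉ T}

variable {b} {H : Subgroup F} {T : Set F}

theorem exists_eq_mul_of_isComplement (hT : Subgroup.IsComplement (H : Set F) T) (x : F) :
    ∃ h : H, ∃ t ∈ T, x = h * t :=
  ⟨(hT.equiv x).1, (hT.equiv x).2, (hT.equiv x).2.2, (hT.equiv_fst_mul_equiv_snd x).symm⟩

variable (hT : Subgroup.IsComplement (H : Set F) T)

/-- The factor `h ∈ H` of the decomposition `x = h * t` given by the right transversal `T`. -/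
noncomputable def subgroupPart (x : F) : H :=
  (hT.equiv x).1

theorem subgroupPart_mul (h : H) (x : F) : subgroupPart hT (h * x) = h * subgroupPart hT x :=
  congr_arg Prod.fst (hT.equiv_mul_left h x)

theorem subgroupPart_of_mem {x : F} (hx : x ∈ T) : subgroupPart hT x = 1 :=
  hT.equiv_fst_eq_one_of_mem_of_one_mem H.one_mem hx

theorem subgroupPart_coe (h1 : 1 ∈ T) (h : H) : subgroupPart hT (h : F) = h := by
  simpa [subgroupPart_of_mem hT h1] using subgroupPart_mul hT h 1

/-- The Schreier generator of an edge `x → x * b i` leaving the right transversal `T`. -/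
noncomputable def schreierGenerator (p : LeavingEdge b T) : H :=
  subgroupPart hT (p.1.1 * b p.1.2)

open Classical in
/-- The `H`-invariant labelling of the edges of the Cayley tree that extends a labelling `f` of the
edges leaving `T`, by `1` on the edges inside `T`. -/
noncomputable def invariantLabelling {X : Type*} [One X] (f : LeavingEdge b T → X) (x : F) (i : ι) :
    X :=
  if h : ((hT.equiv x).2 : F) * b i ∉ T then f ⟨((hT.equiv x).2, i), h⟩ else 1

section InvariantLabelling

variable {X : Type*} [Group X] (f : LeavingEdge b T → X)

theorem invariantLabelling_mul (h : H) (x : F) (i : ι) :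
    invariantLabelling hT f (h * x) i = invariantLabelling hT f x i := by
  unfold invariantLabelling
  rw [hT.equiv_mul_left]

theorem invariantLabelling_of_mul_mem {x : F} {i : ι} (hx : x ∈ T) (hxi : x * b i ∈ T) :
    invariantLabelling hT f x i = 1 := by
  unfold invariantLabelling
  rw [hT.equiv_snd_eq_self_of_mem_of_one_mem H.one_mem hx, dif_neg (not_not.2 hxi)]

theorem invariantLabelling_leavingEdge (p : LeavingEdge b T) :
    invariantLabelling hT f p.1.1 p.1.2 = f p := by
  unfold invariantLabelling
  rw [hT.equiv_snd_eq_self_of_mem_of_one_mem H.one_mem p.1.1.2, dif_pos p.2]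

theorem isPotential_comp_subgroupPart (h1 : 1 ∈ T) {φ : H →* X}
    (hφ : ∀ p, φ (schreierGenerator hT p) = f p) :
    IsPotential b (invariantLabelling hT f) fun x => φ (subgroupPart hT x) where
  map_one := by rw [subgroupPart_of_mem hT h1, map_one]
  map_mul x i := by
    obtain ⟨h, t, ht, rfl⟩ := exists_eq_mul_of_isComplement hT x
    rw [mul_assoc, subgroupPart_mul, subgroupPart_mul, invariantLabelling_mul,
      subgroupPart_of_mem hT ht, mul_one, map_mul]
    by_cases hti : t * b i ∈ T
    · rw [subgroupPart_of_mem hT hti, invariantLabelling_of_mul_mem hT f ht hti, map_one]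
    · rw [invariantLabelling_leavingEdge hT f ⟨(⟨t, ht⟩, i), hti⟩, ← hφ]
      rfl

theorem existsUnique_hom_schreierGenerator (h1 : 1 ∈ T)
    (hconn : ((SimpleGraph.mulCayley (Set.range b)).induce T).Preconnected) :
    ∃! φ : H →* X, ∀ p, φ (schreierGenerator hT p) = f p := by
  obtain ⟨θ, hθ⟩ := exists_isPotential b (invariantLabelling hT f)
  have hθ_mul (h : H) (x : F) : θ (h * x) = θ h * θ x :=
    hθ.map_mul_of_invariant (invariantLabelling_mul hT f h) x
  have hθ_one {t : F} (ht : t ∈ T) : θ t = 1 :=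
    hθ.eq_one_of_connected hconn h1 (fun _ _ => invariantLabelling_of_mul_mem hT f) ht
  have hθ_part (x : F) : θ (subgroupPart hT x) = θ x := by
    obtain ⟨h, t, ht, rfl⟩ := exists_eq_mul_of_isComplement hT x
    rw [subgroupPart_mul, subgroupPart_of_mem hT ht, mul_one, hθ_mul, hθ_one ht, mul_one]
  refine ⟨MonoidHom.mk' (fun h : H => θ h) fun g h => hθ_mul g h, fun p => ?_, fun ψ hψ => ?_⟩
  · change θ (subgroupPart hT _) = _
    rw [hθ_part, hθ.map_mul, hθ_one p.1.1.2, one_mul, invariantLabelling_leavingEdge]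
  · ext h
    have := congr_fun ((isPotential_comp_subgroupPart hT f h1 hψ).unique hθ) h
    simpa only [subgroupPart_coe hT h1, MonoidHom.mk'_apply] using this

end InvariantLabelling

theorem exists_basis_eq_schreierGenerator (h1 : 1 ∈ T)
    (hconn : ((SimpleGraph.mulCayley (Set.range b)).induce T).Preconnected) :
    ∃ B : FreeGroupBasis (LeavingEdge b T) H, ∀ p, B p = schreierGenerator hT p :=
  ⟨.ofUniqueLift _ (schreierGenerator hT) fun f =>
    existsUnique_hom_schreierGenerator hT f h1 hconn, fun _ => FreeGroup.lift_apply_of⟩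

end Schreier

section OrbitSegment

variable {F : Type*} [Group F]

/-- The length of the orbit of the right coset `H * g` under right multiplication by `w`, or `0` if
this orbit is infinite. It is encoded through the left coset `g⁻¹ * H`, as Mathlib's quotients are
by left cosets. -/
noncomputable def cosetPeriod (H : Subgroup F) (w g : F) : ℕ :=
  MulAction.period w ((g⁻¹ : F) : F ⧸ H)

/-- The progression `g * w ^ n`, where `n` ranges over `0, …, d - 1` if the orbit of `H * g` under
`w` has finite length `d`, and over all integers if it is infinite (as `n % 0 = n`). -/
def orbitSegment (H : Subgroup F) (w g : F) : Set F :=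
  (fun n : ℤ => g * w ^ n) '' {n | n % cosetPeriod H w g = n}

variable {H : Subgroup F} {w g : F}

theorem mul_zpow_mul_inv_mem_iff {n : ℤ} :
    g * w ^ n * g⁻¹ ∈ H ↔ (cosetPeriod H w g : ℤ) ∣ n := by
  rw [cosetPeriod, ← MulAction.zpow_smul_eq_iff_period_dvd, eq_comm,
    MulAction.Quotient.smul_coe, QuotientGroup.eq, inv_inv, smul_eq_mul, mul_assoc]

theorem mul_zpow_mul_inv_mul_zpow_mem_iff {m n : ℤ} :
    g * w ^ m * (g * w ^ n)⁻¹ ∈ H ↔ (cosetPeriod H w g : ℤ) ∣ m - n := by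
  rw [← mul_zpow_mul_inv_mem_iff, zpow_sub, mul_inv_rev]
  simp only [mul_assoc]

theorem mul_zpow_emod_mem_orbitSegment (H : Subgroup F) (w g : F) (n : ℤ) :
    g * w ^ (n % cosetPeriod H w g) ∈ orbitSegment H w g :=
  ⟨_, Int.emod_emod_of_dvd n dvd_rfl, rfl⟩

theorem self_mem_orbitSegment (H : Subgroup F) (w g : F) : g ∈ orbitSegment H w g := by
  simpa using mul_zpow_emod_mem_orbitSegment H w g 0

theorem exists_mem_orbitSegment_mul_inv_mem (H : Subgroup F) (w g : F) (n : ℤ) :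
    ∃ y ∈ orbitSegment H w g, g * w ^ n * y⁻¹ ∈ H :=
  ⟨_, mul_zpow_emod_mem_orbitSegment H w g n,
    mul_zpow_mul_inv_mul_zpow_mem_iff.2 Int.dvd_self_sub_emod⟩

theorem eq_of_mem_orbitSegment {x y : F} (hx : x ∈ orbitSegment H w g)
    (hy : y ∈ orbitSegment H w g) (hxy : x * y⁻¹ ∈ H) : x = y := by
  obtain ⟨m, hm, rfl⟩ := hx
  obtain ⟨n, hn, rfl⟩ := hy
  have hmod : n % cosetPeriod H w g = m % cosetPeriod H w g :=
    Int.modEq_iff_dvd.2 (mul_zpow_mul_inv_mul_zpow_mem_iff.1 hxy)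
  rw [← Set.mem_ofPred.1 hm, ← Set.mem_ofPred.1 hn, hmod]

theorem ordConnected_setOf_emod_eq_self (d : ℕ) : {n : ℤ | n % d = n}.OrdConnected := by
  refine ⟨fun a ha c hc n hn => ?_⟩
  rcases d.eq_zero_or_pos with rfl | hd
  · exact Int.emod_zero n
  · have hd' : (0 : ℤ) < d := Int.natCast_pos.2 hd
    have ha0 : 0 ≤ a := ha ▸ Int.emod_nonneg a hd'.ne'
    have hcd : c < d := hc ▸ Int.emod_lt_of_pos c hd'
    exact Int.emod_eq_of_lt (ha0.trans hn.1) (hn.2.trans_lt hcd)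

theorem preconnected_induce_image_zpow {S : Set F} (hw : w ∈ S) (g : F) {I : Set ℤ}
    (hI : I.OrdConnected) :
    ((SimpleGraph.mulCayley S).induce ((fun n : ℤ => g * w ^ n) '' I)).Preconnected := by
  have reachable (m n : ℤ) (hmn : m ≤ n) (hm : m ∈ I) (hn : n ∈ I) :
      ((SimpleGraph.mulCayley S).induce ((fun n : ℤ => g * w ^ n) '' I)).Reachable
        ⟨g * w ^ m, m, hm, rfl⟩ ⟨g * w ^ n, n, hn, rfl⟩ := by
    induction n, hmn using Int.leInduction with
    | base => rfl
    | succ k hmk ih =>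
      refine (ih (hI.out hm hn ⟨hmk, by omega⟩)).trans ?_
      by_cases heq : g * w ^ k = g * w ^ (k + 1)
      · simp only [heq]; rfl
      · have hstep : g * w ^ k * w = g * w ^ (k + 1) := by rw [mul_assoc, zpow_add_one]
        exact SimpleGraph.Adj.reachable ((SimpleGraph.mulCayley_adj' _ _ _).2
          ⟨heq, w, hw, .inl hstep⟩)
  rintro ⟨_, m, hm, rfl⟩ ⟨_, n, hn, rfl⟩
  rcases le_total m n with hmn | hnm
  · exact reachable m n hmn hm hn
  · exact (reachable n m hnm hn hm).symm

theorem connected_induce_orbitSegment {S : Set F} (hw : w ∈ S) (H : Subgroup F) (g : F) :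
    ((SimpleGraph.mulCayley S).induce (orbitSegment H w g)).Connected where
  preconnected := preconnected_induce_image_zpow hw g (ordConnected_setOf_emod_eq_self _)
  nonempty := ⟨g, self_mem_orbitSegment H w g⟩

end OrbitSegment

section SegmentTransversal

variable {F : Type*} [Group F]

/-- A partial right transversal `T` of `H` that is connected in the Cayley graph of `S` and is a
union of progressions in `w`, each of which runs once through an orbit of cosets under `w`. -/
structure IsSegmentTransversal (S : Set F) (w : F) (H : Subgroup F) (T : Set F) : Prop where
  connected : ((SimpleGraph.mulCayley S).induce T).Connected
  eq_of_mul_inv_mem : ∀ x ∈ T, ∀ y ∈ T, x * y⁻¹ ∈ H → x = y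
  exists_orbitSegment : ∀ x ∈ T, ∃ g, x ∈ orbitSegment H w g ∧ orbitSegment H w g ⊆ T

variable {S : Set F} {w : F} {H : Subgroup F} {T : Set F}

theorem isSegmentTransversal_orbitSegment (hw : w ∈ S) (g : F) :
    IsSegmentTransversal S w H (orbitSegment H w g) where
  connected := connected_induce_orbitSegment hw H g
  eq_of_mul_inv_mem _ hx _ hy := eq_of_mem_orbitSegment hx hy
  exists_orbitSegment _ hx := ⟨g, hx, subset_rfl⟩

namespace IsSegmentTransversal

theorem exists_mem_mul_zpow_mul_inv_mem (hT : IsSegmentTransversal S w H T) {x : F} (hx : x ∈ T)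
    (n : ℤ) : ∃ y ∈ T, x * w ^ n * y⁻¹ ∈ H := by
  obtain ⟨g, ⟨m, -, rfl⟩, hg⟩ := hT.exists_orbitSegment x hx
  obtain ⟨y, hy, hmem⟩ := exists_mem_orbitSegment_mul_inv_mem H w g (m + n)
  exact ⟨y, hg hy, by rwa [mul_assoc g, ← zpow_add]⟩

theorem union_orbitSegment (hT : IsSegmentTransversal S w H T) (hw : w ∈ S) {t x : F} (ht : t ∈ T)
    (htx : (SimpleGraph.mulCayley S).Adj t x) (hx : ∀ y ∈ T, x * y⁻¹ ∉ H) :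
    IsSegmentTransversal S w H (T ∪ orbitSegment H w x) where
  connected := SimpleGraph.connected_induce_union hT.connected.preconnected
    (connected_induce_orbitSegment hw H x).preconnected ht (self_mem_orbitSegment H w x) htx
  eq_of_mul_inv_mem := by
    have disjoint {p q : F} (hp : p ∈ T) (hq : q ∈ orbitSegment H w x) :
        q * p⁻¹ ∉ H := by
      intro hqp
      obtain ⟨n, -, rfl⟩ := hq
      obtain ⟨y, hy, hpy⟩ := hT.exists_mem_mul_zpow_mul_inv_mem hp (-n)
      exact hx y hy (by simpa [mul_assoc] using H.mul_mem hqp hpy)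
    rintro p (hp | hp) q (hq | hq) hpq
    · exact hT.eq_of_mul_inv_mem p hp q hq hpq
    · exact absurd (by simpa using H.inv_mem hpq) (disjoint hp hq)
    · exact absurd hpq (disjoint hq hp)
    · exact eq_of_mem_orbitSegment hp hq hpq
  exists_orbitSegment := by
    rintro p (hp | hp)
    · obtain ⟨g, hpg, hg⟩ := hT.exists_orbitSegment p hp
      exact ⟨g, hpg, hg.trans Set.subset_union_left⟩
    · exact ⟨x, hp, Set.subset_union_right⟩

theorem sUnion_of_isChain {C : Set (Set F)} (hC : ∀ T ∈ C, IsSegmentTransversal S w H T)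
    (hchain : IsChain (· ⊆ ·) C) (hne : C.Nonempty) : IsSegmentTransversal S w H (⋃₀ C) where
  connected := by
    have nonempty {T : Set F} (hT : T ∈ C) : T.Nonempty :=
      Set.nonempty_coe_sort.1 (hC T hT).connected.nonempty
    refine SimpleGraph.induce_sUnion_connected_of_pairwise_not_disjoint hne (fun {T U} hT hU => ?_)
      fun hT => (hC _ hT).connected
    rcases hchain.total hT hU with hTU | hUT
    · exact (nonempty hT).mono (Set.subset_inter subset_rfl hTU)
    · exact (nonempty hU).mono (Set.subset_inter hUT subset_rfl)
  eq_of_mul_inv_mem := by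
    rintro x ⟨T, hT, hx⟩ y ⟨U, hU, hy⟩ hxy
    rcases hchain.total hT hU with hTU | hUT
    · exact (hC U hU).eq_of_mul_inv_mem x (hTU hx) y hy hxy
    · exact (hC T hT).eq_of_mul_inv_mem x hx y (hUT hy) hxy
  exists_orbitSegment := by
    rintro x ⟨T, hT, hx⟩
    obtain ⟨g, hxg, hg⟩ := (hC T hT).exists_orbitSegment x hx
    exact ⟨g, hxg, hg.trans (Set.subset_sUnion_of_mem hT)⟩

theorem exists_mem_mul_inv_mem_of_maximal (hT : Maximal (IsSegmentTransversal S w H) T) (hw : w ∈ S)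
    (hS : Subgroup.closure S = ⊤) (h1 : 1 ∈ T) (x : F) : ∃ t ∈ T, x * t⁻¹ ∈ H := by
  have of_adj {t y : F} (ht : t ∈ T) (hty : (SimpleGraph.mulCayley S).Adj t y) :
      ∃ t' ∈ T, y * t'⁻¹ ∈ H := by
    by_contra! hy
    have hyT : y ∈ T := hT.2 (hT.1.union_orbitSegment hw ht hty hy) Set.subset_union_left
      (.inr (self_mem_orbitSegment H w y))
    exact hy y hyT (by simp)
  have mul_of_mem {y z : F} (hz : z ∈ S ∨ z⁻¹ ∈ S) (hy : ∃ t ∈ T, y * t⁻¹ ∈ H) :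
      ∃ t ∈ T, y * z * t⁻¹ ∈ H := by
    obtain ⟨t, ht, hyt⟩ := hy
    rcases eq_or_ne t (t * z) with htz | htz
    · exact ⟨t, ht, by rwa [left_eq_mul.1 htz, mul_one]⟩
    · have hadj : (SimpleGraph.mulCayley S).Adj t (t * z) :=
        (SimpleGraph.mulCayley_adj' _ _ _).2 ⟨htz, hz.elim (fun hz => ⟨z, hz, .inl rfl⟩)
          fun hz => ⟨z⁻¹, hz, .inr (mul_inv_cancel_right t z).symm⟩⟩
      obtain ⟨t', ht', htt'⟩ := of_adj ht hadj
      exact ⟨t', ht', by simpa [mul_assoc] using H.mul_mem hyt htt'⟩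
  have hx : x ∈ Subgroup.closure S := hS ▸ Subgroup.mem_top x
  induction hx using Subgroup.closure_induction_right with
  | one => exact ⟨1, h1, by simp⟩
  | mul_right _ _ _ hz hy => exact mul_of_mem (.inl hz) hy
  | mul_inv_cancel _ _ _ hz hy => exact mul_of_mem (.inr (by rwa [inv_inv])) hy

end IsSegmentTransversal

theorem exists_isSegmentTransversal_isComplement (hw : w ∈ S) (hS : Subgroup.closure S = ⊤)
    (H : Subgroup F) :
    ∃ T, IsSegmentTransversal S w H T ∧ 1 ∈ T ∧ Subgroup.IsComplement (H : Set F) T := by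
  obtain ⟨T, h1T, hT⟩ := zorn_subset_nonempty {T | IsSegmentTransversal S w H T}
    (fun C hC hchain hne => ⟨⋃₀ C, .sUnion_of_isChain hC hchain hne,
      fun _ => Set.subset_sUnion_of_mem⟩)
    _ (isSegmentTransversal_orbitSegment hw 1)
  have h1 : 1 ∈ T := h1T (self_mem_orbitSegment H w 1)
  refine ⟨T, hT.1, h1, Subgroup.isComplement_iff_existsUnique_mul_inv_mem.2 fun x => ?_⟩
  obtain ⟨t, ht, hxt⟩ := IsSegmentTransversal.exists_mem_mul_inv_mem_of_maximal hT hw hS h1 x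
  refine ⟨⟨t, ht⟩, hxt, fun t' hxt' => Subtype.ext ?_⟩
  exact hT.1.eq_of_mul_inv_mem t' t'.2 t ht (by simpa using H.mul_mem (H.inv_mem hxt') hxt)

end SegmentTransversal

theorem basis_pow_ne_one {F ι : Type*} [Group F] (b : FreeGroupBasis ι F) (i : ι) {n : ℕ}
    (hn : n ≠ 0) : b i ^ n ≠ 1 := by
  intro h
  have hpow : FreeGroup.of i ^ n = 1 := by rw [← b.repr_apply_coe, ← map_pow, h, map_one]
  exact FreeGroup.of_ne_one i ((pow_eq_one_iff_left hn).1 hpow)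

theorem IsElevation.conj {F : Type} [Group F] {H : Subgroup F} {d : ℕ} {u : H} {w₀ : F}
    (hu : IsElevation H d u w₀) (h : H) :
    IsElevation H d (h * u * h⁻¹) (h * w₀ * (h : F)⁻¹) := by
  obtain ⟨hd, hpow, hmin⟩ := hu
  refine ⟨hd, by simp [hpow, conj_pow], fun e he hed hmem => hmin e he hed ?_⟩
  rw [conj_pow] at hmem
  simpa [mul_assoc] using H.mul_mem (H.mul_mem (H.inv_mem h.2) hmem) h.2

theorem IsElevation.cosetPeriod_eq {F : Type} [Group F] {H : Subgroup F} {d : ℕ} {u : H} {w g : F}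
    (hu : IsElevation H d u (g * w * g⁻¹)) : cosetPeriod H w g = d := by
  obtain ⟨hd, hpow, hmin⟩ := hu
  have mem_iff (e : ℕ) : (g * w * g⁻¹) ^ e ∈ H ↔ cosetPeriod H w g ∣ e := by
    rw [conj_pow, ← zpow_natCast, mul_zpow_mul_inv_mem_iff, Int.natCast_dvd_natCast]
  have hdvd : cosetPeriod H w g ∣ d := (mem_iff d).1 (hpow ▸ u.2)
  by_contra hne
  exact hmin _ (Nat.pos_of_dvd_of_pos hdvd hd) ((Nat.le_of_dvd hd hdvd).lt_of_ne hne)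
    ((mem_iff _).2 dvd_rfl)

theorem exists_schreierGenerator_eq_mul_pow_mul_inv {F ι : Type u} [Group F]
    {b : FreeGroupBasis ι F} {H : Subgroup F} {T : Set F}
    (hT : Subgroup.IsComplement (H : Set F) T) {i : ι} {g : F} (hg : orbitSegment H (b i) g ⊆ T)
    (hd : 0 < cosetPeriod H (b i) g) :
    ∃ p, (schreierGenerator (b := b) hT p : F) = g * b i ^ cosetPeriod H (b i) g * g⁻¹ := by
  set d := cosetPeriod H (b i) g
  have hgT : g ∈ T := hg (self_mem_orbitSegment H (b i) g)
  have hlast : g * b i ^ (d - 1) ∈ T :=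
    hg ⟨(d - 1 : ℕ), Int.emod_eq_of_lt (by positivity) (by omega), by simp⟩
  have hmem : g * b i ^ d * g⁻¹ ∈ H := by
    rw [← zpow_natCast, mul_zpow_mul_inv_mem_iff]
  have hnext : g * b i ^ (d - 1) * b i = (⟨_, hmem⟩ : H) * g := by
    rw [mul_assoc, pow_sub_one_mul hd.ne', inv_mul_cancel_right]
  have hpart : subgroupPart hT (g * b i ^ (d - 1) * b i) = ⟨_, hmem⟩ := by
    rw [hnext, subgroupPart_mul, subgroupPart_of_mem hT hgT, mul_one]
  have hleaves : g * b i ^ (d - 1) * b i ∉ T := by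
    intro hin
    have hone : g * b i ^ d * g⁻¹ = 1 := by
      simpa using congr_arg Subtype.val (hpart.symm.trans (subgroupPart_of_mem hT hin))
    exact basis_pow_ne_one b i hd.ne' (conj_eq_one_iff.1 hone)
  exact ⟨⟨(⟨_, hlast⟩, i), hleaves⟩, congr_arg Subtype.val hpart⟩

theorem exists_basis_of_isClassElevation {F ι : Type} [Group F] (b : FreeGroupBasis ι F) (i : ι)
    (H : Subgroup F) :
    ∃ (κ : Type) (B : FreeGroupBasis κ H), ∀ d c,
      IsClassElevation H d c (ConjClasses.mk (b i)) → ∃ k, ConjClasses.mk (B k) = c := by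
  obtain ⟨T, htrans, h1, hT⟩ := exists_isSegmentTransversal_isComplement (Set.mem_range_self i)
    (closure_range_basis b) H
  obtain ⟨B, hB⟩ := exists_basis_eq_schreierGenerator hT h1 htrans.connected.preconnected
  refine ⟨_, B, ?_⟩
  rintro d _ ⟨u, w₀, rfl, hw₀, hu⟩
  obtain ⟨x, rfl⟩ := isConj_iff.1 (ConjClasses.mk_eq_mk_iff_isConj.1 hw₀.symm)
  obtain ⟨h, t, ht, rfl⟩ := exists_eq_mul_of_isComplement hT x
  obtain ⟨g, ⟨n, -, rfl⟩, hg⟩ := htrans.exists_orbitSegment t ht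
  have hconj : (h⁻¹ : H) * ((h : F) * (g * b i ^ n) * b i * (h * (g * b i ^ n))⁻¹) *
      ((h⁻¹ : H) : F)⁻¹ = g * b i * g⁻¹ := by
    simp only [InvMemClass.coe_inv]
    group
  have hu' : IsElevation H d (h⁻¹ * u * h⁻¹⁻¹) (g * b i * g⁻¹) := hconj ▸ hu.conj h⁻¹
  obtain ⟨p, hp⟩ := exists_schreierGenerator_eq_mul_pow_mul_inv (b := b) hT hg
    (hu'.cosetPeriod_eq ▸ hu'.1)
  refine ⟨p, ConjClasses.mk_eq_mk_iff_isConj.2 (isConj_iff.2 ⟨h, ?_⟩)⟩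
  have hBp : B p = h⁻¹ * u * h⁻¹⁻¹ := by
    rw [hB]
    exact Subtype.ext (hp.trans (by rw [hu'.2.1, hu'.cosetPeriod_eq, conj_pow]))
  rw [hBp]
  group

theorem elevations_of_primitive_extend_to_basis_general {F : Type} [Group F] (w : F)
    (hprim : ∃ (ι : Type) (x : ι → F) (e : FreeGroup ι ≃* F),
      (∀ i, e (FreeGroup.of i) = x i) ∧ ∃ i, x i = w)
    (F' : Subgroup F) :
    ∃ ρ : {c : ConjClasses ↥F' // ∃ d : ℕ, IsClassElevation F' d c (ConjClasses.mk w)} → ↥F',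
      (∀ c, ConjClasses.mk (ρ c) = (c : ConjClasses ↥F')) ∧
      ∃ (ι : Type) (x : ι → ↥F') (e : FreeGroup ι ≃* ↥F'),
        (∀ i, e (FreeGroup.of i) = x i) ∧ ∀ c, ∃ i, x i = ρ c := by
  obtain ⟨ι, x, e, hx, i, rfl⟩ := hprim
  let b : FreeGroupBasis ι F := .ofRepr e.symm
  obtain rfl : b = x := funext hx
  obtain ⟨κ, B, hB⟩ := exists_basis_of_isClassElevation b i F'
  choose k hk using fun c : {c // ∃ d, IsClassElevation F' d c (ConjClasses.mk (b i))} =>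
    hB c.2.choose c c.2.choose_spec
  exact ⟨fun c => B (k c), hk, κ, B, B.repr.symm, fun _ => rfl, fun c => ⟨k c, rfl⟩⟩

/-- **Elevations of a primitive element form part of a basis** (Lemma 3.28): if `w` is a
primitive element of a finitely generated free group `F` and `F' ≤ F` has finite index,
then representatives of the (pairwise distinct) conjugacy classes of elevations of `w` to
`F'` can be chosen to form part of a free basis of `F'`. -/
theorem elevations_of_primitive_extend_to_basis
    (F : Type) [Group F] [IsFreeGroup F] (hF : Group.FG F)
    (w : F)
    (hprim : ∃ (ι : Type) (x : ι → F) (e : FreeGroup ι ≃* F),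
      (∀ i, e (FreeGroup.of i) = x i) ∧ ∃ i, x i = w)
    (F' : Subgroup F) (hF' : F'.FiniteIndex) :
    ∃ ρ : {c : ConjClasses ↥F' // ∃ d : ℕ, IsClassElevation F' d c (ConjClasses.mk w)} → ↥F',
      (∀ c, ConjClasses.mk (ρ c) = (c : ConjClasses ↥F')) ∧
      ∃ (ι : Type) (x : ι → ↥F') (e : FreeGroup ι ≃* ↥F'),
        (∀ i, e (FreeGroup.of i) = x i) ∧ ∀ c, ∃ i, x i = ρ c :=
  elevations_of_primitive_extend_to_basis_general w hprim F'
end
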